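/- arXiv:2506.23720 — 3 statements merged into one kernel-verified Lean document; each statement's English description precedes it below -/
import Mathlib

section
/- Let Ω = ∪_{i∈I}(α_i, β_i) ⊆ ℝ be a finite or countable union of pairwise disjoint open intervals (α_i ∈ [−∞,∞), β_i ∈ (−∞,∞]) with l := inf_{i∈I}(β_i − α_i) > 0, and let (U(t))_{t∈ℝ} be a strongly continuous unitary group on L²(Ω) with the integrability property. Then there exists a family of complex numbers B = (b_{i,k}), indexed by i ∈ I with α_i > −∞ and k ∈ I with β_k < ∞, such that the map (x_i)_i ↦ (Σ_i x_i b_{i,k})_k defines a unitary operator from ℓ²({i ∈ I : α_i > −∞}) onto ℓ²({k ∈ I : β_k < ∞}), and such that for every 0 < ε < l: (1) if α_i > −∞ and f ∈ L²(Ω) vanishes a.e. outside [α_i, α_i + ε], then U(ε)f = Σ_{k∈I, β_k<∞} b_{i,k} T(α_i + ε − β_k)f (the sum converging in L²(Ω), with each term supported in [β_k − ε, β_k]); (2) if β_k < ∞ and f ∈ L²(Ω) vanishes a.e. outside [β_k − ε, β_k], then U(−ε)f = Σ_{j∈I, α_j>−∞} conj(b_{j,k}) T(β_k − α_j − ε)f.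 Here (T(s)f)(x) = f(x+s) wherever x, x+s ∈ Ω, extended by zero. -/
open MeasureTheory

section

open Set Filter Topology
open scoped ComplexConjugate InnerProductSpace

/-- The Hilbert space `L²(Ω)` of complex functions. -/
noncomputable abbrev LTwo (Ω : Set ℝ) := Lp ℂ 2 (volume.restrict Ω)

lemma restrict_Ioo_ne_top (Ω : Set ℝ) (p q : ℝ) : volume.restrict Ω (Ioo p q) ≠ ⊤ :=
  ((Measure.restrict_apply_le _ _).trans_lt (by simp)).ne

/-- The indicator function of the open interval `(p, q)` as an element of `L²(Ω)`. -/
noncomputable def intervalInd (Ω : Set ℝ) (p q : ℝ) : LTwo Ω :=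
  indicatorConstLp 2 measurableSet_Ioo (restrict_Ioo_ne_top Ω p q) 1

lemma intervalInd_ae (Ω : Set ℝ) (p q : ℝ) :
    ∀ᵐ x ∂volume.restrict Ω, intervalInd Ω p q x = (Ioo p q).indicator (fun _ => (1 : ℂ)) x :=
  indicatorConstLp_coeFn

lemma inner_intervalInd {Ω : Set ℝ} {p q : ℝ} (h : Ioo p q ⊆ Ω) (f : LTwo Ω) :
    ⟪intervalInd Ω p q, f⟫_ℂ = ∫ x in Ioo p q, f x := by
  rw [intervalInd, L2.inner_indicatorConstLp_one,
    Measure.restrict_restrict_of_subset h]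

lemma norm_sq_intervalInd {Ω : Set ℝ} {p q : ℝ} (hpq : p ≤ q) (h : Ioo p q ⊆ Ω) :
    ⟪intervalInd Ω p q, intervalInd Ω p q⟫_ℂ = ((q - p : ℝ) : ℂ) := by
  rw [intervalInd, L2.inner_indicatorConstLp_one_indicatorConstLp_one _ _
    (restrict_Ioo_ne_top _ _ _) (restrict_Ioo_ne_top _ _ _)]
  simp [Measure.real, Measure.restrict_apply, inter_eq_left.mpr h, hpq]

lemma inner_intervalInd_of_disjoint {Ω : Set ℝ} {p q p' q' : ℝ}
    (h : Disjoint (Ioo p q) (Ioo p' q')) :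
    ⟪intervalInd Ω p q, intervalInd Ω p' q'⟫_ℂ = 0 := by
  rw [intervalInd, intervalInd, L2.inner_indicatorConstLp_one_indicatorConstLp_one _ _
    (restrict_Ioo_ne_top _ _ _) (restrict_Ioo_ne_top _ _ _)]
  simp [h.inter_eq]

lemma integrableOn_Ioo_of_LTwo {Ω : Set ℝ} {p q : ℝ} (h : Ioo p q ⊆ Ω) (f : LTwo Ω) :
    IntegrableOn f (Ioo p q) := by
  have := integrableOn_Lp_of_measure_ne_top f fact_one_le_two_ennreal.elim
    (restrict_Ioo_ne_top Ω p q)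
  rwa [IntegrableOn, Measure.restrict_restrict_of_subset h] at this

/-- An `L²` function whose integrals over subintervals depend only on their length is constant. -/
lemma ae_eq_const_of_inner_intervalInd {Ω : Set ℝ} {p q : ℝ} (h : Ioo p q ⊆ Ω) (f : LTwo Ω)
    (F : ℝ → ℂ)
    (hF : ∀ c d, p ≤ c → c < d → d ≤ q → ⟪intervalInd Ω c d, f⟫_ℂ = F (d - c)) :
    ∀ᵐ x ∂volume.restrict (Ioo p q), f x = limUnder (𝓝[>] (0 : ℝ)) (fun s => s⁻¹ • F s) := by
  rcases le_or_gt q p with hqp | hpq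
  · simp [Ioo_eq_empty (not_lt.mpr hqp)]
  have hfint : IntervalIntegrable f volume p q := by
    rw [intervalIntegrable_iff, uIoc_of_le hpq.le, integrableOn_Ioc_iff_integrableOn_Ioo]
    exact integrableOn_Ioo_of_LTwo h f
  rw [ae_restrict_iff' measurableSet_Ioo]
  filter_upwards [hfint.ae_hasDerivAt_integral] with x hx hxpq
  have hd := hx (by rw [uIcc_of_le hpq.le]; exact Ioo_subset_Icc_self hxpq) x
    (by rw [uIcc_of_le hpq.le]; exact Ioo_subset_Icc_self hxpq)
  have hd := hd.tendsto_slope_zero_right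
  refine (Tendsto.limUnder_eq (hd.congr' ?_)).symm
  have : ∀ᶠ s in 𝓝[>] (0 : ℝ), s ∈ Ioo 0 (q - x) :=
    Ioo_mem_nhdsGT (by linarith [hxpq.2])
  filter_upwards [this] with s hs
  rw [intervalIntegral.integral_same, sub_zero,
    intervalIntegral.integral_of_le (by linarith [hs.1]), integral_Ioc_eq_integral_Ioo,
    ← inner_intervalInd, hF x (x + s) hxpq.1.le (by linarith [hs.1]) (by linarith [hs.2]),
    add_sub_cancel_left]
  exact (Ioo_subset_Ioo hxpq.1.le (by linarith [hs.2])).trans h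

lemma ae_eq_zero_of_inner_intervalInd {Ω : Set ℝ} {p q : ℝ} (h : Ioo p q ⊆ Ω) (f : LTwo Ω)
    (hf : ∀ c d, p ≤ c → c < d → d ≤ q → ⟪intervalInd Ω c d, f⟫_ℂ = 0) :
    ∀ᵐ x ∂volume.restrict (Ioo p q), f x = 0 := by
  filter_upwards [ae_eq_const_of_inner_intervalInd h f 0 hf] with x hx
  rw [hx]
  refine Tendsto.limUnder_eq ?_
  simp

/-- Two `L²` functions whose supports are disjoint are orthogonal. -/
lemma inner_eq_zero_of_ae {Ω : Set ℝ} {f g : LTwo Ω}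
    (h : ∀ᵐ x ∂volume.restrict Ω, f x = 0 ∨ g x = 0) : ⟪f, g⟫_ℂ = 0 := by
  rw [L2.inner_def]
  refine integral_eq_zero_of_ae ?_
  filter_upwards [h] with x hx
  rcases hx with hx | hx <;> simp [hx]

/-- An orthogonal family that is the decomposition of `h` in the sense of Parseval sums to `h`. -/
lemma hasSum_of_inner_eq {E κ : Type*} [NormedAddCommGroup E] [InnerProductSpace ℂ E]
    {g : κ → E} {h : E} (h1 : ∀ k, ⟪g k, h⟫_ℂ = ((‖g k‖ ^ 2 : ℝ) : ℂ))
    (h2 : Pairwise fun j k => ⟪g j, g k⟫_ℂ = 0)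
    (h3 : HasSum (fun k => ‖g k‖ ^ 2) (‖h‖ ^ 2)) : HasSum g h := by
  classical
  have key : ∀ s : Finset κ, ‖∑ k ∈ s, g k - h‖ ^ 2 = ‖h‖ ^ 2 - ∑ k ∈ s, ‖g k‖ ^ 2 := by
    intro s
    have e1 : ⟪∑ k ∈ s, g k, h⟫_ℂ = ((∑ k ∈ s, ‖g k‖ ^ 2 : ℝ) : ℂ) := by
      rw [sum_inner]; push_cast
      exact Finset.sum_congr rfl fun k _ => by rw [h1]; push_cast; rfl
    have e2 : ⟪∑ k ∈ s, g k, ∑ k ∈ s, g k⟫_ℂ = ((∑ k ∈ s, ‖g k‖ ^ 2 : ℝ) : ℂ) := by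
      rw [sum_inner]; push_cast
      refine Finset.sum_congr rfl fun k hk => ?_
      rw [inner_sum, Finset.sum_eq_single k (fun j _ hj => h2 hj.symm) (fun hk' => absurd hk hk')]
      rw [inner_self_eq_norm_sq_to_K]; rfl
    have e3 : ‖∑ k ∈ s, g k‖ ^ 2 = ∑ k ∈ s, ‖g k‖ ^ 2 := by
      rw [inner_self_eq_norm_sq_to_K] at e2
      refine Complex.ofReal_injective ?_
      rw [← e2]; simp
    rw [@norm_sub_sq ℂ, e1, e3]
    simp only [RCLike.re_to_complex, Complex.ofReal_re]
    ring
  rw [HasSum, tendsto_iff_norm_sub_tendsto_zero]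
  have h4 : Tendsto (fun s : Finset κ => ‖∑ k ∈ s, g k - h‖ ^ 2) (SummationFilter.unconditional κ).filter (𝓝 0) := by
    simp_rw [key]
    have := h3.const_sub (‖h‖ ^ 2)
    simpa using this
  have := h4.sqrt
  simpa using this

/-- An `L²` function is the sum of its restrictions to the pieces of a partition of its support. -/
lemma hasSum_of_partition {Ω : Set ℝ} {κ : Type*} [Countable κ] {Q : κ → Set ℝ}
    (hm : ∀ k, MeasurableSet (Q k)) (hd : Pairwise (Function.onFun Disjoint Q)) (h : LTwo Ω)
    (hz : ∀ᵐ x ∂volume.restrict Ω, x ∉ ⋃ k, Q k → h x = 0) (g : κ → LTwo Ω)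
    (hg : ∀ k, ∀ᵐ x ∂volume.restrict Ω, g k x = (Q k).indicator h x) : HasSum g h := by
  have hi : Integrable (fun x => ‖h x‖ ^ 2) (volume.restrict Ω) := (Lp.memLp h).integrable_norm_pow (by simp)
  have hn : ∀ f : LTwo Ω, ‖f‖ ^ 2 = ∫ x in Ω, ‖f x‖ ^ 2 := fun f => by
    have := L2.inner_def (𝕜 := ℂ) f f
    simp only [inner_self_eq_norm_sq_to_K] at this
    rw [← Complex.ofReal_inj, ← integral_complex_ofReal]
    simpa using this
  have hgn : ∀ k, ‖g k‖ ^ 2 = ∫ x in Q k, ‖h x‖ ^ 2 ∂volume.restrict Ω := fun k => by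
    rw [hn, ← integral_indicator (hm k)]
    refine integral_congr_ae ?_
    filter_upwards [hg k] with x hx
    rw [hx]
    by_cases hk : x ∈ Q k <;> simp [hk]
  refine hasSum_of_inner_eq (fun k => ?_) (fun j k hjk => ?_) ?_
  · rw [hn, L2.inner_def, ← integral_complex_ofReal]
    refine integral_congr_ae ?_
    filter_upwards [hg k] with x hx
    rw [hx]
    by_cases hk : x ∈ Q k
    · simp [hk, ← Complex.mul_conj']
    · simp [hk]
  · refine inner_eq_zero_of_ae ?_
    filter_upwards [hg j, hg k] with x hx hx'
    by_cases hj : x ∈ Q j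
    · right
      rw [hx', indicator_of_notMem (disjoint_left.mp (hd hjk) hj)]
    · left
      rw [hx, indicator_of_notMem hj]
  · simp_rw [hgn]
    have := hasSum_integral_iUnion hm hd hi.integrableOn
    rw [setIntegral_eq_integral_of_ae_compl_eq_zero] at this
    · rwa [hn h]
    filter_upwards [hz] with x hx hx'
    simp [hx hx']

/-- Mutually expanding orthonormal families span the same closed subspace, and the coefficients
form a unitary matrix. -/
lemma exists_unitary_of_hasSum {E ι κ : Type*} [NormedAddCommGroup E] [InnerProductSpace ℂ E]
    [CompleteSpace E] {v : ι → E} {w : κ → E} (hv : Orthonormal ℂ v) (hw : Orthonormal ℂ w)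
    (B : ι → κ → ℂ) (h1 : ∀ i, HasSum (fun k => B i k • w k) (v i))
    (h2 : ∀ k, HasSum (fun i => conj (B i k) • v i) (w k)) :
    ∃ W : lp (fun _ : ι => ℂ) 2 ≃ₗᵢ[ℂ] lp (fun _ : κ => ℂ) 2,
      ∀ x k, W x k = ∑' i, x i * B i k := by
  classical
  set N := (Submodule.span ℂ (range w)).topologicalClosure with hN
  have hvN : ∀ i, v i ∈ N := fun i => (Submodule.isClosed_topologicalClosure _).mem_of_tendsto (h1 i)
    (.of_forall fun s => sum_mem fun k _ => N.smul_mem _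
      (Submodule.le_topologicalClosure _ (Submodule.subset_span ⟨k, rfl⟩)))
  have hwN : ∀ i, w i ∈ N := fun i =>
      (Submodule.le_topologicalClosure _ (Submodule.subset_span ⟨i, rfl⟩))
  have : CompleteSpace N := (Submodule.isClosed_topologicalClosure _).completeSpace_coe
  let v' : ι → N := fun i => ⟨v i, hvN i⟩
  let w' : κ → N := fun i => ⟨w i, hwN i⟩
  have hv' : Orthonormal ℂ v' := hv.codRestrict N hvN
  have hw' : Orthonormal ℂ w' := hw.codRestrict N hwN
  have hw0 : (Submodule.span ℂ (range w'))ᗮ = ⊥ := by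
    rw [Submodule.eq_bot_iff]
    rintro ⟨y, hy⟩ hyo
    have : y ∈ Nᗮ := by
      rw [hN, Submodule.orthogonal_closure, Submodule.mem_orthogonal]
      intro u hu
      induction hu using Submodule.span_induction with
      | mem x hx =>
        obtain ⟨k, rfl⟩ := hx
        exact (Submodule.mem_orthogonal _ _).mp hyo (w' k) (Submodule.subset_span ⟨k, rfl⟩)
      | zero => simp
      | add a b _ _ ha hb => rw [inner_add_left, ha, hb, add_zero]
      | smul c a _ ha => rw [inner_smul_left, ha, mul_zero]
    have := inner_self_eq_zero.mp ((Submodule.mem_orthogonal _ _).mp this y hy)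
    exact Subtype.ext this
  have hv0 : (Submodule.span ℂ (range v'))ᗮ = ⊥ := by
    rw [Submodule.eq_bot_iff]
    intro y hyo
    have hyv : ∀ i, ⟪(y : E), v i⟫_ℂ = 0 := fun i =>
      (Submodule.mem_orthogonal' _ _).mp hyo (v' i) (Submodule.subset_span ⟨i, rfl⟩)
    have hyw : ∀ k, ⟪(y : E), w k⟫_ℂ = 0 := fun k => by
      have := (h2 k).mapL (innerSL ℂ (y : E))
      simp only [innerSL_apply_apply, inner_smul_right, hyv, mul_zero] at this
      exact this.unique hasSum_zero
    rw [← Submodule.mem_bot ℂ, ← hw0, Submodule.mem_orthogonal']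
    intro u hu
    induction hu using Submodule.span_induction with
    | mem x hx =>
      obtain ⟨k, rfl⟩ := hx
      exact hyw k
    | zero => simp
    | add a b _ _ ha hb => rw [inner_add_right, ha, hb, add_zero]
    | smul c a _ ha => rw [inner_smul_right, ha, mul_zero]
  let bv := HilbertBasis.mkOfOrthogonalEqBot hv' hv0
  let bw := HilbertBasis.mkOfOrthogonalEqBot hw' hw0
  refine ⟨bv.repr.symm.trans bw.repr, fun x k => ?_⟩
  have hs := (bv.hasSum_repr_symm x).mapL (innerSL ℂ (bw k))
  rw [LinearIsometryEquiv.trans_apply, HilbertBasis.repr_apply_apply]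
  rw [innerSL_apply_apply] at hs
  rw [← hs.tsum_eq]
  refine tsum_congr fun i => ?_
  rw [innerSL_apply_apply, inner_smul_right]
  congr 1
  have e : ⟪bw k, bv i⟫_ℂ = ⟪w k, v i⟫_ℂ := by
    simp only [bw, bv, HilbertBasis.coe_mkOfOrthogonalEqBot]
    rfl
  rw [e]
  have := (h1 i).mapL (innerSL ℂ (w k))
  rw [innerSL_apply_apply] at this
  refine this.unique ?_
  convert! hasSum_ite_eq k (B i k) using 2 with j
  rw [innerSL_apply_apply, inner_smul_right, orthonormal_iff_ite.mp hw]
  by_cases hjk : j = k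
  · subst hjk; simp
  · simp [hjk, Ne.symm hjk]

/-- A one-parameter unitary group on `L²(Ω)` which acts by translation away from the boundary. -/
structure IsTranslationGroup (Ω : Set ℝ) (U : ℝ → (LTwo Ω ≃ₗᵢ[ℂ] LTwo Ω)) : Prop where
  zero : ∀ f, U 0 f = f
  add : ∀ s t f, U (s + t) f = U s (U t f)
  shift : ∀ t f, ∀ᵐ x ∂volume.restrict Ω, uIcc x (x + t) ⊆ Ω → U t f x = f (x + t)

/-- Iterating small translations on an interval. -/
lemma iterate_shift_ae {Ω : Set ℝ} {U : ℝ → (LTwo Ω ≃ₗᵢ[ℂ] LTwo Ω)}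
    (hU0 : ∀ f, U 0 f = f) (hUadd : ∀ s t f, U (s + t) f = U s (U t f)) {c d s : ℝ}
    (hs : ∀ f, ∀ᵐ x, x ∈ Ioo c d → U s f x = f (x + s)) (n : ℕ) (f : LTwo Ω) :
    ∀ᵐ x, x ∈ Ioo c d → x + n * s ∈ Ioo c d → U (n * s) f x = f (x + n * s) := by
  induction n with
  | zero => simp [hU0]
  | succ n ih =>
    have e : ((n + 1 : ℕ) : ℝ) * s = s + n * s := by push_cast; ring
    rw [e, hUadd]
    filter_upwards [hs (U (n * s) f),
      (measurePreserving_add_right volume s).quasiMeasurePreserving.ae ih] with x h1 h2 hx hx'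
    have h3 : x + s ∈ Ioo c d := by
      have hn : (0 : ℝ) ≤ n := n.cast_nonneg
      rcases le_total 0 s with h | h
      · have := mul_nonneg hn h
        exact ⟨by linarith [hx.1], by linarith [hx'.2]⟩
      · have := mul_nonpos_of_nonneg_of_nonpos hn h
        exact ⟨by linarith [hx'.1], by linarith [hx.2]⟩
    rw [h1 hx, h2 h3 (by rwa [add_assoc]), add_assoc]

lemma exists_rat_Ioo_of_uIcc_subset {Ω : Set ℝ} (hΩ : IsOpen Ω) {x y : ℝ} (h : uIcc x y ⊆ Ω) :
    ∃ p q δ : ℚ, 0 < δ ∧ Ioo (p : ℝ) q ⊆ Ω ∧ x ∈ Ioo (p + δ : ℝ) (q - δ) ∧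
      y ∈ Ioo (p + δ : ℝ) (q - δ) := by
  wlog hxy : x ≤ y generalizing x y
  · obtain ⟨p, q, δ, h1, h2, h3, h4⟩ := this (by rwa [uIcc_comm]) (not_le.mp hxy).le
    exact ⟨p, q, δ, h1, h2, h4, h3⟩
  rw [uIcc_of_le hxy] at h
  obtain ⟨p0, r0, hx0, hp0⟩ := mem_nhds_iff_exists_Ioo_subset.mp
    (hΩ.mem_nhds (h (left_mem_Icc.mpr hxy)))
  obtain ⟨r1, q0, hy0, hq0⟩ := mem_nhds_iff_exists_Ioo_subset.mp
    (hΩ.mem_nhds (h (right_mem_Icc.mpr hxy)))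
  obtain ⟨p, hp1, hp2⟩ := exists_rat_btwn hx0.1
  obtain ⟨q, hq1, hq2⟩ := exists_rat_btwn hy0.2
  obtain ⟨δ, hd1, hd2⟩ := exists_rat_btwn
    (lt_min (sub_pos.mpr hp2) (sub_pos.mpr hq1) : (0 : ℝ) < min (x - p) (q - y))
  have := lt_min_iff.mp hd2
  refine ⟨p, q, δ, by exact_mod_cast hd1, fun z hz => ?_, ⟨by linarith, by linarith⟩,
    ⟨by linarith, by linarith⟩⟩
  by_cases hzx : z < x
  · exact hp0 ⟨by linarith [hz.1], by linarith [hx0.2]⟩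
  by_cases hzy : y < z
  · exact hq0 ⟨by linarith [hy0.1], by linarith [hz.2]⟩
  · exact h ⟨not_lt.mp hzx, not_lt.mp hzy⟩

lemma isTranslationGroup_of_local {Ω : Set ℝ} (hΩ : IsOpen Ω)
    {U : ℝ → (LTwo Ω ≃ₗᵢ[ℂ] LTwo Ω)}
    (hU0 : ∀ f, U 0 f = f) (hUadd : ∀ s t f, U (s + t) f = U s (U t f))
    (hInt : ∀ V : Set ℝ, IsOpen V → V ⊆ Ω → ∀ δ : ℝ, 0 < δ →
      (∀ s : ℝ, |s| < δ → (fun x => x + s) '' V ⊆ Ω) →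
      ∀ s : ℝ, |s| < δ → ∀ f, ∀ᵐ x ∂(volume.restrict V),
        (U s f : ℝ → ℂ) x = (f : ℝ → ℂ) (x + s)) : IsTranslationGroup Ω U := by
  refine ⟨hU0, hUadd, fun t f => ?_⟩
  have key : ∀ p q δ : ℚ, ∀ᵐ x : ℝ, 0 < δ → Ioo (p : ℝ) q ⊆ Ω → x ∈ Ioo (p + δ : ℝ) (q - δ) →
      x + t ∈ Ioo (p + δ : ℝ) (q - δ) → U t f x = f (x + t) := by
    intro p q δ
    by_cases h : 0 < δ ∧ Ioo (p : ℝ) q ⊆ Ω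
    swap
    · exact .of_forall fun x h1 h2 => absurd ⟨h1, h2⟩ h
    have hδ : (0 : ℝ) < δ := by exact_mod_cast h.1
    obtain ⟨n, hn⟩ := exists_nat_gt (|t| / δ)
    have hn0 : (0 : ℝ) < n := (by positivity : (0 : ℝ) ≤ |t| / δ).trans_lt hn
    have hs : |t / n| < δ := by
      rw [abs_div, Nat.abs_cast, div_lt_iff₀ hn0]
      rwa [div_lt_iff₀ hδ, mul_comm] at hn
    have := iterate_shift_ae hU0 hUadd (s := t / n) (c := p + δ) (d := q - δ) (fun f => by
      rw [← ae_restrict_iff' measurableSet_Ioo]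
      refine hInt _ isOpen_Ioo ((Ioo_subset_Ioo (by linarith) (by linarith)).trans h.2) δ hδ ?_
        _ hs f
      rintro s hs _ ⟨x, hx, rfl⟩
      have := abs_lt.mp hs
      exact h.2 ⟨by linarith [hx.1], by linarith [hx.2]⟩) n f
    rw [mul_div_cancel₀ _ hn0.ne'] at this
    filter_upwards [this] with x hx _ _ using hx
  simp_rw [← ae_all_iff] at key
  filter_upwards [ae_restrict_of_ae key] with x hx hxt
  obtain ⟨p, q, δ, h1, h2, h3, h4⟩ := exists_rat_Ioo_of_uIcc_subset hΩ hxt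
  exact hx p q δ h1 h2 h3 h4

namespace IsTranslationGroup

variable {Ω : Set ℝ} {U : ℝ → (LTwo Ω ≃ₗᵢ[ℂ] LTwo Ω)}

lemma apply_neg (hU : IsTranslationGroup Ω U) (t : ℝ) (f : LTwo Ω) : U t (U (-t) f) = f := by
  rw [← hU.add, add_neg_cancel, hU.zero]

lemma inner_apply (hU : IsTranslationGroup Ω U) (t : ℝ) (f g : LTwo Ω) :
    ⟪f, U t g⟫_ℂ = ⟪U (-t) f, g⟫_ℂ := by
  rw [← (U t).inner_map_map (U (-t) f) g, hU.apply_neg]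

lemma ae_comp_add (hΩ : MeasurableSet Ω) {P : ℝ → Prop} (h : ∀ᵐ x ∂volume.restrict Ω, P x)
    (t : ℝ) : ∀ᵐ x, x + t ∈ Ω → P (x + t) := by
  rw [ae_restrict_iff' hΩ] at h
  exact (measurePreserving_add_right volume t).quasiMeasurePreserving.ae h

/-- A function supported at points entering `Ω` during time `t` is moved to points leaving `Ω`. -/
lemma support (hU : IsTranslationGroup Ω U) (hΩ : MeasurableSet Ω) (t : ℝ) {f : LTwo Ω}
    (hf : ∀ᵐ x ∂volume.restrict Ω, uIcc x (x - t) ⊆ Ω → f x = 0) :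
    ∀ᵐ x ∂volume.restrict Ω, uIcc x (x + t) ⊆ Ω → U t f x = 0 := by
  filter_upwards [hU.shift t f, ae_restrict_of_ae (ae_comp_add hΩ hf t)] with x h1 h2 hx
  rw [h1 hx]
  refine h2 (hx right_mem_uIcc) ?_
  rwa [add_sub_cancel_right, uIcc_comm]

lemma apply_intervalInd (hU : IsTranslationGroup Ω U) {p q t : ℝ} (hpq : p ≤ q)
    (h : ∀ x ∈ Ioo p q, uIcc x (x + t) ⊆ Ω) :
    U t (intervalInd Ω (p + t) (q + t)) = intervalInd Ω p q := by
  have h1 : Ioo p q ⊆ Ω := fun x hx => h x hx left_mem_uIcc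
  have h2 : Ioo (p + t) (q + t) ⊆ Ω := fun x hx => by
    have := h (x - t) ⟨by linarith [hx.1], by linarith [hx.2]⟩ right_mem_uIcc
    rwa [sub_add_cancel] at this
  have e1 : ⟪intervalInd Ω p q, U t (intervalInd Ω (p + t) (q + t))⟫_ℂ = ((q - p : ℝ) : ℂ) := by
    rw [inner_intervalInd h1, setIntegral_congr_ae measurableSet_Ioo (g := fun _ => (1 : ℂ))]
    · simp [hpq]
    · have a1 := ae_restrict_of_ae_restrict_of_subset h1
        (hU.shift t (intervalInd Ω (p + t) (q + t)))
      have a2 := (measurePreserving_add_right volume t).quasiMeasurePreserving.ae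
        ((ae_restrict_iff' measurableSet_Ioo).mp (ae_restrict_of_ae_restrict_of_subset h2
          (intervalInd_ae Ω (p + t) (q + t))))
      filter_upwards [(ae_restrict_iff' measurableSet_Ioo).mp a1, a2] with x b1 b2 hx
      have hx' : x + t ∈ Ioo (p + t) (q + t) := ⟨by linarith [hx.1], by linarith [hx.2]⟩
      rw [b1 hx (h x hx), b2 hx', indicator_of_mem hx']
  have e2 : ⟪U t (intervalInd Ω (p + t) (q + t)), intervalInd Ω p q⟫_ℂ = ((q - p : ℝ) : ℂ) := by
    rw [← inner_conj_symm, e1, Complex.conj_ofReal]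
  rw [← sub_eq_zero, ← @inner_self_eq_zero ℂ, inner_sub_sub_self, e1, e2,
    LinearIsometryEquiv.inner_map_map, norm_sq_intervalInd hpq h1,
    norm_sq_intervalInd (by linarith) h2]
  push_cast
  ring

end IsTranslationGroup

lemma intervalInd_add {Ω : Set ℝ} {p q r : ℝ} (hpq : p ≤ q) (hqr : q ≤ r) :
    intervalInd Ω p r = intervalInd Ω p q + intervalInd Ω q r := by
  refine Lp.ext ?_
  filter_upwards [intervalInd_ae Ω p r, intervalInd_ae Ω p q, intervalInd_ae Ω q r,
    Lp.coeFn_add (intervalInd Ω p q) (intervalInd Ω q r),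
    ae_restrict_of_ae (Measure.ae_ne volume q)] with x h1 h2 h3 h4 h5
  rw [h4, Pi.add_apply, h1, h2, h3]
  simp only [indicator_apply, mem_Ioo]
  rcases lt_or_gt_of_ne h5 with h | h
  · simp [h, h.trans_le hqr, h.not_gt]
  · simp [h, hpq.trans_lt h, h.not_gt]

lemma setIntegral_Ioo_comp_add (f : ℝ → ℂ) (c d t : ℝ) :
    ∫ x in Ioo c d, f (x + t) = ∫ x in Ioo (c + t) (d + t), f x := by
  have := (measurePreserving_add_right volume t).setIntegral_preimage_emb
    (measurableEmbedding_addRight t) f (Ioo (c + t) (d + t))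
  simpa using this

/-- The points `a i` and `b k` are the finite left and right endpoints of the components of `Ω`,
all of which are longer than `ε`. -/
structure IsBoundary {A K : Type*} (Ω : Set ℝ) (ε : ℝ) (a : A → ℝ) (b : K → ℝ) : Prop where
  isOpen : IsOpen Ω
  pos : 0 < ε
  left_notMem : ∀ i, a i ∉ Ω
  right_notMem : ∀ k, b k ∉ Ω
  left_subset : ∀ i, Ioc (a i) (a i + ε) ⊆ Ω
  right_subset : ∀ k, Ico (b k - ε) (b k) ⊆ Ω
  sep : ∀ x ∈ Ω, ∀ r s, 0 ≤ r → 0 ≤ s → r + s ≤ ε → uIcc x (x + r) ⊆ Ω ∨ uIcc x (x - s) ⊆ Ω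
  exists_left : ∀ x ∈ Ω, ¬ uIcc x (x - ε) ⊆ Ω → ∃ i, x ∈ Ioc (a i) (a i + ε)
  exists_right : ∀ x ∈ Ω, ¬ uIcc x (x + ε) ⊆ Ω → ∃ k, x ∈ Ico (b k - ε) (b k)
  disjoint_left : Pairwise fun i j => Disjoint (Ioo (a i) (a i + ε)) (Ioo (a j) (a j + ε))
  disjoint_right : Pairwise fun i j => Disjoint (Ioo (b i - ε) (b i)) (Ioo (b j - ε) (b j))

/-- The transition coefficient from the left endpoint `a` to the right endpoint `b`. -/
noncomputable def transitionCoeff {Ω : Set ℝ} (U : ℝ → (LTwo Ω ≃ₗᵢ[ℂ] LTwo Ω)) (a b : ℝ) : ℂ :=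
  limUnder (𝓝[>] (0 : ℝ)) fun s =>
    s⁻¹ • ⟪intervalInd Ω (b - s) b, U s (intervalInd Ω a (a + s))⟫_ℂ

namespace IsBoundary

variable {A K : Type*} {Ω : Set ℝ} {ε : ℝ} {a : A → ℝ} {b : K → ℝ}
  {U : ℝ → (LTwo Ω ≃ₗᵢ[ℂ] LTwo Ω)}

lemma Ioo_left_subset (hb : IsBoundary Ω ε a b) (i : A) : Ioo (a i) (a i + ε) ⊆ Ω :=
  Ioo_subset_Ioc_self.trans (hb.left_subset i)

lemma Ioo_right_subset (hb : IsBoundary Ω ε a b) (k : K) : Ioo (b k - ε) (b k) ⊆ Ω :=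
  Ioo_subset_Ico_self.trans (hb.right_subset k)

/-- What has accumulated at the right endpoints of the components leaves them in time. -/
lemma apply_ae_eq_zero (hb : IsBoundary Ω ε a b) (hU : IsTranslationGroup Ω U) {r s : ℝ}
    (hr : 0 ≤ r) (hs : 0 ≤ s) (hrs : r + s ≤ ε) {h : LTwo Ω}
    (hh : ∀ᵐ x ∂volume.restrict Ω, uIcc x (x + s) ⊆ Ω → h x = 0) (k : K) :
    ∀ᵐ x ∂volume.restrict (Ioo (b k - r) (b k)), U r h x = 0 := by
  refine ae_eq_zero_of_inner_intervalInd
    ((Ioo_subset_Ioo (by linarith) le_rfl).trans (hb.Ioo_right_subset k)) _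
    fun c d hc _ hd => ?_
  rw [hU.inner_apply]
  have := hU.support hb.isOpen.measurableSet (-r) (f := intervalInd Ω c d) (by
    filter_upwards [intervalInd_ae Ω c d] with x hx hxr
    rw [hx]
    refine indicator_of_notMem (fun hxc => hb.right_notMem k (hxr ?_)) _
    rw [sub_neg_eq_add, uIcc_of_le (by linarith)]
    exact ⟨by linarith [hxc.2], by linarith [hxc.1]⟩)
  refine inner_eq_zero_of_ae ?_
  filter_upwards [this, hh, ae_restrict_mem hb.isOpen.measurableSet] with x h1 h2 hx
  rcases hb.sep x hx s r hs hr (by linarith) with h | h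
  · exact .inr (h2 h)
  · exact .inl (h1 h)

lemma apply_intervalInd_eq (hb : IsBoundary Ω ε a b) (hU : IsTranslationGroup Ω U) (i : A)
    {c d : ℝ} (hc : 0 ≤ c) (hcd : c ≤ d) (hd : d ≤ ε) :
    U ε (intervalInd Ω (a i + c) (a i + d)) =
      U (ε - d) (U (d - c) (intervalInd Ω (a i) (a i + (d - c)))) := by
  have := hU.apply_intervalInd (p := a i) (q := a i + (d - c)) (t := c) (by linarith)
    (fun x hx => by
      rw [uIcc_of_le (by linarith)]
      exact (Icc_subset_Ioc hx.1 (by linarith [hx.2])).trans (hb.left_subset i))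
  rw [← this, ← hU.add, ← hU.add]
  congr! 2 <;> ring

lemma support_intervalInd (hb : IsBoundary Ω ε a b) (hU : IsTranslationGroup Ω U) (i : A)
    {s : ℝ} (hs : 0 ≤ s) : ∀ᵐ x ∂volume.restrict Ω, uIcc x (x + s) ⊆ Ω →
      U s (intervalInd Ω (a i) (a i + s)) x = 0 := by
  refine hU.support hb.isOpen.measurableSet s ?_
  filter_upwards [intervalInd_ae Ω (a i) (a i + s)] with x hx hxr
  rw [hx]
  refine indicator_of_notMem (fun hxc => hb.left_notMem i (hxr ?_)) _
  rw [uIcc_of_ge (by linarith)]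
  exact ⟨by linarith [hxc.2], by linarith [hxc.1]⟩

lemma apply_intervalInd_ae_zero_above (hb : IsBoundary Ω ε a b) (hU : IsTranslationGroup Ω U)
    (i : A) (k : K) {c d : ℝ} (hc : 0 ≤ c) (hcd : c ≤ d) (hd : d ≤ ε) :
    ∀ᵐ x ∂volume.restrict (Ioo (b k - ε + d) (b k)),
      U ε (intervalInd Ω (a i + c) (a i + d)) x = 0 := by
  rw [hb.apply_intervalInd_eq hU i hc hcd hd]
  have := hb.apply_ae_eq_zero hU (r := ε - d) (s := d - c) (by linarith) (by linarith)
    (by linarith) (hb.support_intervalInd hU i (by linarith)) k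
  rwa [show b k - (ε - d) = b k - ε + d by ring] at this

lemma apply_intervalInd_ae_shift (hb : IsBoundary Ω ε a b) (hU : IsTranslationGroup Ω U)
    (i : A) (k : K) {c d : ℝ} (hc : 0 ≤ c) (hcd : c ≤ d) (hd : d ≤ ε) :
    ∀ᵐ x ∂volume.restrict (Ioo (b k - ε) (b k - ε + d)),
      U ε (intervalInd Ω (a i + c) (a i + d)) x =
        U (d - c) (intervalInd Ω (a i) (a i + (d - c))) (x + (ε - d)) := by
  rw [hb.apply_intervalInd_eq hU i hc hcd hd]
  have hsub : Ioo (b k - ε) (b k - ε + d) ⊆ Ω :=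
    (Ioo_subset_Ioo le_rfl (by linarith)).trans (hb.Ioo_right_subset k)
  filter_upwards [ae_restrict_of_ae_restrict_of_subset hsub (hU.shift (ε - d)
    (U (d - c) (intervalInd Ω (a i) (a i + (d - c))))), ae_restrict_mem measurableSet_Ioo]
    with x hx hxm
  refine hx ?_
  rw [uIcc_of_le (by linarith)]
  exact fun z hz => hb.right_subset k ⟨by linarith [hz.1, hxm.1], by linarith [hz.2, hxm.2]⟩

lemma apply_intervalInd_ae_zero_below (hb : IsBoundary Ω ε a b) (hU : IsTranslationGroup Ω U)
    (i : A) (k : K) {c d : ℝ} (hc : 0 ≤ c) (hcd : c ≤ d) (hd : d ≤ ε) :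
    ∀ᵐ x ∂volume.restrict (Ioo (b k - ε) (b k - ε + c)),
      U ε (intervalInd Ω (a i + c) (a i + d)) x = 0 := by
  have h1 := ae_restrict_of_ae_restrict_of_subset
    (Ioo_subset_Ioo le_rfl (by linarith : b k - ε + c ≤ b k - ε + d))
    (hb.apply_intervalInd_ae_shift hU i k hc hcd hd)
  filter_upwards [h1, ae_restrict_of_ae (IsTranslationGroup.ae_comp_add hb.isOpen.measurableSet
    (hb.support_intervalInd hU i (s := d - c) (by linarith)) (ε - d)),
    ae_restrict_mem measurableSet_Ioo] with x hx hx2 hxm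
  have hsub : Icc (x + (ε - d)) (x + (ε - d) + (d - c)) ⊆ Ω := fun z hz =>
    hb.right_subset k ⟨by linarith [hz.1, hxm.1], by linarith [hz.2, hxm.2]⟩
  rw [hx]
  refine hx2 (hsub (left_mem_Icc.mpr (by linarith))) ?_
  rwa [uIcc_of_le (by linarith)]

lemma inner_apply_intervalInd (hb : IsBoundary Ω ε a b) (hU : IsTranslationGroup Ω U)
    (i : A) (k : K) {c d : ℝ} (hc : 0 ≤ c) (hcd : c ≤ d) (hd : d ≤ ε) :
    ⟪intervalInd Ω (b k - ε + c) (b k - ε + d), U ε (intervalInd Ω (a i + c) (a i + d))⟫_ℂ =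
      ⟪intervalInd Ω (b k - (d - c)) (b k),
        U (d - c) (intervalInd Ω (a i) (a i + (d - c)))⟫_ℂ := by
  have hR := hb.Ioo_right_subset k
  have h1 := ae_restrict_of_ae_restrict_of_subset
    (Ioo_subset_Ioo (by linarith : b k - ε ≤ b k - ε + c) le_rfl)
    (hb.apply_intervalInd_ae_shift hU i k hc hcd hd)
  rw [inner_intervalInd ((Ioo_subset_Ioo (by linarith) (by linarith)).trans hR),
    inner_intervalInd ((Ioo_subset_Ioo (by linarith) (by linarith)).trans hR),
    integral_congr_ae h1, setIntegral_Ioo_comp_add]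
  congr! 3 <;> ring

lemma apply_intervalInd_ae_eq_coeff (hb : IsBoundary Ω ε a b) (hU : IsTranslationGroup Ω U)
    (i : A) (k : K) : ∀ᵐ x ∂volume.restrict (Ioo (b k - ε) (b k)),
      U ε (intervalInd Ω (a i) (a i + ε)) x = transitionCoeff U (a i) (b k) := by
  have hR := hb.Ioo_right_subset k
  refine ae_eq_const_of_inner_intervalInd hR _
    (fun s => ⟪intervalInd Ω (b k - s) (b k), U s (intervalInd Ω (a i) (a i + s))⟫_ℂ) ?_
  intro c' d' hc' hcd' hd'
  obtain ⟨c, rfl⟩ : ∃ c, c' = b k - ε + c := ⟨c' - (b k - ε), by ring⟩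
  obtain ⟨d, rfl⟩ : ∃ d, d' = b k - ε + d := ⟨d' - (b k - ε), by ring⟩
  have hc : 0 ≤ c := by linarith
  have hcd : c ≤ d := by linarith
  have hd : d ≤ ε := by linarith
  have hsub : Ioo (b k - ε + c) (b k - ε + d) ⊆ Ω :=
    (Ioo_subset_Ioo (by linarith) (by linarith)).trans hR
  have z1 : ⟪intervalInd Ω (b k - ε + c) (b k - ε + d),
      U ε (intervalInd Ω (a i) (a i + c))⟫_ℂ = 0 := by
    have := ae_restrict_of_ae_restrict_of_subset (Ioo_subset_Ioo le_rfl hd')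
      (hb.apply_intervalInd_ae_zero_above hU i k le_rfl hc (hcd.trans hd))
    rw [add_zero] at this
    rw [inner_intervalInd hsub, integral_congr_ae this, integral_zero]
  have z2 : ⟪intervalInd Ω (b k - ε + c) (b k - ε + d),
      U ε (intervalInd Ω (a i + d) (a i + ε))⟫_ℂ = 0 := by
    have := ae_restrict_of_ae_restrict_of_subset (Ioo_subset_Ioo hc' le_rfl)
      (hb.apply_intervalInd_ae_zero_below hU i k (hc.trans hcd) hd le_rfl)
    rw [inner_intervalInd hsub, integral_congr_ae this, integral_zero]
  rw [intervalInd_add (p := a i) (q := a i + d) (by linarith) (by linarith),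
    intervalInd_add (p := a i) (q := a i + c) (by linarith) (by linarith),
    map_add, map_add, inner_add_right, inner_add_right, z1, z2, zero_add, add_zero,
    hb.inner_apply_intervalInd hU i k hc hcd hd, add_sub_add_left_eq_sub]

lemma apply_intervalInd_ae (hb : IsBoundary Ω ε a b) (hU : IsTranslationGroup Ω U)
    (i : A) (k : K) {c d : ℝ} (hc : 0 ≤ c) (hcd : c ≤ d) (hd : d ≤ ε) :
    ∀ᵐ x ∂volume.restrict (Ioo (b k - ε) (b k)), U ε (intervalInd Ω (a i + c) (a i + d)) x =
      transitionCoeff U (a i) (b k) * intervalInd Ω (b k - ε + c) (b k - ε + d) x := by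
  have hR := hb.Ioo_right_subset k
  have e : U ε (intervalInd Ω (a i) (a i + ε)) = U ε (intervalInd Ω (a i) (a i + c)) +
      U ε (intervalInd Ω (a i + c) (a i + d)) + U ε (intervalInd Ω (a i + d) (a i + ε)) := by
    rw [intervalInd_add (p := a i) (q := a i + d) (by linarith) (by linarith),
      intervalInd_add (p := a i) (q := a i + c) (by linarith) (by linarith), map_add, map_add]
  have h0 := hb.apply_intervalInd_ae_eq_coeff hU i k
  rw [e] at h0
  have h1 := hb.apply_intervalInd_ae_zero_above hU i k le_rfl hc (hcd.trans hd)
  have h2 := hb.apply_intervalInd_ae_zero_below hU i k (hc.trans hcd) hd le_rfl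
  have h3 := hb.apply_intervalInd_ae_zero_above hU i k hc hcd hd
  have h4 := hb.apply_intervalInd_ae_zero_below hU i k hc hcd hd
  rw [ae_restrict_iff' measurableSet_Ioo] at h1 h2 h3 h4
  rw [add_zero] at h1
  filter_upwards [h0, ae_restrict_of_ae h1, ae_restrict_of_ae h2, ae_restrict_of_ae h3,
    ae_restrict_of_ae h4, ae_restrict_of_ae_restrict_of_subset hR (intervalInd_ae Ω _ _),
    ae_restrict_of_ae_restrict_of_subset hR (Lp.coeFn_add (U ε (intervalInd Ω (a i) (a i + c)))
      (U ε (intervalInd Ω (a i + c) (a i + d)))),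
    ae_restrict_of_ae_restrict_of_subset hR (Lp.coeFn_add (U ε (intervalInd Ω (a i) (a i + c)) +
      U ε (intervalInd Ω (a i + c) (a i + d))) (U ε (intervalInd Ω (a i + d) (a i + ε)))),
    ae_restrict_of_ae (Measure.ae_ne volume (b k - ε + c)),
    ae_restrict_of_ae (Measure.ae_ne volume (b k - ε + d)), ae_restrict_mem measurableSet_Ioo]
    with x g0 g1 g2 g3 g4 g5 g6 g7 g8 g9 g
  rw [g5]
  rcases lt_or_gt_of_ne g8 with hx | hx
  · rw [g4 ⟨g.1, hx⟩, indicator_of_notMem (fun h => h.1.not_gt hx), mul_zero]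
  rcases lt_or_gt_of_ne g9 with hx' | hx'
  · rw [indicator_of_mem (show x ∈ Ioo (b k - ε + c) (b k - ε + d) from ⟨hx, hx'⟩), mul_one, ← g0, g7, Pi.add_apply, g6, Pi.add_apply,
      g1 ⟨hx, g.2⟩, g2 ⟨g.1, hx'⟩, zero_add, add_zero]
  · rw [g3 ⟨hx', g.2⟩, indicator_of_notMem (fun h => h.2.not_gt hx'), mul_zero]

end IsBoundary

lemma memLp_truncTranslate {Ω : Set ℝ} (hΩ : MeasurableSet Ω) (c : ℝ) (f : LTwo Ω) :
    MemLp ({x : ℝ | x + c ∈ Ω}.indicator fun x => f (x + c)) 2 (volume.restrict Ω) := by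
  have h1 : MemLp (Ω.indicator f) 2 volume := (memLp_indicator_iff_restrict hΩ).mpr (Lp.memLp f)
  exact (h1.comp_measurePreserving (measurePreserving_add_right volume c)).restrict Ω

/-- Translation by `c` on `L²(Ω)`, truncated to `Ω`. -/
noncomputable def truncTranslate {Ω : Set ℝ} (hΩ : MeasurableSet Ω) (c : ℝ) (f : LTwo Ω) : LTwo Ω :=
  (memLp_truncTranslate hΩ c f).toLp

lemma truncTranslate_ae {Ω : Set ℝ} (hΩ : MeasurableSet Ω) (c : ℝ) (f : LTwo Ω) :
    truncTranslate hΩ c f =ᵐ[volume.restrict Ω] {x : ℝ | x + c ∈ Ω}.indicator fun x => f (x + c) :=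
  MemLp.coeFn_toLp _

lemma symm_apply_ae_eq_truncTranslate {Ω : Set ℝ} (hΩ : MeasurableSet Ω) {ε p q : ℝ} {z : ℂ}
    (hp : Ioo p (p + ε) ⊆ Ω) (hq : Ioo q (q + ε) ⊆ Ω) (V : LTwo Ω ≃ₗᵢ[ℂ] LTwo Ω)
    (hV : ∀ c d, 0 ≤ c → c ≤ d → d ≤ ε → ∀ᵐ x ∂volume.restrict (Ioo q (q + ε)),
      V (intervalInd Ω (p + c) (p + d)) x = z * intervalInd Ω (q + c) (q + d) x)
    (f : LTwo Ω) (hf : ∀ᵐ x ∂volume.restrict Ω, x ∉ Ioo q (q + ε) → f x = 0) :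
    ∀ᵐ x ∂volume.restrict (Ioo p (p + ε)), V.symm f x = conj z * truncTranslate hΩ (q - p) f x := by
  have key : ∀ᵐ x ∂volume.restrict (Ioo p (p + ε)),
      (V.symm f - conj z • truncTranslate hΩ (q - p) f : LTwo Ω) x = 0 := by
    refine ae_eq_zero_of_inner_intervalInd hp _ fun c' d' hc' hcd' hd' => ?_
    obtain ⟨c, rfl⟩ : ∃ c, c' = p + c := ⟨c' - p, by ring⟩
    obtain ⟨d, rfl⟩ : ∃ d, d' = p + d := ⟨d' - p, by ring⟩
    have hsp : Ioo (p + c) (p + d) ⊆ Ω := (Ioo_subset_Ioo hc' hd').trans hp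
    have hsq : Ioo (q + c) (q + d) ⊆ Ω :=
      (Ioo_subset_Ioo (by linarith) (by linarith)).trans hq
    have e1 : ⟪V (intervalInd Ω (p + c) (p + d)) - z • intervalInd Ω (q + c) (q + d), f⟫_ℂ
        = 0 := by
      refine inner_eq_zero_of_ae ?_
      have := hV c d (by linarith) (by linarith) (by linarith)
      rw [ae_restrict_iff' measurableSet_Ioo] at this
      filter_upwards [ae_restrict_of_ae this, hf, Lp.coeFn_sub (V (intervalInd Ω (p + c) (p + d)))
        (z • intervalInd Ω (q + c) (q + d)), Lp.coeFn_smul z (intervalInd Ω (q + c) (q + d))]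
        with x h1 h2 h3 h4
      by_cases hx : x ∈ Ioo q (q + ε)
      · left
        rw [h3, Pi.sub_apply, h4, h1 hx, Pi.smul_apply, smul_eq_mul, sub_self]
      · exact .inr (h2 hx)
    have e2 : ⟪intervalInd Ω (p + c) (p + d), truncTranslate hΩ (q - p) f⟫_ℂ =
        ⟪intervalInd Ω (q + c) (q + d), f⟫_ℂ := by
      rw [inner_intervalInd hsp, inner_intervalInd hsq]
      have : ∀ᵐ x ∂volume.restrict (Ioo (p + c) (p + d)),
          truncTranslate hΩ (q - p) f x = f (x + (q - p)) := by
        filter_upwards [ae_restrict_of_ae_restrict_of_subset hsp (truncTranslate_ae hΩ (q - p) f),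
          ae_restrict_mem measurableSet_Ioo] with x hx hxm
        rw [hx, indicator_of_mem]
        exact hsq ⟨by linarith [hxm.1], by linarith [hxm.2]⟩
      rw [integral_congr_ae this, setIntegral_Ioo_comp_add]
      congr! 3 <;> ring
    rw [inner_sub_left, inner_smul_left, sub_eq_zero] at e1
    rw [inner_sub_right, inner_smul_right, e2, ← V.inner_map_map, V.apply_symm_apply, e1, sub_self]
  filter_upwards [key, ae_restrict_of_ae_restrict_of_subset hp (Lp.coeFn_sub (V.symm f)
      (conj z • truncTranslate hΩ (q - p) f)), ae_restrict_of_ae_restrict_of_subset hp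
      (Lp.coeFn_smul (conj z) (truncTranslate hΩ (q - p) f))] with x h1 h2 h3
  rw [h2, Pi.sub_apply, h3, sub_eq_zero] at h1
  exact h1

lemma truncTranslate_intervalInd {Ω : Set ℝ} (hΩ : MeasurableSet Ω) {c p q : ℝ}
    (h : Ioo (p + c) (q + c) ⊆ Ω) :
    truncTranslate hΩ c (intervalInd Ω (p + c) (q + c)) = intervalInd Ω p q := by
  refine Lp.ext ?_
  filter_upwards [truncTranslate_ae hΩ c (intervalInd Ω (p + c) (q + c)), intervalInd_ae Ω p q,
    ae_restrict_of_ae (IsTranslationGroup.ae_comp_add hΩ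
      (intervalInd_ae Ω (p + c) (q + c)) c)] with x h1 h2 h3
  rw [h1, h2]
  by_cases hx : x ∈ Ioo p q
  · have hx' : x + c ∈ Ioo (p + c) (q + c) := ⟨by linarith [hx.1], by linarith [hx.2]⟩
    rw [indicator_of_mem (s := {x | x + c ∈ Ω}) (h hx'), h3 (h hx'), indicator_of_mem hx',
      indicator_of_mem hx]
  · rw [indicator_of_notMem hx, indicator_apply_eq_zero]
    intro hxΩ
    rw [h3 hxΩ, indicator_of_notMem]
    exact fun hx' => hx ⟨by linarith [hx'.1], by linarith [hx'.2]⟩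

/-- A function that is a multiple of a translate of `f` on each of the disjoint sets `Q k`, and
zero elsewhere, is the sum of these multiples. -/
lemma hasSum_truncTranslate {Ω : Set ℝ} (hΩ : MeasurableSet Ω) {κ : Type*} [Countable κ]
    {Q : κ → Set ℝ} (hm : ∀ k, MeasurableSet (Q k))
    (hd : Pairwise (Function.onFun Disjoint Q)) {S : Set ℝ} (c : κ → ℝ) (z : κ → ℂ)
    {f h : LTwo Ω} (hf : ∀ᵐ x ∂volume.restrict Ω, x ∉ S → f x = 0)
    (hQ : ∀ k x, x + c k ∈ S → x ∈ Q k)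
    (hh : ∀ k, ∀ᵐ x ∂volume.restrict (Q k), h x = z k * truncTranslate hΩ (c k) f x)
    (hz : ∀ᵐ x ∂volume.restrict Ω, x ∉ ⋃ k, Q k → h x = 0) :
    HasSum (fun k => z k • truncTranslate hΩ (c k) f) h := by
  refine hasSum_of_partition hm hd h hz _ fun k => ?_
  filter_upwards [Lp.coeFn_smul (z k) (truncTranslate hΩ (c k) f),
    truncTranslate_ae hΩ (c k) f, ae_restrict_of_ae ((ae_restrict_iff' (hm k)).mp (hh k)),
    ae_restrict_of_ae (IsTranslationGroup.ae_comp_add hΩ hf (c k))] with x h1 h2 h3 h4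
  rw [h1, Pi.smul_apply, smul_eq_mul]
  by_cases hx : x ∈ Q k
  · rw [indicator_of_mem hx, h3 hx]
  · rw [indicator_of_notMem hx, h2, indicator_apply_eq_zero.mpr, mul_zero]
    exact fun hxΩ => h4 hxΩ fun hxS => hx (hQ k x hxS)

lemma IsTranslationGroup.symm_apply {Ω : Set ℝ} {U : ℝ → (LTwo Ω ≃ₗᵢ[ℂ] LTwo Ω)}
    (hU : IsTranslationGroup Ω U) (t : ℝ) (f : LTwo Ω) : (U t).symm f = U (-t) f := by
  rw [LinearIsometryEquiv.symm_apply_eq, hU.apply_neg]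

lemma ae_Ioo_of_ae_Icc {Ω : Set ℝ} {p q : ℝ} {f : LTwo Ω}
    (hf : ∀ᵐ x ∂volume.restrict Ω, x ∉ Icc p q → f x = 0) :
    ∀ᵐ x ∂volume.restrict Ω, x ∉ Ioo p q → f x = 0 := by
  filter_upwards [hf, ae_restrict_of_ae (Measure.ae_ne volume p),
    ae_restrict_of_ae (Measure.ae_ne volume q)] with x h1 h2 h3 h4
  exact h1 fun h => h4 ⟨lt_of_le_of_ne h.1 h2.symm, lt_of_le_of_ne h.2 h3⟩

namespace IsBoundary

variable {A K : Type*} {Ω : Set ℝ} {ε : ℝ} {a : A → ℝ} {b : K → ℝ}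
  {U : ℝ → (LTwo Ω ≃ₗᵢ[ℂ] LTwo Ω)}

lemma apply_neg_ae (hb : IsBoundary Ω ε a b) (hU : IsTranslationGroup Ω U) (i : A) (k : K)
    {f : LTwo Ω} (hf : ∀ᵐ x ∂volume.restrict Ω, x ∉ Ioo (b k - ε) (b k) → f x = 0) :
    ∀ᵐ x ∂volume.restrict (Ioo (a i) (a i + ε)), U (-ε) f x =
      conj (transitionCoeff U (a i) (b k)) *
        truncTranslate hb.isOpen.measurableSet (b k - a i - ε) f x := by
  have := symm_apply_ae_eq_truncTranslate hb.isOpen.measurableSet (ε := ε) (p := a i)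
    (q := b k - ε) (z := transitionCoeff U (a i) (b k)) (hb.Ioo_left_subset i)
    (by rw [sub_add_cancel]; exact hb.Ioo_right_subset k) (U ε)
    (by rw [sub_add_cancel]; exact fun c d hc hcd hd => hb.apply_intervalInd_ae hU i k hc hcd hd)
    f (by rwa [sub_add_cancel])
  rw [hU.symm_apply] at this
  rwa [show b k - a i - ε = b k - ε - a i by ring]

lemma apply_ae (hb : IsBoundary Ω ε a b) (hU : IsTranslationGroup Ω U) (i : A) (k : K)
    {f : LTwo Ω} (hf : ∀ᵐ x ∂volume.restrict Ω, x ∉ Ioo (a i) (a i + ε) → f x = 0) :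
    ∀ᵐ x ∂volume.restrict (Ioo (b k - ε) (b k)), U ε f x =
      transitionCoeff U (a i) (b k) *
        truncTranslate hb.isOpen.measurableSet (a i + ε - b k) f x := by
  have := symm_apply_ae_eq_truncTranslate hb.isOpen.measurableSet (ε := ε) (p := b k - ε)
    (q := a i) (z := conj (transitionCoeff U (a i) (b k)))
    (by rw [sub_add_cancel]; exact hb.Ioo_right_subset k) (hb.Ioo_left_subset i) (U ε).symm
    (fun c d hc hcd hd => ?_) f hf
  · rw [LinearIsometryEquiv.symm_symm, sub_add_cancel, Complex.conj_conj] at this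
    rwa [show a i + ε - b k = a i - (b k - ε) by ring]
  · rw [hU.symm_apply]
    have hsub : Ioo (b k - ε + c) (b k - ε + d) ⊆ Ioo (b k - ε) (b k) :=
      Ioo_subset_Ioo (by linarith) (by linarith)
    have := hb.apply_neg_ae hU i k (f := intervalInd Ω (b k - ε + c) (b k - ε + d)) (by
      filter_upwards [intervalInd_ae Ω (b k - ε + c) (b k - ε + d)] with x hx hx'
      rw [hx, indicator_of_notMem fun h => hx' (hsub h)])
    have e1 : b k - ε + c = a i + c + (b k - a i - ε) := by ring
    have e2 : b k - ε + d = a i + d + (b k - a i - ε) := by ring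
    have e := truncTranslate_intervalInd hb.isOpen.measurableSet (c := b k - a i - ε)
      (p := a i + c) (q := a i + d)
      (by rw [← e1, ← e2]; exact hsub.trans (hb.Ioo_right_subset k))
    rw [← e1, ← e2] at e
    rwa [e] at this

lemma hasSum_left (hb : IsBoundary Ω ε a b) (hU : IsTranslationGroup Ω U) [Countable K] (i : A)
    {f : LTwo Ω} (hf : ∀ᵐ x ∂volume.restrict Ω, x ∉ Icc (a i) (a i + ε) → f x = 0) :
    HasSum (fun k => transitionCoeff U (a i) (b k) •
      truncTranslate hb.isOpen.measurableSet (a i + ε - b k) f) (U ε f) := by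
  refine hasSum_truncTranslate hb.isOpen.measurableSet (fun k => measurableSet_Ioo)
    hb.disjoint_right _ _ (ae_Ioo_of_ae_Icc hf) (fun k x hx => ?_)
    (fun k => hb.apply_ae hU i k (ae_Ioo_of_ae_Icc hf)) ?_
  · exact ⟨by linarith [hx.1], by linarith [hx.2]⟩
  · have := hU.support hb.isOpen.measurableSet ε (f := f) (by
      filter_upwards [hf] with x hx hxε
      refine hx fun h => hb.left_notMem i (hxε ?_)
      rw [uIcc_of_ge (by linarith [hb.pos])]
      exact ⟨by linarith [h.2], h.1⟩)
    filter_upwards [this, ae_restrict_of_ae (ae_all_iff.mpr fun k =>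
      Measure.ae_ne volume (b k - ε)), ae_restrict_mem hb.isOpen.measurableSet] with x h1 h2 h3 h4
    refine h1 (by_contra fun h5 => ?_)
    obtain ⟨k, hk⟩ := hb.exists_right x h3 h5
    exact h4 (mem_iUnion.mpr ⟨k, lt_of_le_of_ne hk.1 (h2 k).symm, hk.2⟩)

lemma hasSum_right (hb : IsBoundary Ω ε a b) (hU : IsTranslationGroup Ω U) [Countable A] (k : K)
    {f : LTwo Ω} (hf : ∀ᵐ x ∂volume.restrict Ω, x ∉ Icc (b k - ε) (b k) → f x = 0) :
    HasSum (fun i => conj (transitionCoeff U (a i) (b k)) •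
      truncTranslate hb.isOpen.measurableSet (b k - a i - ε) f) (U (-ε) f) := by
  refine hasSum_truncTranslate hb.isOpen.measurableSet (fun i => measurableSet_Ioo)
    hb.disjoint_left _ _ (ae_Ioo_of_ae_Icc hf) (fun i x hx => ?_)
    (fun i => hb.apply_neg_ae hU i k (ae_Ioo_of_ae_Icc hf)) ?_
  · exact ⟨by linarith [hx.1], by linarith [hx.2]⟩
  · have := hU.support hb.isOpen.measurableSet (-ε) (f := f) (by
      filter_upwards [hf] with x hx hxε
      refine hx fun h => hb.right_notMem k (hxε ?_)
      rw [sub_neg_eq_add, uIcc_of_le (by linarith [hb.pos])]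
      exact ⟨h.2, by linarith [h.1]⟩)
    filter_upwards [this, ae_restrict_of_ae (ae_all_iff.mpr fun i =>
      Measure.ae_ne volume (a i + ε)), ae_restrict_mem hb.isOpen.measurableSet] with x h1 h2 h3 h4
    refine h1 (by_contra fun h5 => ?_)
    obtain ⟨i, hi⟩ := hb.exists_left x h3 h5
    exact h4 (mem_iUnion.mpr ⟨i, hi.1, lt_of_le_of_ne hi.2 (h2 i)⟩)

/-- The transition coefficients form a unitary matrix. -/
lemma exists_unitary (hb : IsBoundary Ω ε a b) (hU : IsTranslationGroup Ω U)
    [Countable A] [Countable K] :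
    ∃ W : lp (fun _ : A => ℂ) 2 ≃ₗᵢ[ℂ] lp (fun _ : K => ℂ) 2,
      ∀ x k, W x k = ∑' i, x i * transitionCoeff U (a i) (b k) := by
  classical
  have hε := hb.pos
  set s : ℂ := Complex.ofReal (√ε)⁻¹ with hs
  have hss : conj s * (s * (ε : ℂ)) = 1 := by
    rw [hs, Complex.conj_ofReal]
    norm_cast
    rw [← mul_assoc, ← mul_inv, Real.mul_self_sqrt hε.le, inv_mul_cancel₀ hε.ne']
  have hvn (i : A) : ⟪intervalInd Ω (a i) (a i + ε), intervalInd Ω (a i) (a i + ε)⟫_ℂ = ε := by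
    rw [norm_sq_intervalInd (by linarith) (hb.Ioo_left_subset i), add_sub_cancel_left]
  have hwn (k : K) : ⟪intervalInd Ω (b k - ε) (b k), intervalInd Ω (b k - ε) (b k)⟫_ℂ = ε := by
    rw [norm_sq_intervalInd (by linarith) (hb.Ioo_right_subset k), sub_sub_cancel]
  refine exists_unitary_of_hasSum (v := fun i => s • U ε (intervalInd Ω (a i) (a i + ε)))
    (w := fun k => s • intervalInd Ω (b k - ε) (b k)) ?_ ?_ _ (fun i => ?_) (fun k => ?_)
  · rw [orthonormal_iff_ite]
    intro i j
    rw [inner_smul_left, inner_smul_right, LinearIsometryEquiv.inner_map_map]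
    split_ifs with hij
    · rw [← hij, hvn, hss]
    · rw [inner_intervalInd_of_disjoint (hb.disjoint_left hij), mul_zero, mul_zero]
  · rw [orthonormal_iff_ite]
    intro i j
    rw [inner_smul_left, inner_smul_right]
    split_ifs with hij
    · rw [← hij, hwn, hss]
    · rw [inner_intervalInd_of_disjoint (hb.disjoint_right hij), mul_zero, mul_zero]
  · have := hb.hasSum_left hU i (f := intervalInd Ω (a i) (a i + ε)) (by
      filter_upwards [intervalInd_ae Ω (a i) (a i + ε)] with x hx hx'
      rw [hx, indicator_of_notMem fun h => hx' (Ioo_subset_Icc_self h)])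
    have := this.const_smul s
    convert! this using 2 with k
    have e1 : a i = b k - ε + (a i + ε - b k) := by ring
    have e2 : a i + ε = b k + (a i + ε - b k) := by ring
    have e := truncTranslate_intervalInd hb.isOpen.measurableSet (c := a i + ε - b k)
      (p := b k - ε) (q := b k) (by rw [← e1, ← e2]; exact hb.Ioo_left_subset i)
    rw [← e1, ← e2] at e
    rw [e, smul_comm]
  · have := hb.hasSum_right hU k (f := intervalInd Ω (b k - ε) (b k)) (by
      filter_upwards [intervalInd_ae Ω (b k - ε) (b k)] with x hx hx'
      rw [hx, indicator_of_notMem fun h => hx' (Ioo_subset_Icc_self h)])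
    have := (this.mapL (U ε).toContinuousLinearEquiv.toContinuousLinearMap).const_smul s
    convert! this using 2 with i
    · have e1 : b k - ε = a i + (b k - a i - ε) := by ring
      have e2 : b k = a i + ε + (b k - a i - ε) := by ring
      have e := truncTranslate_intervalInd hb.isOpen.measurableSet (c := b k - a i - ε)
        (p := a i) (q := a i + ε) (by rw [← e1, ← e2]; exact hb.Ioo_right_subset k)
      rw [← e1, ← e2] at e
      rw [e, map_smul, smul_comm]
      rfl
    · exact (hU.apply_neg ε _).symm

end IsBoundary

lemma coe_add_lt_of_lt_sub {α β : EReal} {a ε : ℝ} (ha : α = a) (h : (ε : EReal) < β - α) :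
    ((a + ε : ℝ) : EReal) < β := by
  subst ha
  induction β with
  | bot => simp at h
  | top => exact EReal.coe_lt_top _
  | coe b =>
    norm_cast at h ⊢
    linarith

lemma lt_coe_sub_of_lt_sub {α β : EReal} {b ε : ℝ} (hb : β = b) (h : (ε : EReal) < β - α) :
    α < ((b - ε : ℝ) : EReal) := by
  subst hb
  induction α with
  | bot => exact EReal.bot_lt_coe _
  | top => simp at h
  | coe b =>
    norm_cast at h ⊢
    linarith

/-- The finite endpoints of disjoint intervals longer than `ε` are the boundary of their union. -/
lemma isBoundary_iUnion {I : Type*} {α β : I → EReal} (hαtop : ∀ i, α i ≠ ⊤)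
    (hβbot : ∀ i, β i ≠ ⊥)
    (hdisj : Pairwise fun i j => Disjoint
      {x : ℝ | α i < (x : EReal) ∧ (x : EReal) < β i}
      {x : ℝ | α j < (x : EReal) ∧ (x : EReal) < β j})
    {ε : ℝ} (hε : 0 < ε) (hl : ∀ i, (ε : EReal) < β i - α i) :
    IsBoundary (⋃ i, {x : ℝ | α i < (x : EReal) ∧ (x : EReal) < β i}) ε
      (fun i : {i // α i ≠ ⊥} => (α i).toReal) (fun k : {k // β k ≠ ⊤} => (β k).toReal) := by
  have ha (i : {i // α i ≠ ⊥}) : α i = ((α i).toReal : EReal) :=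
    (EReal.coe_toReal (hαtop i) i.2).symm
  have hb (k : {k // β k ≠ ⊤}) : β k = ((β k).toReal : EReal) :=
    (EReal.coe_toReal k.2 (hβbot k)).symm
  have hleft (i : {i // α i ≠ ⊥}) : Ioc (α i).toReal ((α i).toReal + ε) ⊆
      {x : ℝ | α i < (x : EReal) ∧ (x : EReal) < β i} := fun x hx => by
    refine ⟨?_, (EReal.coe_le_coe_iff.mpr hx.2).trans_lt (coe_add_lt_of_lt_sub (ha i) (hl i))⟩
    rw [ha i]
    exact EReal.coe_lt_coe_iff.mpr hx.1
  have hright (k : {k // β k ≠ ⊤}) : Ico ((β k).toReal - ε) (β k).toReal ⊆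
      {x : ℝ | α k < (x : EReal) ∧ (x : EReal) < β k} := fun x hx => by
    refine ⟨(lt_coe_sub_of_lt_sub (hb k) (hl k)).trans_le (EReal.coe_le_coe_iff.mpr hx.1), ?_⟩
    rw [hb k]
    exact EReal.coe_lt_coe_iff.mpr hx.2
  have hconn (i : I) {x y : ℝ} (hx : α i < (x : EReal) ∧ (x : EReal) < β i)
      (hy : α i < (y : EReal) ∧ (y : EReal) < β i) :
      uIcc x y ⊆ ⋃ i, {x : ℝ | α i < (x : EReal) ∧ (x : EReal) < β i} := fun z hz => by
    refine mem_iUnion.mpr ⟨i, ?_, ?_⟩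
    · refine lt_of_lt_of_le ?_ (EReal.coe_le_coe_iff.mpr hz.1)
      rcases min_choice x y with h | h <;> rw [h]
      exacts [hx.1, hy.1]
    · refine lt_of_le_of_lt (EReal.coe_le_coe_iff.mpr hz.2) ?_
      rcases max_choice x y with h | h <;> rw [h]
      exacts [hx.2, hy.2]
  have hbig (i : I) {y : ℝ} (h : β i ≤ y) : ∃ k : {k // β k ≠ ⊤}, k.1 = i ∧ (β i).toReal ≤ y ∧
      α i < ((y - ε : ℝ) : EReal) := by
    have hk : β i ≠ ⊤ := fun ht => by simp [ht] at h
    have hle : (β i).toReal ≤ y := by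
      rw [hb ⟨i, hk⟩] at h
      exact EReal.coe_le_coe_iff.mp h
    exact ⟨⟨i, hk⟩, rfl, hle, (lt_coe_sub_of_lt_sub (hb ⟨i, hk⟩) (hl i)).trans_le
      (EReal.coe_le_coe_iff.mpr (by simpa using hle))⟩
  have hsmall (i : I) {y : ℝ} (h : (y : EReal) ≤ α i) :
      ∃ k : {k // α k ≠ ⊥}, k.1 = i ∧ y ≤ (α i).toReal := by
    have hk : α i ≠ ⊥ := fun ht => by simp [ht] at h
    refine ⟨⟨i, hk⟩, rfl, ?_⟩
    rw [ha ⟨i, hk⟩] at h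
    exact EReal.coe_le_coe_iff.mp h
  refine ⟨isOpen_iUnion fun i => ?_, hε, fun i hi => ?_, fun k hk => ?_,
    fun i => (hleft i).trans (subset_iUnion_of_subset i.1 subset_rfl),
    fun k => (hright k).trans (subset_iUnion_of_subset k.1 subset_rfl), ?_, ?_, ?_,
    fun i j hij => ?_, fun i j hij => ?_⟩
  · exact (isOpen_Ioo (a := α i) (b := β i)).preimage continuous_coe_real_ereal
  · obtain ⟨j, hj1, hj2⟩ := mem_iUnion.mp hi
    have hij : i.1 ≠ j := by
      rintro rfl
      rw [← ha i] at hj1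
      exact lt_irrefl _ hj1
    obtain ⟨x, hx1, hx2⟩ := EReal.lt_iff_exists_real_btwn.mp (lt_min hj2
      (EReal.coe_lt_coe_iff.mpr (by linarith : (α i).toReal < (α i).toReal + ε)))
    have hx3 := lt_min_iff.mp hx2
    exact disjoint_left.mp (hdisj hij)
      (hleft i ⟨EReal.coe_lt_coe_iff.mp hx1, (EReal.coe_lt_coe_iff.mp hx3.2).le⟩)
      ⟨hj1.trans hx1, hx3.1⟩
  · obtain ⟨j, hj1, hj2⟩ := mem_iUnion.mp hk
    have hkj : k.1 ≠ j := by
      rintro rfl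
      rw [← hb k] at hj2
      exact lt_irrefl _ hj2
    obtain ⟨x, hx1, hx2⟩ := EReal.lt_iff_exists_real_btwn.mp (max_lt hj1
      (EReal.coe_lt_coe_iff.mpr (by linarith : (β k).toReal - ε < (β k).toReal)))
    have hx3 := max_lt_iff.mp hx1
    exact disjoint_left.mp (hdisj hkj)
      (hright k ⟨(EReal.coe_lt_coe_iff.mp hx3.2).le, EReal.coe_lt_coe_iff.mp hx2⟩)
      ⟨hx3.1, hx2.trans hj2⟩
  · intro x hx r s hr hs hrs
    obtain ⟨i, hi⟩ := mem_iUnion.mp hx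
    by_cases h : ((x + r : ℝ) : EReal) < β i
    · exact .inl (hconn i hi ⟨hi.1.trans_le (EReal.coe_le_coe_iff.mpr (by linarith)), h⟩)
    · obtain ⟨-, -, -, h2⟩ := hbig i (not_lt.mp h)
      exact .inr (hconn i hi ⟨h2.trans_le (EReal.coe_le_coe_iff.mpr (by linarith)),
        (EReal.coe_le_coe_iff.mpr (by linarith)).trans_lt hi.2⟩)
  · intro x hx hxε
    obtain ⟨i, hi⟩ := mem_iUnion.mp hx
    by_cases h : α i < ((x - ε : ℝ) : EReal)
    · exact absurd (hconn i hi ⟨h, (EReal.coe_le_coe_iff.mpr (by linarith)).trans_lt hi.2⟩) hxε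
    · obtain ⟨k, rfl, h1⟩ := hsmall i (not_lt.mp h)
      have := hi.1
      rw [ha k, EReal.coe_lt_coe_iff] at this
      exact ⟨k, this, by linarith⟩
  · intro x hx hxε
    obtain ⟨i, hi⟩ := mem_iUnion.mp hx
    by_cases h : ((x + ε : ℝ) : EReal) < β i
    · exact absurd (hconn i hi ⟨hi.1.trans_le (EReal.coe_le_coe_iff.mpr (by linarith)), h⟩) hxε
    · obtain ⟨k, rfl, h1, -⟩ := hbig i (not_lt.mp h)
      have := hi.2
      rw [hb k, EReal.coe_lt_coe_iff] at this
      exact ⟨k, by linarith, this⟩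
  · exact (hdisj (Subtype.coe_ne_coe.mpr hij)).mono (Ioo_subset_Ioc_self.trans (hleft i))
      (Ioo_subset_Ioc_self.trans (hleft j))
  · exact (hdisj (Subtype.coe_ne_coe.mpr hij)).mono (Ioo_subset_Ico_self.trans (hright i))
      (Ioo_subset_Ico_self.trans (hright j))

end

/-- Any strongly continuous unitary group with the integrability property on a
countable union of disjoint intervals whose lengths are bounded below by `l > 0` is governed
at the endpoints by a unitary boundary matrix `B`: for `0 < ε < l`, a function supported on
`[α_i, α_i + ε]` is mapped by `U(ε)` to `Σ_k b_{i,k} T(α_i + ε - β_k) f`, and a function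
supported on `[β_k - ε, β_k]` is mapped by `U(-ε)` to `Σ_j conj(b_{j,k}) T(β_k - α_j - ε) f`. -/
theorem statement5 (I : Type) [Countable I] (α β : I → EReal)
    (hαtop : ∀ i, α i ≠ ⊤) (hβbot : ∀ i, β i ≠ ⊥)
    (hdisj : Pairwise fun i j => Disjoint
      {x : ℝ | α i < (x : EReal) ∧ (x : EReal) < β i}
      {x : ℝ | α j < (x : EReal) ∧ (x : EReal) < β j})
    (Ω : Set ℝ) (hΩ : Ω = ⋃ i, {x : ℝ | α i < (x : EReal) ∧ (x : EReal) < β i})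
    (hl : 0 < ⨅ i, (β i - α i))
    (U : ℝ → (Lp ℂ 2 (volume.restrict Ω) ≃ₗᵢ[ℂ] Lp ℂ 2 (volume.restrict Ω)))
    (hU0 : U 0 = LinearIsometryEquiv.refl ℂ (Lp ℂ 2 (volume.restrict Ω)))
    (hUadd : ∀ s t f, U (s + t) f = U s (U t f))
    (hUcont : ∀ f, Continuous fun t => U t f)
    (hInt : ∀ V : Set ℝ, IsOpen V → V ⊆ Ω → ∀ δ : ℝ, 0 < δ →
      (∀ s : ℝ, |s| < δ → (fun x => x + s) '' V ⊆ Ω) →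
      ∀ s : ℝ, |s| < δ → ∀ f, ∀ᵐ x ∂(volume.restrict V),
        (U s f : ℝ → ℂ) x = (f : ℝ → ℂ) (x + s)) :
    ∃ B : {i : I // α i ≠ ⊥} → {k : I // β k ≠ ⊤} → ℂ,
      -- `B` is the matrix of a unitary operator from `ℓ²({i : α_i > -∞})`
      -- onto `ℓ²({k : β_k < ∞})`
      (∃ W : lp (fun _ : {i : I // α i ≠ ⊥} => ℂ) 2 ≃ₗᵢ[ℂ]
          lp (fun _ : {k : I // β k ≠ ⊤} => ℂ) 2,
        ∀ x k, W x k = ∑' i : {i : I // α i ≠ ⊥}, x i * B i k) ∧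
      ∀ ε : ℝ, 0 < ε → (ε : EReal) < ⨅ i, (β i - α i) →
        -- (1) transition at a finite left endpoint `α_i`
        (∀ (i : {i : I // α i ≠ ⊥}) (f : Lp ℂ 2 (volume.restrict Ω)),
          (∀ᵐ x ∂(volume.restrict Ω),
            x ∉ Set.Icc ((α i.1).toReal) ((α i.1).toReal + ε) → (f : ℝ → ℂ) x = 0) →
          ∃ g : {k : I // β k ≠ ⊤} → Lp ℂ 2 (volume.restrict Ω),
            (∀ k, (g k : ℝ → ℂ) =ᵐ[volume.restrict Ω] {x : ℝ | x + ((α i.1).toReal + ε - (β k.1).toReal) ∈ Ω}.indicator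
                (fun x => (f : ℝ → ℂ) (x + ((α i.1).toReal + ε - (β k.1).toReal)))) ∧
            HasSum (fun k => B i k • g k) (U ε f)) ∧
        -- (2) transition at a finite right endpoint `β_k`
        (∀ (k : {k : I // β k ≠ ⊤}) (f : Lp ℂ 2 (volume.restrict Ω)),
          (∀ᵐ x ∂(volume.restrict Ω),
            x ∉ Set.Icc ((β k.1).toReal - ε) ((β k.1).toReal) → (f : ℝ → ℂ) x = 0) →
          ∃ g : {i : I // α i ≠ ⊥} → Lp ℂ 2 (volume.restrict Ω),
            (∀ j, (g j : ℝ → ℂ) =ᵐ[volume.restrict Ω] {x : ℝ | x + ((β k.1).toReal - (α j.1).toReal - ε) ∈ Ω}.indicator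
                (fun x => (f : ℝ → ℂ) (x + ((β k.1).toReal - (α j.1).toReal - ε)))) ∧
            HasSum (fun j => (starRingEnd ℂ) (B j k) • g j) (U (-ε) f)) := by
  subst hΩ
  have hb (ε : ℝ) (hε : 0 < ε) (hεl : (ε : EReal) < ⨅ i, (β i - α i)) :=
    isBoundary_iUnion hαtop hβbot hdisj hε fun i => hεl.trans_le (iInf_le _ i)
  obtain ⟨ε₀, hε₀, hε₀l⟩ := EReal.lt_iff_exists_real_btwn.mp hl
  have hb₀ := hb ε₀ (by exact_mod_cast hε₀) hε₀l
  have hU : IsTranslationGroup _ U :=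
    isTranslationGroup_of_local hb₀.isOpen (fun f => by rw [hU0]; rfl) hUadd hInt
  refine ⟨fun i k => transitionCoeff U (α i.1).toReal (β k.1).toReal,
    hb₀.exists_unitary hU, fun ε hε hεl => ⟨fun i f hf => ?_, fun k f hf => ?_⟩⟩
  · exact ⟨_, fun k => truncTranslate_ae (hb ε hε hεl).isOpen.measurableSet _ f,
      (hb ε hε hεl).hasSum_left hU i hf⟩
  · exact ⟨_, fun j => truncTranslate_ae (hb ε hε hεl).isOpen.measurableSet _ f,
      (hb ε hε hεl).hasSum_right hU k hf⟩
end

section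
/- Let Ω = ∪_{i∈I}(α_i, β_i) ⊆ ℝ be a finite or countable union of pairwise disjoint open intervals (α_i ∈ [−∞,∞), β_i ∈ (−∞,∞]) with l := inf_{i∈I}(β_i − α_i) > 0. Suppose B = (b_{i,k}), indexed by i ∈ I with α_i > −∞ and k ∈ I with β_k < ∞, is such that (x_i)_i ↦ (Σ_i x_i b_{i,k})_k defines a unitary operator from ℓ²({i : α_i > −∞}) onto ℓ²({k : β_k < ∞}). Then there exists a strongly continuous unitary group (U(t))_{t∈ℝ} on L²(Ω) with the integrability property such that for every 0 < ε < l: if α_i > −∞ and f ∈ L²(Ω) vanishes a.e. outside [α_i, α_i + ε], then U(ε)f = Σ_{k∈I, β_k<∞} b_{i,k} T(α_i + ε − β_k)f; and if β_k < ∞ and f vanishes a.e. outside [β_k − ε, β_k], then U(−ε)f = Σ_{j∈I, α_j>−∞} conj(b_{j,k}) T(β_k − α_j − ε)f. -/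
open MeasureTheory

section

open Set Filter Topology

open scoped ENNReal

/-- The Hilbert space of square-summable complex families. -/
noncomputable abbrev EllTwo (K : Type*) := lp (fun _ : K => ℂ) 2

lemma EllTwo.tsum_enorm_sq {K : Type*} (y : EllTwo K) : ∑' k, ‖y k‖ₑ ^ 2 = ‖y‖ₑ ^ 2 := by
  have h := lp.hasSum_norm (p := 2) (by norm_num) y
  simp only [ENNReal.toReal_ofNat, Real.rpow_ofNat] at h
  simp only [← ofReal_norm, ← ENNReal.ofReal_pow (norm_nonneg _)]
  rw [← ENNReal.ofReal_tsum_of_nonneg (fun _ => by positivity) h.summable, h.tsum_eq]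

lemma memℓp_two_of_tsum_enorm_sq_ne_top {K : Type*} {z : K → ℂ}
    (h : ∑' k, ‖z k‖ₑ ^ 2 ≠ ∞) : Memℓp z 2 := by
  rw [memℓp_gen_iff (by norm_num)]
  have h2 := ENNReal.summable_toReal h
  simpa using h2

lemma EllTwo.map_single_eq {K L : Type*} [DecidableEq L] (W : EllTwo L ≃ₗᵢ[ℂ] EllTwo K)
    (i : L) (c : ℂ) (k : K) : W (lp.single 2 i c) k = W (lp.single 2 i 1) k * c := by
  have : lp.single 2 i c = c • lp.single (E := fun _ : L => ℂ) 2 i 1 := by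
    rw [← lp.single_smul]; simp
  rw [this]
  simp [mul_comm]

lemma EllTwo.aemeasurable_map {K L X : Type*} [Countable L] [MeasurableSpace X]
    {μ : Measure X} (W : EllTwo L ≃ₗᵢ[ℂ] EllTwo K) {v : X → EllTwo L}
    (hv : ∀ i, AEMeasurable (fun x => v x i) μ) (k : K) :
    AEMeasurable (fun x => W (v x) k) μ := by
  classical
  have key : ∀ y : EllTwo L, HasSum (fun i => y i * W (lp.single 2 i 1) k) (W y k) := by
    intro y
    have h := lp.hasSum_single (p := 2) (by norm_num) y
    have h2 : HasSum (fun i => W (lp.single 2 i (y i)) k) (W y k) := h.mapL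
      ((lp.evalCLM ℂ (fun _ : K => ℂ) 2 k).comp
        (W.toContinuousLinearEquiv : EllTwo L →L[ℂ] EllTwo K))
    convert h2 using 1
    funext i
    rw [EllTwo.map_single_eq W i (y i), mul_comm]
  refine aemeasurable_of_tendsto_metrizable_ae (atTop : Filter (Finset L))
    (f := fun s x => ∑ i ∈ s, v x i * W (lp.single 2 i 1) k) (fun s => ?_)
    (Eventually.of_forall fun x => key (v x))
  exact Finset.aemeasurable_fun_sum _ fun i _ => (hv i).mul_const _

lemma EllTwo.symm_single_eq_conj {K L : Type*} [DecidableEq L] [DecidableEq K]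
    (W : EllTwo L ≃ₗᵢ[ℂ] EllTwo K) (i : L) (k : K) :
    W.symm (lp.single 2 k 1) i = starRingEnd ℂ (W (lp.single 2 i 1) k) := by
  have h1 := lp.inner_single_left (𝕜 := ℂ) i (1 : ℂ) (W.symm (lp.single 2 k 1))
  have h2 := lp.inner_single_right (𝕜 := ℂ) k (1 : ℂ) (W (lp.single 2 i 1))
  rw [← W.inner_map_map, W.apply_symm_apply, h2] at h1
  simpa using h1.symm

lemma lintegral_enorm_sq_eq {X : Type*} [MeasurableSpace X] (μ : Measure X) (f : X → ℂ) :
    ∫⁻ x, ‖f x‖ₑ ^ 2 ∂μ = eLpNorm f 2 μ ^ 2 := by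
  have := eLpNorm_nnreal_pow_eq_lintegral (μ := μ) (f := f) (p := 2) (by norm_num)
  simpa using this.symm

lemma tendsto_eLpNorm_indicator_zero {X ι : Type*} [MeasurableSpace X] {μ : Measure X}
    {l : Filter ι} [l.IsCountablyGenerated] {u : X → ℂ} (hu : MemLp u 2 μ) {Z : ι → Set X}
    (hZ : ∀ n, MeasurableSet (Z n)) (h : ∀ᵐ x ∂μ, ∀ᶠ n in l, x ∈ Z n → u x = 0) :
    Tendsto (fun n => eLpNorm ((Z n).indicator u) 2 μ) l (𝓝 0) := by
  have hfin : ∫⁻ x, ‖u x‖ₑ ^ 2 ∂μ ≠ ∞ := by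
    rw [lintegral_enorm_sq_eq]; exact ENNReal.pow_ne_top hu.eLpNorm_ne_top
  have h0 : Tendsto (fun n => ∫⁻ x, ‖(Z n).indicator u x‖ₑ ^ 2 ∂μ) l (𝓝 (∫⁻ x, 0 ∂μ)) := by
    refine tendsto_lintegral_filter_of_dominated_convergence' (fun x => ‖u x‖ₑ ^ 2)
      (Eventually.of_forall fun n => ?_)
      (Eventually.of_forall fun n => Eventually.of_forall fun x => ?_) hfin ?_
    · exact (hu.1.indicator (hZ n)).enorm.pow_const 2
    · by_cases hx : x ∈ Z n <;> simp [hx]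
    · filter_upwards [h] with x hx
      refine tendsto_nhds_of_eventually_eq ?_
      filter_upwards [hx] with n hn
      by_cases hxn : x ∈ Z n <;> simp [hxn]
      exact hn hxn
  simp only [lintegral_enorm_sq_eq, lintegral_zero] at h0
  have h1 := (ENNReal.continuous_rpow_const (y := (1 / 2 : ℝ))).tendsto 0 |>.comp h0
  have h2 : ∀ a : ℝ≥0∞, (a ^ 2) ^ (1 / 2 : ℝ) = a := fun a => by
    rw [← ENNReal.rpow_natCast, ← ENNReal.rpow_mul]; norm_num
  simpa only [Function.comp_def, h2, ENNReal.zero_rpow_of_pos (one_half_pos (α := ℝ))] using h1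

lemma hasSum_of_ae_eq_indicator {X K : Type*} [Countable K] [MeasurableSpace X] {μ : Measure X}
    (u : Lp ℂ 2 μ) (h : K → Lp ℂ 2 μ) {E : K → Set X} (hE : ∀ k, MeasurableSet (E k))
    (hd : Pairwise fun j k => Disjoint (E j) (E k)) (hh : ∀ k, h k =ᵐ[μ] (E k).indicator u)
    (hu : ∀ᵐ x ∂μ, (∀ k, x ∉ E k) → u x = 0) : HasSum h u := by
  rw [HasSum, SummationFilter.unconditional_filter, Lp.tendsto_Lp_iff_tendsto_eLpNorm']
  refine (tendsto_eLpNorm_indicator_zero (Lp.memLp u) (l := (atTop : Filter (Finset K)))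
    (Z := fun s => (⋃ k ∈ s, E k)ᶜ) (fun s => ?_) ?_).congr fun s => ?_
  · exact (Finset.measurableSet_biUnion _ fun k _ => hE k).compl
  · filter_upwards [hu] with x hx
    by_cases hk : ∃ k, x ∈ E k
    · obtain ⟨k, hk⟩ := hk
      filter_upwards [eventually_ge_atTop {k}] with s hs hxs
      exact absurd (mem_biUnion (x := k) (by simpa using hs) hk) hxs
    · exact Eventually.of_forall fun s _ => hx (by simpa using hk)
  · rw [← eLpNorm_neg]
    refine eLpNorm_congr_ae ?_
    have h1 : ∀ᵐ x ∂μ, ∀ k, h k x = (E k).indicator u x := ae_all_iff.2 hh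
    have h2 : ⇑(∑ k ∈ s, h k) =ᵐ[μ] ∑ k ∈ s, ⇑(h k) := by
      exact Lp.coeFn_finsetSum s h
    filter_upwards [h1, h2] with x hx1 hx2
    simp only [Pi.neg_apply, Pi.sub_apply, hx2, Finset.sum_apply, hx1]
    by_cases hk : ∃ k ∈ s, x ∈ E k
    · obtain ⟨k, hks, hk⟩ := hk
      rw [indicator_of_notMem (by simpa using ⟨k, hks, hk⟩), Finset.sum_eq_single_of_mem k hks]
      · simp [hk]
      · intro j _ hjk
        exact indicator_of_notMem (fun hj => (hd hjk).ne_of_mem hj hk rfl) _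
    · push Not at hk
      rw [indicator_of_mem (by simpa using hk), Finset.sum_eq_zero]
      · simp
      · exact fun j hj => indicator_of_notMem (hk j hj) _

lemma measurePreserving_add_right_restrict (c : ℝ) {s s' : Set ℝ} (h : ∀ x, x ∈ s ↔ x + c ∈ s') :
    MeasurePreserving (· + c) (volume.restrict s) (volume.restrict s') := by
  have : s = (· + c) ⁻¹' s' := by ext x; exact h x
  rw [this]
  exact (measurePreserving_add_right volume c).restrict_preimage_emb
    (measurableEmbedding_addRight c) s'

/-- Two decompositions of a set `X ⊆ ℝ` into a main part and countably many intervals of the same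
length, together with a translation between the main parts and a unitary matrix between the
families of intervals. -/
structure TransferData (K L : Type*) (X : Set ℝ) where
  /-- the common length of the intervals -/
  t : ℝ
  /-- the translation between the main parts -/
  τ : ℝ
  /-- the main part of the first decomposition -/
  S : Set ℝ
  /-- the main part of the second decomposition -/
  S' : Set ℝ
  /-- the left endpoints of the intervals of the first decomposition -/
  c : K → ℝ
  /-- the left endpoints of the intervals of the second decomposition -/
  a : L → ℝ
  /-- the unitary matrix -/
  W : EllTwo L ≃ₗᵢ[ℂ] EllTwo K
  measurableSet_S : MeasurableSet S
  measurableSet_S' : MeasurableSet S'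
  mem_S_iff : ∀ x, x ∈ S ↔ x + τ ∈ S'
  pairwise_c : Pairwise fun j k => Disjoint (Ico (c j) (t + c j)) (Ico (c k) (t + c k))
  disjoint_c : ∀ k, Disjoint S (Ico (c k) (t + c k))
  union_c : (S ∪ ⋃ k, Ico (c k) (t + c k)) = X
  pairwise_a : Pairwise fun i j => Disjoint (Ico (a i) (t + a i)) (Ico (a j) (t + a j))
  disjoint_a : ∀ i, Disjoint S' (Ico (a i) (t + a i))
  union_a : (S' ∪ ⋃ i, Ico (a i) (t + a i)) = X

namespace TransferData

variable {K L : Type*} {X : Set ℝ} (D : TransferData K L X) {f g : ℝ → ℂ}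

/-- The data obtained by exchanging the two decompositions. -/
noncomputable def symm : TransferData L K X where
  t := D.t
  τ := -D.τ
  S := D.S'
  S' := D.S
  c := D.a
  a := D.c
  W := D.W.symm
  measurableSet_S := D.measurableSet_S'
  measurableSet_S' := D.measurableSet_S
  mem_S_iff x := by rw [D.mem_S_iff]; simp
  pairwise_c := D.pairwise_a
  disjoint_c := D.disjoint_a
  union_c := D.union_a
  pairwise_a := D.pairwise_c
  disjoint_a := D.disjoint_c
  union_a := D.union_c

lemma symm_symm : D.symm.symm = D := by
  cases D; simp [symm]

open Classical in
/-- The values of `f` at relative position `r` in the intervals of the second decomposition. -/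
noncomputable def vec (f : ℝ → ℂ) (r : ℝ) : EllTwo L :=
  if h : Memℓp (fun i => f (r + D.a i)) 2 then ⟨_, h⟩ else 0

open Classical in
/-- Translate `f` between the main parts and apply the unitary matrix on the intervals. -/
noncomputable def transfer (f : ℝ → ℂ) (x : ℝ) : ℂ :=
  if x ∈ D.S then f (x + D.τ)
  else if h : ∃ k, x ∈ Ico (D.c k) (D.t + D.c k) then
    D.W (D.vec f (x - D.c h.choose)) h.choose
  else 0

lemma vec_apply {r : ℝ} (h : Memℓp (fun i => f (r + D.a i)) 2) (i : L) :
    D.vec f r i = f (r + D.a i) := by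
  rw [vec, dif_pos h]

lemma vec_congr {r : ℝ} {s : ℝ} {D' : TransferData K L X}
    (h : ∀ i, f (r + D.a i) = g (s + D'.a i)) : D.vec f r = D'.vec g s := by
  have h' : (fun i => f (r + D.a i)) = fun i => g (s + D'.a i) := funext h
  unfold vec
  rw [h']

lemma vec_eq {r : ℝ} {y : EllTwo L} (h : ∀ i, f (r + D.a i) = y i) : D.vec f r = y := by
  have hm : Memℓp (fun i => f (r + D.a i)) 2 := by simp only [h]; exact lp.memℓp y
  ext i
  rw [D.vec_apply hm, h]

lemma transfer_of_mem {x : ℝ} (hx : x ∈ D.S) : D.transfer f x = f (x + D.τ) := by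
  rw [transfer, if_pos hx]

lemma transfer_add_c {r : ℝ} (hr : r ∈ Ico 0 D.t) (k : K) :
    D.transfer f (r + D.c k) = D.W (D.vec f r) k := by
  have hk : r + D.c k ∈ Ico (D.c k) (D.t + D.c k) := by
    constructor <;> linarith [hr.1, hr.2]
  have hS : r + D.c k ∉ D.S := fun h => (D.disjoint_c k).ne_of_mem h hk rfl
  have hex : ∃ k', r + D.c k ∈ Ico (D.c k') (D.t + D.c k') := ⟨k, hk⟩
  have hch : hex.choose = k := by
    by_contra hne
    exact (D.pairwise_c hne).ne_of_mem hex.choose_spec hk rfl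
  rw [transfer, if_neg hS, dif_pos hex, hch, add_sub_cancel_right]

lemma measurePreserving_c (k : K) : MeasurePreserving (· + D.c k)
    (volume.restrict (Ico 0 D.t)) (volume.restrict (Ico (D.c k) (D.t + D.c k))) :=
  measurePreserving_add_right_restrict _ fun x => by simp

lemma measurePreserving_S : MeasurePreserving (· + D.τ)
    (volume.restrict D.S) (volume.restrict D.S') :=
  measurePreserving_add_right_restrict _ D.mem_S_iff

lemma subset_S : D.S ⊆ X :=
  subset_union_left.trans_eq D.union_c

lemma subset_c (k : K) : Ico (D.c k) (D.t + D.c k) ⊆ X :=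
  ((subset_iUnion (fun k => Ico (D.c k) (D.t + D.c k)) k).trans subset_union_right).trans_eq
    D.union_c

lemma measurableSet_X [Countable K] (D : TransferData K L X) : MeasurableSet X := by
  rw [← D.union_c]
  exact D.measurableSet_S.union (.iUnion fun _ => measurableSet_Ico)

lemma ae_iff [Countable K] {P : ℝ → Prop} : (∀ᵐ x ∂volume.restrict X, P x) ↔
    (∀ᵐ x ∂volume.restrict D.S, P x) ∧
      ∀ᵐ r ∂volume.restrict (Ico 0 D.t), ∀ k, P (r + D.c k) := by
  rw [show volume.restrict X = volume.restrict (D.S ∪ ⋃ k, Ico (D.c k) (D.t + D.c k)) by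
    rw [D.union_c], ae_restrict_union_iff, ae_restrict_iUnion_iff, ae_all_iff]
  refine and_congr_right fun _ => forall_congr' fun k => ?_
  rw [← (D.measurePreserving_c k).map_eq, (measurableEmbedding_addRight _).ae_map_iff]

lemma lintegral_eq [Countable K] {F : ℝ → ℝ≥0∞} (hF : AEMeasurable F (volume.restrict X)) :
    ∫⁻ x in X, F x = (∫⁻ x in D.S, F x) + ∫⁻ r in Ico 0 D.t, ∑' k, F (r + D.c k) := by
  have hm : ∀ k, AEMeasurable (fun r => F (r + D.c k)) (volume.restrict (Ico 0 D.t)) := by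
    intro k
    refine AEMeasurable.comp_quasiMeasurePreserving (hF.mono_measure ?_)
      (D.measurePreserving_c k).quasiMeasurePreserving
    exact Measure.restrict_mono (D.subset_c k) le_rfl
  rw [lintegral_tsum hm]
  conv_lhs => rw [← D.union_c]
  rw [lintegral_union (.iUnion fun _ => measurableSet_Ico)
    (disjoint_iUnion_right.2 D.disjoint_c), lintegral_iUnion (fun _ => measurableSet_Ico)
    D.pairwise_c]
  congr 2
  funext k
  exact ((D.measurePreserving_c k).lintegral_comp_emb (measurableEmbedding_addRight _) F).symm

lemma ae_memℓp [Countable L] (hf : MemLp f 2 (volume.restrict X)) :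
    ∀ᵐ r ∂volume.restrict (Ico 0 D.t), Memℓp (fun i => f (r + D.a i)) 2 := by
  have hm : AEMeasurable (fun x => ‖f x‖ₑ ^ 2) (volume.restrict X) := hf.1.enorm.pow_const 2
  have h := D.symm.lintegral_eq hm
  have hfin : ∫⁻ x in X, ‖f x‖ₑ ^ 2 ≠ ∞ := by
    rw [lintegral_enorm_sq_eq]; exact ENNReal.pow_ne_top hf.eLpNorm_ne_top
  rw [h] at hfin
  have h2 := (ENNReal.add_ne_top.1 hfin).2
  have hm' : AEMeasurable (fun r => ∑' i, ‖f (r + D.a i)‖ₑ ^ 2)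
      (volume.restrict (Ico 0 D.t)) := by
    refine AEMeasurable.tsum (f := fun i r => ‖f (r + D.a i)‖ₑ ^ 2) fun i => ?_
    refine AEMeasurable.comp_quasiMeasurePreserving (g := fun x => ‖f x‖ₑ ^ 2) (hm.mono_measure ?_)
      (D.symm.measurePreserving_c i).quasiMeasurePreserving
    exact Measure.restrict_mono (D.symm.subset_c i) le_rfl
  filter_upwards [ae_lt_top' hm' h2] with r hr
  exact memℓp_two_of_tsum_enorm_sq_ne_top hr.ne

lemma ae_vec_apply [Countable L] (hf : MemLp f 2 (volume.restrict X)) :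
    ∀ᵐ r ∂volume.restrict (Ico 0 D.t), ∀ i, D.vec f r i = f (r + D.a i) := by
  filter_upwards [D.ae_memℓp hf] with r hr using D.vec_apply hr

lemma symm_transfer [Countable L] (hf : MemLp f 2 (volume.restrict X)) :
    D.symm.transfer (D.transfer f) =ᵐ[volume.restrict X] f := by
  refine D.symm.ae_iff.2 ⟨?_, ?_⟩
  · filter_upwards [ae_restrict_mem D.symm.measurableSet_S] with x hxS
    rw [D.symm.transfer_of_mem hxS, D.transfer_of_mem ((D.symm.mem_S_iff x).1 hxS)]
    simp [symm]
  · filter_upwards [D.ae_vec_apply hf, ae_restrict_mem measurableSet_Ico] with r hr hrt i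
    rw [D.symm.transfer_add_c hrt, D.symm.vec_eq (y := D.W (D.vec f r))
      fun k => D.transfer_add_c hrt k]
    exact (congrArg (fun y : EllTwo L => y i) (D.W.symm_apply_apply _)).trans (hr i)

variable [Countable K] [Countable L]

lemma transfer_congr (h : f =ᵐ[volume.restrict X] g) :
    D.transfer f =ᵐ[volume.restrict X] D.transfer g := by
  obtain ⟨h1, h2⟩ := D.symm.ae_iff.1 h
  refine D.ae_iff.2 ⟨?_, ?_⟩
  · filter_upwards [D.measurePreserving_S.quasiMeasurePreserving.ae h1,
      ae_restrict_mem D.measurableSet_S] with x hx hxS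
    rw [D.transfer_of_mem hxS, D.transfer_of_mem hxS, hx]
  · filter_upwards [h2, ae_restrict_mem measurableSet_Ico] with r hr hrt k
    rw [D.transfer_add_c hrt, D.transfer_add_c hrt, D.vec_congr hr]

lemma transfer_add (hf : MemLp f 2 (volume.restrict X)) (hg : MemLp g 2 (volume.restrict X)) :
    D.transfer (f + g) =ᵐ[volume.restrict X] D.transfer f + D.transfer g := by
  refine D.ae_iff.2 ⟨?_, ?_⟩
  · filter_upwards [ae_restrict_mem D.measurableSet_S] with x hxS
    simp [D.transfer_of_mem hxS]
  · filter_upwards [D.ae_vec_apply hf, D.ae_vec_apply hg, ae_restrict_mem measurableSet_Ico]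
      with r hr1 hr2 hrt k
    have : D.vec (f + g) r = D.vec f r + D.vec g r := D.vec_eq fun i => by simp [hr1, hr2]
    simp [D.transfer_add_c hrt, this]

lemma transfer_smul (z : ℂ) (hf : MemLp f 2 (volume.restrict X)) :
    D.transfer (z • f) =ᵐ[volume.restrict X] z • D.transfer f := by
  refine D.ae_iff.2 ⟨?_, ?_⟩
  · filter_upwards [ae_restrict_mem D.measurableSet_S] with x hxS
    simp [D.transfer_of_mem hxS]
  · filter_upwards [D.ae_vec_apply hf, ae_restrict_mem measurableSet_Ico] with r hr hrt k
    have : D.vec (z • f) r = z • D.vec f r := D.vec_eq fun i => by simp [hr]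
    simp [D.transfer_add_c hrt, this]

lemma aestronglyMeasurable_transfer (hf : MemLp f 2 (volume.restrict X)) :
    AEStronglyMeasurable (D.transfer f) (volume.restrict X) := by
  rw [show volume.restrict X = volume.restrict (D.S ∪ ⋃ k, Ico (D.c k) (D.t + D.c k)) by
    rw [D.union_c], aestronglyMeasurable_union_iff, aestronglyMeasurable_iUnion_iff]
  have hS' : volume.restrict D.S' ≤ volume.restrict X :=
    Measure.restrict_mono D.symm.subset_S le_rfl
  have ha : ∀ i, volume.restrict (Ico (D.a i) (D.t + D.a i)) ≤ volume.restrict X := fun i =>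
    Measure.restrict_mono (D.symm.subset_c i) le_rfl
  refine ⟨?_, fun k => ?_⟩
  · refine ((hf.1.mono_measure hS').comp_measurePreserving D.measurePreserving_S).congr ?_
    filter_upwards [ae_restrict_mem D.measurableSet_S] with x hxS
    rw [D.transfer_of_mem hxS]; rfl
  · rw [← (D.measurePreserving_c k).map_eq,
      (measurableEmbedding_addRight _).aestronglyMeasurable_map_iff]
    have hv : ∀ i, AEMeasurable (fun r => D.vec f r i) (volume.restrict (Ico 0 D.t)) := by
      intro i
      refine AEMeasurable.congr ((hf.1.mono_measure (ha i)).comp_measurePreserving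
        (D.symm.measurePreserving_c i)).aemeasurable ?_
      filter_upwards [D.ae_vec_apply hf] with r hr
      exact (hr i).symm
    refine (EllTwo.aemeasurable_map D.W hv k).aestronglyMeasurable.congr ?_
    filter_upwards [ae_restrict_mem measurableSet_Ico] with r hr
    exact (D.transfer_add_c hr k).symm

lemma eLpNorm_transfer (hf : MemLp f 2 (volume.restrict X)) :
    eLpNorm (D.transfer f) 2 (volume.restrict X) = eLpNorm f 2 (volume.restrict X) := by
  refine (ENNReal.pow_right_strictMono two_ne_zero).injective ?_
  simp only [← lintegral_enorm_sq_eq]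
  rw [D.lintegral_eq ((D.aestronglyMeasurable_transfer hf).enorm.pow_const 2),
    D.symm.lintegral_eq (hf.1.enorm.pow_const 2)]
  congr 1
  · refine Eq.trans ?_ (D.measurePreserving_S.lintegral_comp_emb (measurableEmbedding_addRight _)
      fun x => ‖f x‖ₑ ^ 2)
    refine setLIntegral_congr_fun D.measurableSet_S fun x hx => ?_
    simp only [D.transfer_of_mem hx]
  · refine lintegral_congr_ae ?_
    filter_upwards [D.ae_vec_apply hf, ae_restrict_mem measurableSet_Ico] with r hr hrt
    have h1 : ∀ k, D.transfer f (r + D.c k) = D.W (D.vec f r) k := D.transfer_add_c hrt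
    simp only [h1, EllTwo.tsum_enorm_sq]
    rw [LinearIsometryEquiv.enorm_map, ← EllTwo.tsum_enorm_sq]
    simp only [hr]; rfl

lemma memLp_transfer (hf : MemLp f 2 (volume.restrict X)) :
    MemLp (D.transfer f) 2 (volume.restrict X) :=
  ⟨D.aestronglyMeasurable_transfer hf, by rw [D.eLpNorm_transfer hf]; exact hf.2⟩

/-- The transfer map on square-integrable functions. -/
noncomputable def transferLp (f : Lp ℂ 2 (volume.restrict X)) : Lp ℂ 2 (volume.restrict X) :=
  (D.memLp_transfer (Lp.memLp f)).toLp

lemma coeFn_transferLp (f : Lp ℂ 2 (volume.restrict X)) :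
    D.transferLp f =ᵐ[volume.restrict X] D.transfer f :=
  MemLp.coeFn_toLp _

lemma symm_transferLp (f : Lp ℂ 2 (volume.restrict X)) : D.symm.transferLp (D.transferLp f) = f :=
  Lp.ext <| (D.symm.coeFn_transferLp _).trans <|
    (D.symm.transfer_congr (D.coeFn_transferLp f)).trans (D.symm_transfer (Lp.memLp f))

/-- The transfer map as a unitary operator. -/
noncomputable def equiv : Lp ℂ 2 (volume.restrict X) ≃ₗᵢ[ℂ] Lp ℂ 2 (volume.restrict X) where
  toFun := D.transferLp
  invFun := D.symm.transferLp
  left_inv := D.symm_transferLp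
  right_inv f := by
    have := D.symm.symm_transferLp f
    rwa [symm_symm] at this
  map_add' f g := by
    refine Lp.ext ?_
    refine (D.coeFn_transferLp _).trans ((D.transfer_congr (Lp.coeFn_add f g)).trans ?_)
    refine (D.transfer_add (Lp.memLp f) (Lp.memLp g)).trans ?_
    exact ((D.coeFn_transferLp f).add (D.coeFn_transferLp g)).symm.trans (Lp.coeFn_add _ _).symm
  map_smul' z f := by
    refine Lp.ext ?_
    refine (D.coeFn_transferLp _).trans ((D.transfer_congr (Lp.coeFn_smul z f)).trans ?_)
    refine (D.transfer_smul z (Lp.memLp f)).trans ?_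
    exact ((D.coeFn_transferLp f).const_smul z).symm.trans (Lp.coeFn_smul _ _).symm
  norm_map' f := by
    change ‖D.transferLp f‖ = ‖f‖
    rw [Lp.norm_def, Lp.norm_def, eLpNorm_congr_ae (D.coeFn_transferLp f),
      D.eLpNorm_transfer (Lp.memLp f)]

lemma coeFn_equiv (f : Lp ℂ 2 (volume.restrict X)) :
    D.equiv f =ᵐ[volume.restrict X] D.transfer f :=
  D.coeFn_transferLp f

lemma memLp_indicator_shift {Ω : Set ℝ} (hX : MeasurableSet X) (hΩ : Ω =ᵐ[volume] X)
    (f : Lp ℂ 2 (volume.restrict X)) (s : ℝ) :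
    MemLp ({x | x + s ∈ Ω}.indicator fun x => f (x + s)) 2 (volume.restrict X) ∧
      ({x | x + s ∈ Ω}.indicator fun x => f (x + s)) =ᵐ[volume] fun x => X.indicator f (x + s) := by
  have h : ({x | x + s ∈ Ω}.indicator fun x => f (x + s)) =ᵐ[volume]
      fun x => X.indicator f (x + s) := by
    filter_upwards [(measurePreserving_add_right volume s).quasiMeasurePreserving.ae
      hΩ.mem_iff] with x hx
    by_cases hxX : x + s ∈ X <;> simp [indicator, hxX, hx]
  refine ⟨?_, h⟩
  have h1 : MemLp (X.indicator f) 2 volume :=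
    (memLp_indicator_iff_restrict hX).2 (Lp.memLp f)
  exact ((memLp_congr_ae h).2
    (h1.comp_measurePreserving (measurePreserving_add_right volume s))).restrict X

lemma hasSum_equiv_of_support [DecidableEq L] {Ω : Set ℝ} (hΩ : Ω =ᵐ[volume] X) (i : L)
    (f : Lp ℂ 2 (volume.restrict X))
    (hf : ∀ᵐ x ∂volume.restrict X, x ∉ Ico (D.a i) (D.t + D.a i) → f x = 0) :
    ∃ g : K → Lp ℂ 2 (volume.restrict X),
      (∀ k, g k =ᵐ[volume.restrict X] {x | x + (D.a i - D.c k) ∈ Ω}.indicator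
        fun x => f (x + (D.a i - D.c k))) ∧
      HasSum (fun k => D.W (lp.single 2 i 1) k • g k) (D.equiv f) := by
  have hX := D.measurableSet_X
  refine ⟨fun k => (memLp_indicator_shift hX hΩ f (D.a i - D.c k)).1.toLp, fun k =>
    MemLp.coeFn_toLp _, ?_⟩
  obtain ⟨hfS, hfa⟩ := D.symm.ae_iff.1 hf
  have hzero : ∀ᵐ x ∂volume.restrict X, (∀ k, x ∉ Ico (D.c k) (D.t + D.c k)) →
      D.transfer f x = 0 := by
    refine D.ae_iff.2 ⟨?_, ?_⟩
    · filter_upwards [D.measurePreserving_S.quasiMeasurePreserving.ae hfS,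
        ae_restrict_mem D.measurableSet_S] with x hx hxS _
      rw [D.transfer_of_mem hxS]
      exact hx fun h => (D.disjoint_a i).ne_of_mem ((D.mem_S_iff x).1 hxS) h rfl
    · filter_upwards [ae_restrict_mem measurableSet_Ico] with r hr k hk
      exact absurd ⟨by linarith [hr.1], by linarith [hr.2]⟩ (hk k)
  have hmain : ∀ᵐ x ∂volume.restrict X, ∀ k, x ∈ Ico (D.c k) (D.t + D.c k) →
      D.transfer f x = D.W (lp.single 2 i 1) k * X.indicator f (x + (D.a i - D.c k)) := by
    refine D.ae_iff.2 ⟨?_, ?_⟩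
    · filter_upwards [ae_restrict_mem D.measurableSet_S] with x hxS k hk
      exact absurd rfl ((D.disjoint_c k).ne_of_mem hxS hk)
    · filter_upwards [ae_restrict_mem measurableSet_Ico, hfa] with r hr hr0 j k hk
      have hmem : ∀ i, r + D.a i ∈ Ico (D.a i) (D.t + D.a i) := fun i =>
        ⟨by linarith [hr.1], by linarith [hr.2]⟩
      obtain rfl : k = j := by
        by_contra hne
        exact (D.pairwise_c hne).ne_of_mem hk ⟨by linarith [hr.1], by linarith [hr.2]⟩ rfl
      have hv : D.vec f r = lp.single 2 i (f (r + D.a i)) := by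
        refine D.vec_eq fun i' => ?_
        by_cases h : i' = i
        · subst h; simp
        · rw [lp.single_apply, Pi.single_eq_of_ne h]
          exact hr0 i' fun h' => (D.pairwise_a h).ne_of_mem (hmem i') h' rfl
      rw [D.transfer_add_c hr, hv, EllTwo.map_single_eq, add_add_sub_cancel,
        indicator_of_mem (D.symm.subset_c i (hmem i))]
  have hout : ∀ᵐ x ∂volume.restrict X, ∀ k, x ∉ Ico (D.c k) (D.t + D.c k) →
      X.indicator f (x + (D.a i - D.c k)) = 0 := by
    refine ae_restrict_of_ae (ae_all_iff.2 fun k => ?_)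
    filter_upwards [(measurePreserving_add_right volume (D.a i - D.c k)).quasiMeasurePreserving.ae
      ((ae_restrict_iff' hX).1 hf)] with x hx hxk
    by_cases hxX : x + (D.a i - D.c k) ∈ X
    · rw [indicator_of_mem hxX]
      refine hx hxX fun h => hxk ⟨by linarith [h.1], by linarith [h.2]⟩
    · exact indicator_of_notMem hxX _
  refine hasSum_of_ae_eq_indicator _ _ (E := fun k => Ico (D.c k) (D.t + D.c k))
    (fun _ => measurableSet_Ico) D.pairwise_c (fun k => ?_) ?_
  · filter_upwards [hmain, hout, D.coeFn_equiv f, Lp.coeFn_smul (D.W (lp.single 2 i 1) k)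
      (memLp_indicator_shift hX hΩ f (D.a i - D.c k)).1.toLp,
      (memLp_indicator_shift hX hΩ f (D.a i - D.c k)).1.coeFn_toLp,
      ae_restrict_of_ae (memLp_indicator_shift hX hΩ f (D.a i - D.c k)).2]
      with x h1 h2 h3 h4 h5 h6
    rw [h4, Pi.smul_apply, h5, h6, smul_eq_mul]
    by_cases hx : x ∈ Ico (D.c k) (D.t + D.c k)
    · rw [indicator_of_mem hx, h3, h1 k hx]
    · rw [indicator_of_notMem hx, h2 k hx, mul_zero]
  · filter_upwards [hzero, D.coeFn_equiv f] with x h1 h2 hx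
    rw [h2, h1 hx]

end TransferData

namespace TransferData

variable {K L : Type*} {X : Set ℝ} [Countable K] [Countable L] (D : TransferData K L X)

lemma enorm_equiv_sub_le {t : ℝ} {Z : Set ℝ} (hX : MeasurableSet X) (hZ : MeasurableSet Z)
    (f : Lp ℂ 2 (volume.restrict X))
    (hpt : ∀ x ∈ X, D.transfer (f - Z.indicator f) x =
      X.indicator f (x + t) - X.indicator (Z.indicator f) (x + t)) :
    ‖D.equiv f - f‖ₑ ≤
      2 * eLpNorm (Z.indicator f) 2 (volume.restrict X) +
        eLpNorm (fun x => X.indicator f (x + t) - X.indicator f x) 2 volume := by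
  obtain ⟨z, hz⟩ : ∃ z, z = Z.indicator f := ⟨_, rfl⟩
  have hzL : MemLp z 2 (volume.restrict X) := hz ▸ (Lp.memLp f).indicator hZ
  rw [← hz] at hpt ⊢
  have hfL : MemLp (X.indicator f) 2 volume := (memLp_indicator_iff_restrict hX).2 (Lp.memLp f)
  have hzL' : MemLp (X.indicator z) 2 volume := (memLp_indicator_iff_restrict hX).2 hzL
  have htr := measurePreserving_add_right volume t
  have hsub : D.transfer f =ᵐ[volume.restrict X] D.transfer (f - z) + D.transfer z := by
    have h1 := D.transfer_add ((Lp.memLp f).sub hzL) hzL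
    rwa [sub_add_cancel] at h1
  have hdec : ⇑(D.equiv f - f) =ᵐ[volume.restrict X]
      D.transfer z + ((fun x => -X.indicator z (x + t)) +
        fun x => X.indicator f (x + t) - X.indicator f x) := by
    filter_upwards [Lp.coeFn_sub (D.equiv f) f, D.coeFn_equiv f, hsub, ae_restrict_mem hX]
      with x h1 h2 h3 hx
    rw [h1, Pi.sub_apply, h2, h3, Pi.add_apply, hpt x hx, Pi.add_apply, Pi.add_apply,
      indicator_of_mem hx f]
    ring
  have hm1 : AEStronglyMeasurable (fun x => -X.indicator z (x + t)) volume :=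
    (hzL'.1.comp_measurePreserving htr).neg
  have hm2 : AEStronglyMeasurable (fun x => X.indicator f (x + t) - X.indicator f x) volume :=
    (hfL.1.comp_measurePreserving htr).sub hfL.1
  have hn1 : eLpNorm (fun x => -X.indicator z (x + t)) 2 (volume.restrict X) ≤
      eLpNorm z 2 (volume.restrict X) := by
    have h1 := eLpNorm_comp_measurePreserving (p := 2) hzL'.1 htr
    have h2 := eLpNorm_neg (X.indicator z ∘ (· + t)) 2 volume
    rw [h1, eLpNorm_indicator_eq_eLpNorm_restrict hX] at h2
    exact (eLpNorm_mono_measure _ Measure.restrict_le_self).trans h2.le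
  rw [Lp.enorm_def, eLpNorm_congr_ae hdec, two_mul, add_assoc]
  refine (eLpNorm_add_le (D.memLp_transfer hzL).1 (hm1.restrict.add hm2.restrict)
    (by norm_num)).trans ?_
  refine add_le_add (D.eLpNorm_transfer hzL).le ?_
  refine (eLpNorm_add_le hm1.restrict hm2.restrict (by norm_num)).trans ?_
  exact add_le_add hn1 (eLpNorm_mono_measure _ Measure.restrict_le_self)

end TransferData

/-- A local one-parameter semigroup in a group extends to a one-parameter group. -/
lemma exists_extension_of_local_semigroup {G : Type*} [Group G] {P : ℝ → Prop} {u : ℝ → G}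
    (hP : ∀ s t, 0 ≤ s → s ≤ t → P t → P s)
    (hu : ∀ s t, 0 ≤ s → 0 ≤ t → P (s + t) → u (s + t) = u s * u t)
    {h : ℝ} (hh : 0 < h) (hPh : P (2 * h)) :
    ∃ U : ℝ → G, (∀ s t, U (s + t) = U s * U t) ∧ ∀ t, 0 ≤ t → P t → U t = u t := by
  have hcomm : ∀ s t, 0 ≤ s → 0 ≤ t → P (s + t) → Commute (u s) (u t) := fun s t hs ht hst => by
    rw [Commute, SemiconjBy, ← hu s t hs ht hst, add_comm, hu t s ht hs (by rwa [add_comm])]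
  set U : ℝ → G := fun t => u h ^ ⌊t / h⌋ * u (Int.fract (t / h) * h) with hUdef
  have hfr0 : ∀ t : ℝ, 0 ≤ Int.fract (t / h) * h := fun t =>
    mul_nonneg (Int.fract_nonneg _) hh.le
  have hfr1 : ∀ t : ℝ, Int.fract (t / h) * h < h := fun t => by
    nlinarith [Int.fract_lt_one (t / h)]
  have hch : ∀ t (n : ℤ), Commute (u h ^ n) (u (Int.fract (t / h) * h)) := fun t n =>
    (hcomm _ _ hh.le (hfr0 t) (hP _ _ (by linarith [hfr0 t]) (by linarith [hfr1 t]) hPh)).zpow_left n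
  have hmul : ∀ s t, U (s + t) = U s * U t := by
    intro s t
    have e1 : U s * U t = u h ^ (⌊s / h⌋ + ⌊t / h⌋) *
        u (Int.fract (s / h) * h + Int.fract (t / h) * h) := by
      rw [hu _ _ (hfr0 s) (hfr0 t) (hP _ _ (add_nonneg (hfr0 s) (hfr0 t))
        (by linarith [hfr1 s, hfr1 t]) hPh), zpow_add]
      simp only [hUdef]
      rw [mul_assoc, ← mul_assoc (u (Int.fract (s / h) * h)), ← (hch s _).eq]
      simp only [mul_assoc]
    rw [e1]
    simp only [hUdef]
    have hd : (s + t) / h = s / h + t / h := add_div _ _ _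
    rcases lt_or_ge (Int.fract (s / h) + Int.fract (t / h)) 1 with hlt | hge
    · have hf : ⌊(s + t) / h⌋ = ⌊s / h⌋ + ⌊t / h⌋ := by
        rw [hd, Int.floor_eq_iff]
        push_cast
        constructor <;> linarith [Int.floor_add_fract (s / h), Int.floor_add_fract (t / h),
          Int.fract_nonneg (s / h), Int.fract_nonneg (t / h)]
      have hfr : Int.fract ((s + t) / h) = Int.fract (s / h) + Int.fract (t / h) := by
        simp only [Int.fract, hf]; rw [hd]; push_cast; ring
      rw [hf, hfr, add_mul]
    · have hf : ⌊(s + t) / h⌋ = ⌊s / h⌋ + ⌊t / h⌋ + 1 := by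
        rw [hd, Int.floor_eq_iff]
        push_cast
        constructor <;> linarith [Int.floor_add_fract (s / h), Int.floor_add_fract (t / h),
          Int.fract_lt_one (s / h), Int.fract_lt_one (t / h)]
      have hfr : Int.fract ((s + t) / h) = Int.fract (s / h) + Int.fract (t / h) - 1 := by
        simp only [Int.fract, hf]; rw [hd]; push_cast; ring
      have h1 : Int.fract (s / h) * h + Int.fract (t / h) * h =
          h + (Int.fract (s / h) + Int.fract (t / h) - 1) * h := by ring
      rw [hf, hfr, h1, hu h _ hh.le (by nlinarith) (hP _ _ (by nlinarith)
        (by linarith [hfr1 s, hfr1 t]) hPh), zpow_add_one, mul_assoc]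
  refine ⟨U, hmul, ?_⟩
  have hsmall : ∀ t, 0 ≤ t → t < h → U t = u t := by
    intro t ht hth
    have h0 : ⌊t / h⌋ = 0 := Int.floor_eq_iff.2 ⟨by simpa using by positivity, by
      simpa using (div_lt_one hh).2 hth⟩
    simp only [hUdef]
    rw [h0, Int.fract, h0]
    simp [div_mul_cancel₀ _ hh.ne']
  have hUh : U h = u h := by
    have h2 := hmul (h / 2) (h / 2)
    rw [hsmall (h / 2) (by linarith) (by linarith), ← hu _ _ (by linarith) (by linarith)
      (hP _ _ (by linarith) (by linarith) hPh)] at h2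
    simpa using h2
  have hind : ∀ n : ℕ, ∀ t, 0 ≤ t → t < n * h → P t → U t = u t := by
    intro n
    induction n with
    | zero => intro t ht htn; simp at htn; linarith
    | succ n ih =>
      intro t ht htn hPt
      rcases lt_or_ge t h with hlt | hge
      · exact hsmall t ht hlt
      · have e : t = h + (t - h) := by ring
        push_cast at htn
        rw [e, hmul, hUh, ih (t - h) (by linarith) (by linarith)
          (hP _ _ (by linarith) (by linarith) hPt), hu _ _ hh.le (by linarith) (by rwa [← e])]
  intro t ht hPt
  obtain ⟨n, hn⟩ := exists_nat_gt (t / h)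
  exact hind n t ht ((div_lt_iff₀ hh).1 hn) hPt

lemma tendsto_eLpNorm_translate_sub {F : ℝ → ℂ} (hF : MemLp F 2 volume) :
    Tendsto (fun t => eLpNorm (fun x => F (x + t) - F x) 2 volume) (𝓝 (0 : ℝ)) (𝓝 0) := by
  have : Fact ((2 : ℝ≥0∞) ≠ ∞) := ⟨by norm_num⟩
  have hc : Continuous fun t : ℝ => (DomAddAct.mk t : ℝᵈᵃᵃ) +ᵥ hF.toLp :=
    DomAddAct.continuous_mk.vadd continuous_const
  have h0 := hc.tendsto 0
  rw [DomAddAct.mk_zero, zero_vadd, Lp.tendsto_Lp_iff_tendsto_eLpNorm'] at h0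
  refine h0.congr fun t => eLpNorm_congr_ae ?_
  filter_upwards [DomAddAct.vadd_Lp_ae_eq (DomAddAct.mk t) hF.toLp, hF.coeFn_toLp,
    (measurePreserving_add_left volume t).quasiMeasurePreserving.ae hF.coeFn_toLp] with x h1 h2 h3
  rw [Pi.sub_apply, h1, h2]
  simp only [Equiv.symm_apply_apply, vadd_eq_add] at h3 ⊢
  rw [h3, add_comm]

/-- A family of pairwise disjoint half-open intervals `[a k, b k)`, where the left endpoint is
finite if `p k` holds and the right endpoint is finite if `q k` holds. -/
structure IntervalFamily (I : Type*) where
  /-- whether the left endpoint is finite -/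
  p : I → Prop
  /-- whether the right endpoint is finite -/
  q : I → Prop
  /-- the left endpoint -/
  a : I → ℝ
  /-- the right endpoint -/
  b : I → ℝ
  pairwise_disjoint : Pairwise fun j k =>
    Disjoint {x | (p j → a j ≤ x) ∧ (q j → x < b j)} {x | (p k → a k ≤ x) ∧ (q k → x < b k)}

namespace IntervalFamily

variable {I : Type*} (F : IntervalFamily I) {f : ℝ → ℂ} {s t x : ℝ} {k : I}

/-- The `k`-th interval. -/
def J (k : I) : Set ℝ := {x | (F.p k → F.a k ≤ x) ∧ (F.q k → x < F.b k)}

/-- The union of the intervals. -/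
def X : Set ℝ := ⋃ k, F.J k

/-- `t` is nonnegative and less than the length of every interval. -/
def Short (t : ℝ) : Prop := 0 ≤ t ∧ ∀ k, F.p k → F.q k → t < F.b k - F.a k

variable {F}

lemma Short.mono (hs : 0 ≤ s) (hst : s ≤ t) (ht : F.Short t) : F.Short s :=
  ⟨hs, fun k hp hq => hst.trans_lt (ht.2 k hp hq)⟩

lemma eq_of_mem {j k : I} (hj : x ∈ F.J j) (hk : x ∈ F.J k) : j = k := by
  by_contra h
  exact (F.pairwise_disjoint h).ne_of_mem hj hk rfl

lemma measurableSet_J (k : I) : MeasurableSet (F.J k) := by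
  have h : F.J k = {x | F.p k → F.a k ≤ x} ∩ {x | F.q k → x < F.b k} := rfl
  rw [h]
  refine MeasurableSet.inter ?_ ?_
  · by_cases hp : F.p k
    · rw [show {x | F.p k → F.a k ≤ x} = Ici (F.a k) by ext; simp [hp]]
      exact measurableSet_Ici
    · rw [show {x | F.p k → F.a k ≤ x} = univ by ext; simp [hp]]
      exact .univ
  · by_cases hq : F.q k
    · rw [show {x | F.q k → x < F.b k} = Iio (F.b k) by ext; simp [hq]]
      exact measurableSet_Iio
    · rw [show {x | F.q k → x < F.b k} = univ by ext; simp [hq]]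
      exact .univ

lemma exists_right_of_notMem (ht : 0 ≤ t) (hx : x ∈ F.J k) (h : x + t ∉ F.J k) :
    F.q k ∧ F.b k ≤ x + t ∧ x < F.b k := by
  have h1 : ¬(F.q k → x + t < F.b k) := fun hq => h ⟨fun hp => by linarith [hx.1 hp], hq⟩
  push Not at h1
  exact ⟨h1.1, h1.2, hx.2 h1.1⟩

lemma exists_left_of_notMem (ht : 0 ≤ t) (hx : x ∈ F.J k) (h : x - t ∉ F.J k) :
    F.p k ∧ x - t < F.a k ∧ F.a k ≤ x := by
  have h1 : ¬(F.p k → F.a k ≤ x - t) := fun hp => h ⟨hp, fun hq => by linarith [hx.2 hq]⟩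
  push Not at h1
  exact ⟨h1.1, h1.2, hx.1 h1.1⟩

lemma Short.mem_left (ht : F.Short t) (hp : F.p k) (h1 : F.a k ≤ x) (h2 : x ≤ t + F.a k) :
    x ∈ F.J k :=
  ⟨fun _ => h1, fun hq => by linarith [ht.2 k hp hq]⟩

lemma Short.mem_right (ht : F.Short t) (hq : F.q k) (h1 : F.b k - t ≤ x) (h2 : x < F.b k) :
    x ∈ F.J k :=
  ⟨fun hp => by linarith [ht.2 k hp hq], fun _ => h2⟩

variable (F) in
/-- The points at distance less than `t` to the right of a left endpoint. -/
def leftCollar (t : ℝ) : Set ℝ := ⋃ i : {i // F.p i}, Ico (F.a i) (t + F.a i)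

lemma mem_leftCollar_of_right (ht : F.Short t) {r : ℝ} (h0 : 0 ≤ r) (hrt : r < t) (hq : F.q k)
    (h : r + F.b k ∈ F.X) : r + F.b k ∈ F.leftCollar t := by
  obtain ⟨m, hm⟩ := mem_iUnion.1 h
  have hne : m ≠ k := by
    rintro rfl
    linarith [hm.2 hq]
  have key : F.p m ∧ F.b k ≤ F.a m := by
    by_contra hcon
    push Not at hcon
    refine hne ?_
    by_cases hp : F.p m
    · have hlt := hcon hp
      refine eq_of_mem (x := max (F.b k - t) (F.a m)) ⟨fun _ => le_max_right _ _, fun hqm => ?_⟩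
        (ht.mem_right hq (le_max_left _ _) (max_lt (by linarith) hlt))
      exact (max_lt (by linarith) hlt : _ < F.b k).trans_le (by linarith [hm.2 hqm])
    · exact eq_of_mem (x := F.b k - t) ⟨fun h => absurd h hp, fun hqm => by linarith [hm.2 hqm]⟩
        (ht.mem_right hq le_rfl (by linarith))
  exact mem_iUnion.2 ⟨⟨m, key.1⟩, hm.1 key.1, by simp; linarith [key.2]⟩

variable [Countable I]

variable (F) in
lemma measurableSet_X : MeasurableSet F.X := .iUnion measurableSet_J

/-- The transfer data describing translation by `t`, with boundary transitions given by `W`. -/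
noncomputable def shiftData (W : EllTwo {i // F.p i} ≃ₗᵢ[ℂ] EllTwo {k // F.q k}) (ht : F.Short t) :
    TransferData {k // F.q k} {i // F.p i} F.X where
  t := t
  τ := t
  S := {x | ∃ k, x ∈ F.J k ∧ x + t ∈ F.J k}
  S' := {x | ∃ k, x ∈ F.J k ∧ x - t ∈ F.J k}
  c k := F.b k - t
  a i := F.a i
  W := W
  measurableSet_S := by
    rw [show {x | ∃ k, x ∈ F.J k ∧ x + t ∈ F.J k} = ⋃ k, F.J k ∩ (· + t) ⁻¹' F.J k by
      ext; simp]
    exact .iUnion fun k => (measurableSet_J k).inter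
      ((measurableSet_J k).preimage (measurable_id.add_const t))
  measurableSet_S' := by
    rw [show {x | ∃ k, x ∈ F.J k ∧ x - t ∈ F.J k} = ⋃ k, F.J k ∩ (· - t) ⁻¹' F.J k by
      ext; simp]
    exact .iUnion fun k => (measurableSet_J k).inter
      ((measurableSet_J k).preimage (measurable_id.sub_const t))
  mem_S_iff x := by simp [and_comm]
  pairwise_c j k hjk := disjoint_left.2 fun x hj hk => hjk <| Subtype.ext <|
    eq_of_mem (ht.mem_right j.2 hj.1 (by linarith [hj.2])) (ht.mem_right k.2 hk.1 (by linarith [hk.2]))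
  disjoint_c k := disjoint_left.2 fun x ⟨j, hj, hj'⟩ hk => by
    obtain rfl := eq_of_mem hj (ht.mem_right k.2 hk.1 (by linarith [hk.2]))
    linarith [hj'.2 k.2, hk.1]
  union_c := by
    ext x
    simp only [mem_union, mem_ofPred_eq, mem_iUnion, X]
    constructor
    · rintro (⟨k, hk, -⟩ | ⟨k, hk⟩)
      · exact ⟨k, hk⟩
      · exact ⟨k, ht.mem_right k.2 hk.1 (by linarith [hk.2])⟩
    · rintro ⟨k, hk⟩
      by_cases h : x + t ∈ F.J k
      · exact .inl ⟨k, hk, h⟩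
      · obtain ⟨hq, h1, h2⟩ := exists_right_of_notMem ht.1 hk h
        exact .inr ⟨⟨k, hq⟩, by simp; linarith, by simpa⟩
  pairwise_a j k hjk := disjoint_left.2 fun x hj hk => hjk <| Subtype.ext <|
    eq_of_mem (ht.mem_left j.2 hj.1 hj.2.le) (ht.mem_left k.2 hk.1 hk.2.le)
  disjoint_a k := disjoint_left.2 fun x ⟨j, hj, hj'⟩ hk => by
    obtain rfl := eq_of_mem hj (ht.mem_left k.2 hk.1 hk.2.le)
    linarith [hj'.1 k.2, hk.2]
  union_a := by
    ext x
    simp only [mem_union, mem_ofPred_eq, mem_iUnion, X]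
    constructor
    · rintro (⟨k, hk, -⟩ | ⟨k, hk⟩)
      · exact ⟨k, hk⟩
      · exact ⟨k, ht.mem_left k.2 hk.1 hk.2.le⟩
    · rintro ⟨k, hk⟩
      by_cases h : x - t ∈ F.J k
      · exact .inl ⟨k, hk, h⟩
      · obtain ⟨hp, h1, h2⟩ := exists_left_of_notMem ht.1 hk h
        exact .inr ⟨⟨k, hp⟩, h2, by simp; linarith⟩

variable (W : EllTwo {i // F.p i} ≃ₗᵢ[ℂ] EllTwo {k // F.q k})

lemma transfer_of_mem (ht : F.Short t) (hx : x ∈ F.J k) (hxt : x + t ∈ F.J k) :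
    (shiftData W ht).transfer f x = f (x + t) :=
  TransferData.transfer_of_mem _ ⟨k, hx, hxt⟩

lemma transfer_of_le (ht : F.Short t) (hk : F.q k) (h0 : x < F.b k) (h1 : F.b k ≤ x + t) :
    (shiftData W ht).transfer f x =
      W ((shiftData W ht).vec f (x + t - F.b k)) ⟨k, hk⟩ := by
  have h := (shiftData W ht).transfer_add_c (f := f) (r := x + t - F.b k)
    ⟨by linarith, by simp [shiftData]; linarith⟩ ⟨k, hk⟩
  simpa [shiftData] using h

lemma transfer_transfer (hst : F.Short (s + t)) (hs : F.Short s) (ht : F.Short t) (hx : x ∈ F.X) :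
    (shiftData W hs).transfer ((shiftData W ht).transfer f) x =
      (shiftData W hst).transfer f x := by
  obtain ⟨k, hk⟩ := mem_iUnion.1 hx
  by_cases hxs : x + s ∈ F.J k
  · rw [transfer_of_mem W hs hk hxs]
    by_cases hxst : x + s + t ∈ F.J k
    · rw [transfer_of_mem W ht hxs hxst, transfer_of_mem W hst hk (by rwa [← add_assoc]), add_assoc]
    · obtain ⟨hq, h1, h2⟩ := exists_right_of_notMem ht.1 hxs hxst
      rw [transfer_of_le W ht hq h2 h1, transfer_of_le W hst hq (hk.2 hq) (by linarith)]
      rw [← add_assoc]; rfl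
  · obtain ⟨hq, h1, h2⟩ := exists_right_of_notMem hs.1 hk hxs
    rw [transfer_of_le W hs hq h2 h1, transfer_of_le W hst hq h2 (by linarith [ht.1])]
    have hv : (shiftData W hs).vec ((shiftData W ht).transfer f) (x + s - F.b k) =
        (shiftData W hst).vec f (x + (s + t) - F.b k) := by
      refine TransferData.vec_congr _ fun i => ?_
      have e1 : x + s - F.b k + F.a i ∈ F.J i :=
        hs.mem_left i.2 (by linarith) (by linarith)
      have e2 : x + s - F.b k + F.a i + t ∈ F.J i :=
        hst.mem_left i.2 (by linarith [ht.1]) (by linarith)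
      refine (transfer_of_mem W ht e1 e2).trans (congrArg f ?_)
      simp only [shiftData]; ring
    rw [hv]

lemma equiv_add (hst : F.Short (s + t)) (hs : F.Short s) (ht : F.Short t) :
    (shiftData W hst).equiv = (shiftData W hs).equiv * (shiftData W ht).equiv := by
  refine LinearIsometryEquiv.ext fun f => Lp.ext ?_
  refine ((shiftData W hst).coeFn_equiv f).trans ?_
  refine EventuallyEq.trans ?_ ((((shiftData W hs).coeFn_equiv _).trans
    ((shiftData W hs).transfer_congr ((shiftData W ht).coeFn_equiv f))).symm)
  filter_upwards [ae_restrict_mem F.measurableSet_X] with x hx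
  exact (transfer_transfer W hst hs ht hx).symm

lemma measurableSet_leftCollar (t : ℝ) : MeasurableSet (F.leftCollar t) :=
  .iUnion fun _ => measurableSet_Ico

lemma transfer_sub_indicator (ht : F.Short t) (hx : x ∈ F.X) :
    (shiftData W ht).transfer (f - (F.leftCollar t).indicator f) x =
      F.X.indicator f (x + t) - F.X.indicator ((F.leftCollar t).indicator f) (x + t) := by
  obtain ⟨k, hk⟩ := mem_iUnion.1 hx
  by_cases hxt : x + t ∈ F.J k
  · have : x + t ∈ F.X := mem_iUnion.2 ⟨k, hxt⟩
    rw [transfer_of_mem W ht hk hxt, indicator_of_mem this, indicator_of_mem this, Pi.sub_apply]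
  · obtain ⟨hq, h1, h2⟩ := exists_right_of_notMem ht.1 hk hxt
    have hv : (shiftData W ht).vec (f - (F.leftCollar t).indicator f) (x + t - F.b k) = 0 := by
      refine TransferData.vec_eq _ fun i => ?_
      have h3 : x + t - F.b k + F.a i ∈ F.leftCollar t :=
        mem_iUnion.2 ⟨i, by linarith, by linarith⟩
      change (f - (F.leftCollar t).indicator f) (x + t - F.b k + F.a i) = 0
      rw [Pi.sub_apply, indicator_of_mem h3, sub_self]
    rw [transfer_of_le W ht hq h2 h1, hv]
    by_cases hX' : x + t ∈ F.X
    · have h3 := mem_leftCollar_of_right ht (r := x + t - F.b k) (by linarith) (by linarith) hq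
        (by rwa [sub_add_cancel])
      rw [sub_add_cancel] at h3
      rw [indicator_of_mem hX', indicator_of_mem hX', indicator_of_mem h3]
      simp
    · rw [indicator_of_notMem hX', indicator_of_notMem hX']
      simp

lemma enorm_equiv_sub_le (ht : F.Short t) (f : Lp ℂ 2 (volume.restrict F.X)) :
    ‖(shiftData W ht).equiv f - f‖ₑ ≤
      2 * eLpNorm ((F.leftCollar t).indicator f) 2 (volume.restrict F.X) +
        eLpNorm (fun x => F.X.indicator f (x + t) - F.X.indicator f x) 2 volume :=
  (shiftData W ht).enorm_equiv_sub_le F.measurableSet_X (measurableSet_leftCollar t) f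
    fun _ => transfer_sub_indicator W ht

lemma tendsto_enorm_bound (f : Lp ℂ 2 (volume.restrict F.X)) {h : ℝ} (hh : 0 < h)
    (hsh : F.Short h) :
    Tendsto (fun t => 2 * eLpNorm ((F.leftCollar t).indicator f) 2 (volume.restrict F.X) +
        eLpNorm (fun x => F.X.indicator f (x + t) - F.X.indicator f x) 2 volume)
      (𝓝[≥] 0) (𝓝 0) := by
  have hX := F.measurableSet_X
  have h1 : Tendsto (fun t => eLpNorm ((F.leftCollar t).indicator f) 2 (volume.restrict F.X))
      (𝓝[≥] 0) (𝓝 0) := by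
    refine tendsto_eLpNorm_indicator_zero (Lp.memLp f) measurableSet_leftCollar ?_
    have hae : ∀ᵐ x ∂(volume : Measure ℝ), ∀ i, x ≠ F.a i :=
      ae_all_iff.2 fun i => Measure.ae_ne volume (F.a i)
    filter_upwards [ae_restrict_mem hX, ae_restrict_of_ae hae] with x hx hne
    obtain ⟨k, hk⟩ := mem_iUnion.1 hx
    classical
    have hpos : 0 < min h (if F.p k then x - F.a k else 1) := by
      refine lt_min hh ?_
      split_ifs with hp
      · exact sub_pos.2 (lt_of_le_of_ne (hk.1 hp) (hne k).symm)
      · exact one_pos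
    filter_upwards [Ico_mem_nhdsGE hpos] with t ht hxt
    exfalso
    obtain ⟨⟨i, hi⟩, hi1, hi2⟩ := mem_iUnion.1 hxt
    have hth := ht.2.trans_le (min_le_left _ _)
    obtain rfl := eq_of_mem hk (hsh.mem_left hi hi1 (by simp at hi2; linarith))
    have := ht.2.trans_le (min_le_right _ _)
    rw [if_pos hi] at this
    simp at hi2
    linarith
  have h2 := (tendsto_eLpNorm_translate_sub
    ((memLp_indicator_iff_restrict hX).2 (Lp.memLp f))).mono_left (nhdsWithin_le_nhds (s := Ici 0))
  have h3 := (ENNReal.Tendsto.const_mul (a := 2) h1 (.inr (by norm_num))).add h2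
  simpa using h3

end IntervalFamily

namespace IntervalFamily

variable {I : Type*} {F : IntervalFamily I} [Countable I]
  (W : EllTwo {i // F.p i} ≃ₗᵢ[ℂ] EllTwo {k // F.q k})

lemma exists_group {h : ℝ} (hh : 0 < h) (hsh : F.Short (2 * h)) :
    ∃ U : ℝ → (Lp ℂ 2 (volume.restrict F.X) ≃ₗᵢ[ℂ] Lp ℂ 2 (volume.restrict F.X)),
      (∀ s t, U (s + t) = U s * U t) ∧
        ∀ t (ht : F.Short t), U t = (shiftData W ht).equiv := by
  classical
  obtain ⟨U, hU, hU'⟩ := exists_extension_of_local_semigroup (P := F.Short)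
    (u := fun t => if ht : F.Short t then (shiftData W ht).equiv else 1)
    (fun s t hs hst ht => ht.mono hs hst)
    (fun s t hs ht hst => by
      have hs' := hst.mono hs (by linarith)
      have ht' := hst.mono ht (by linarith)
      simp only [dif_pos hst, dif_pos hs', dif_pos ht']
      exact equiv_add W hst hs' ht') hh hsh
  exact ⟨U, hU, fun t ht => by rw [hU' t ht.1 ht, dif_pos ht]⟩

variable {U : ℝ → (Lp ℂ 2 (volume.restrict F.X) ≃ₗᵢ[ℂ] Lp ℂ 2 (volume.restrict F.X))}
  (hU : ∀ s t, U (s + t) = U s * U t)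
  (hUW : ∀ t (ht : F.Short t), U t = (shiftData W ht).equiv)

include hU

omit [Countable I] in
lemma group_zero : U 0 = 1 := by
  have h := hU 0 0
  rw [add_zero] at h
  exact left_eq_mul.1 h

omit [Countable I] in
lemma group_neg (t : ℝ) : U (-t) = (U t)⁻¹ := by
  rw [eq_inv_iff_mul_eq_one, ← hU, neg_add_cancel, group_zero hU]

include hUW

lemma continuous_group {h : ℝ} (hh : 0 < h) (hsh : F.Short h)
    (f : Lp ℂ 2 (volume.restrict F.X)) : Continuous fun t => U t f := by
  have hlim : Tendsto (fun t => ‖U t f - f‖ₑ) (𝓝[≥] 0) (𝓝 0) := by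
    refine tendsto_of_tendsto_of_tendsto_of_le_of_le' tendsto_const_nhds
      (tendsto_enorm_bound f hh hsh) (.of_forall fun _ => zero_le) ?_
    filter_upwards [Ico_mem_nhdsGE hh] with t ht
    have hst := hsh.mono ht.1 ht.2.le
    rw [hUW t hst]
    exact enorm_equiv_sub_le W hst f
  have key : ∀ s t, s ≤ t → ‖U t f - U s f‖ₑ = ‖U |t - s| f - f‖ₑ := by
    intro s t hst
    rw [abs_of_nonneg (sub_nonneg.2 hst)]
    have h1 : U t f = U s (U (t - s) f) := by
      conv_lhs => rw [← add_sub_cancel s t, hU]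
      rfl
    rw [h1, ← map_sub, LinearIsometryEquiv.enorm_map]
  have key' : ∀ s t, ‖U t f - U s f‖ₑ = ‖U |t - s| f - f‖ₑ := by
    intro s t
    rcases le_total s t with hst | hst
    · exact key s t hst
    · rw [← enorm_neg, neg_sub, key t s hst, abs_sub_comm]
  rw [continuous_iff_continuousAt]
  intro s
  rw [ContinuousAt, tendsto_iff_edist_tendsto_0]
  simp only [edist_eq_enorm_sub, key']
  refine hlim.comp (tendsto_nhdsWithin_iff.2 ⟨?_, .of_forall fun _ => mem_Ici.2 (abs_nonneg _)⟩)
  have hc : Continuous fun t => |t - s| := by fun_prop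
  simpa using hc.tendsto s

/-- Inside an interval of the family, the group acts by translation. -/
lemma group_ae_eq_translate {h : ℝ} (hh : 0 < h) (hsh : F.Short h) (s : ℝ)
    (f : Lp ℂ 2 (volume.restrict F.X)) (k : I) :
    ∀ᵐ x ∂(volume : Measure ℝ), x ∈ F.J k → x + s ∈ F.J k → U s f x = f (x + s) := by
  have hshort : ∀ s, F.Short s → ∀ f : Lp ℂ 2 (volume.restrict F.X),
      ∀ᵐ x ∂(volume : Measure ℝ), x ∈ F.J k → x + s ∈ F.J k → U s f x = f (x + s) := by
    intro s hs f
    have h1 := (shiftData W hs).coeFn_equiv f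
    rw [← hUW s hs] at h1
    filter_upwards [(ae_restrict_iff' F.measurableSet_X).1 h1] with x hx hk hks
    rw [hx (mem_iUnion.2 ⟨k, hk⟩), transfer_of_mem W hs hk hks]
  have hpow : ∀ n : ℕ, ∀ s, F.Short s → ∀ f : Lp ℂ 2 (volume.restrict F.X),
      ∀ᵐ x ∂(volume : Measure ℝ), x ∈ F.J k → x + 2 ^ n * s ∈ F.J k →
        U (2 ^ n * s) f x = f (x + 2 ^ n * s) := by
    intro n
    induction n with
    | zero => simpa using hshort
    | succ n ih =>
      intro s hs f
      have hadd : 2 ^ (n + 1) * s = 2 ^ n * s + 2 ^ n * s := by ring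
      have h0 : 0 ≤ 2 ^ n * s := mul_nonneg (by positivity) hs.1
      filter_upwards [ih s hs (U (2 ^ n * s) f), (measurePreserving_add_right volume
        (2 ^ n * s)).quasiMeasurePreserving.ae (ih s hs f)] with x h1 h2 hk hks
      have hmid : x + 2 ^ n * s ∈ F.J k :=
        ⟨fun hp => by linarith [hk.1 hp], fun hq => by linarith [hks.2 hq]⟩
      rw [hadd, ← add_assoc] at hks ⊢
      rw [hU]
      exact (h1 hk hmid).trans (h2 hmid hks)
  have hnonneg : ∀ s, 0 ≤ s → ∀ f : Lp ℂ 2 (volume.restrict F.X),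
      ∀ᵐ x ∂(volume : Measure ℝ), x ∈ F.J k → x + s ∈ F.J k → U s f x = f (x + s) := by
    intro s hs f
    obtain ⟨n, hn⟩ := pow_unbounded_of_one_lt (s / h) (one_lt_two (α := ℝ))
    rw [div_lt_iff₀ hh] at hn
    have hpos : (0 : ℝ) < 2 ^ n := by positivity
    have := hpow n (s / 2 ^ n) (hsh.mono (by positivity) (by
      rw [div_le_iff₀ hpos]; linarith)) f
    rwa [mul_div_cancel₀ _ hpos.ne'] at this
  rcases le_total 0 s with hs | hs
  · exact hnonneg s hs f
  · have h1 := hnonneg (-s) (by linarith) (U s f)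
    rw [group_neg hU, show (U s)⁻¹ (U s f) = f from (U s).symm_apply_apply f] at h1
    filter_upwards [(measurePreserving_add_right volume s).quasiMeasurePreserving.ae h1]
      with x hx hk hks
    have := hx hks (by rwa [add_neg_cancel_right])
    rw [this, add_neg_cancel_right]

omit hU in
lemma hasSum_group [DecidableEq I] {Ω : Set ℝ} (hΩ : Ω =ᵐ[volume] F.X) {t : ℝ} (ht : F.Short t)
    (i : {i // F.p i}) (f : Lp ℂ 2 (volume.restrict F.X))
    (hf : ∀ᵐ x ∂volume.restrict F.X, x ∉ Icc (F.a i) (F.a i + t) → f x = 0) :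
    ∃ g : {k // F.q k} → Lp ℂ 2 (volume.restrict F.X),
      (∀ k, g k =ᵐ[volume.restrict F.X] {x | x + (F.a i + t - F.b k) ∈ Ω}.indicator
        fun x => f (x + (F.a i + t - F.b k))) ∧
      HasSum (fun k => W (lp.single 2 i 1) k • g k) (U t f) := by
  rw [hUW t ht]
  obtain ⟨g, hg, hsum⟩ := (shiftData W ht).hasSum_equiv_of_support hΩ i f (by
    filter_upwards [hf, ae_restrict_of_ae (Measure.ae_ne volume (F.a i + t))] with x hx hne hmem
    refine hx fun hx' => hmem ⟨hx'.1, ?_⟩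
    rw [add_comm]
    exact lt_of_le_of_ne hx'.2 hne)
  refine ⟨g, fun k => ?_, hsum⟩
  have e : F.a i + t - F.b k = (shiftData W ht).a i - (shiftData W ht).c k := by
    simp only [shiftData]; ring
  rw [e]
  exact hg k

lemma hasSum_group_neg [DecidableEq I] {Ω : Set ℝ} (hΩ : Ω =ᵐ[volume] F.X) {t : ℝ}
    (ht : F.Short t) (k : {k // F.q k}) (f : Lp ℂ 2 (volume.restrict F.X))
    (hf : ∀ᵐ x ∂volume.restrict F.X, x ∉ Icc (F.b k - t) (F.b k) → f x = 0) :
    ∃ g : {i // F.p i} → Lp ℂ 2 (volume.restrict F.X),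
      (∀ j, g j =ᵐ[volume.restrict F.X] {x | x + (F.b k - F.a j - t) ∈ Ω}.indicator
        fun x => f (x + (F.b k - F.a j - t))) ∧
      HasSum (fun j => starRingEnd ℂ (W (lp.single 2 j 1) k) • g j) (U (-t) f) := by
  rw [group_neg hU, hUW t ht]
  obtain ⟨g, hg, hsum⟩ := (shiftData W ht).symm.hasSum_equiv_of_support hΩ k f (by
    filter_upwards [hf, ae_restrict_of_ae (Measure.ae_ne volume (F.b k))] with x hx hne hmem
    refine hx fun hx' => hmem ⟨hx'.1, ?_⟩
    change x < t + (F.b k - t)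
    rw [add_sub_cancel]
    exact lt_of_le_of_ne hx'.2 hne)
  refine ⟨g, fun j => ?_, ?_⟩
  · have e : F.b k - F.a j - t = (shiftData W ht).symm.a k - (shiftData W ht).symm.c j := by
      simp only [shiftData, TransferData.symm]; ring
    rw [e]
    exact hg j
  · simp only [← EllTwo.symm_single_eq_conj]
    exact hsum

end IntervalFamily

lemma IsPreconnected.subset_of_pairwise_disjoint {I X : Type*} [TopologicalSpace X] {O : I → Set X}
    {S : Set X} {x : X} {k : I} (hS : IsPreconnected S) (hO : ∀ i, IsOpen (O i))
    (hd : Pairwise fun i j => Disjoint (O i) (O j)) (hSO : S ⊆ ⋃ i, O i) (hxS : x ∈ S)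
    (hx : x ∈ O k) : S ⊆ O k := by
  refine hS.subset_left_of_subset_union (v := ⋃ i, ⋃ _ : i ≠ k, O i) (hO k)
    (isOpen_iUnion fun i => isOpen_iUnion fun _ => hO i) ?_ ?_ ⟨x, hxS, hx⟩
  · simp only [disjoint_iUnion_right]
    exact fun i hi => hd hi.symm
  · intro y hy
    obtain ⟨i, hi⟩ := mem_iUnion.1 (hSO hy)
    by_cases h : i = k
    · exact .inl (h ▸ hi)
    · exact .inr (mem_iUnion₂.2 ⟨i, h, hi⟩)

lemma isOpen_setOf_lt_coe_lt (a b : EReal) :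
    IsOpen {x : ℝ | a < (x : EReal) ∧ (x : EReal) < b} :=
  isOpen_Ioo.preimage continuous_coe_real_ereal

lemma EReal.le_coe_iff_of_ne_top {a : EReal} (ha : a ≠ ⊤) {x : ℝ} :
    a ≤ x ↔ (a ≠ ⊥ → a.toReal ≤ x) := by
  by_cases h : a = ⊥
  · simp [h]
  · rw [← EReal.coe_le_coe_iff, EReal.coe_toReal ha h]
    simp [h]

lemma EReal.coe_lt_iff_of_ne_bot {b : EReal} (hb : b ≠ ⊥) {x : ℝ} :
    (x : EReal) < b ↔ (b ≠ ⊤ → x < b.toReal) := by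
  by_cases h : b = ⊤
  · simp [h]
  · rw [← EReal.coe_lt_coe_iff, EReal.coe_toReal h hb]
    simp [h]

namespace IntervalFamily

variable {I : Type*} (α β : I → EReal) (hα : ∀ i, α i ≠ ⊤) (hβ : ∀ i, β i ≠ ⊥)
  (hd : Pairwise fun i j => Disjoint
      {x : ℝ | α i < (x : EReal) ∧ (x : EReal) < β i}
      {x : ℝ | α j < (x : EReal) ∧ (x : EReal) < β j})

/-- The family of half-open intervals with the given extended real endpoints. -/
noncomputable abbrev ofEReal : IntervalFamily I where
  p i := α i ≠ ⊥
  q k := β k ≠ ⊤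
  a i := (α i).toReal
  b k := (β k).toReal
  pairwise_disjoint j k hjk := by
    simp only [← EReal.le_coe_iff_of_ne_top (hα _), ← EReal.coe_lt_iff_of_ne_bot (hβ _)]
    refine disjoint_left.2 fun x hj hk => ?_
    obtain ⟨y, hxy, hy⟩ := EReal.lt_iff_exists_real_btwn.1 (lt_min hj.2 hk.2)
    exact (hd hjk).ne_of_mem ⟨hj.1.trans_lt hxy, hy.trans_le (min_le_left _ _)⟩
      ⟨hk.1.trans_lt hxy, hy.trans_le (min_le_right _ _)⟩ rfl

lemma mem_J_ofEReal {k : I} {x : ℝ} :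
    x ∈ (ofEReal α β hα hβ hd).J k ↔ α k ≤ x ∧ (x : EReal) < β k :=
  and_congr (EReal.le_coe_iff_of_ne_top (hα k)).symm (EReal.coe_lt_iff_of_ne_bot (hβ k)).symm

lemma short_ofEReal {t : ℝ} (h0 : 0 ≤ t) (ht : (t : EReal) < ⨅ i, (β i - α i)) :
    (ofEReal α β hα hβ hd).Short t := by
  refine ⟨h0, fun k hp hq => ?_⟩
  have h := ht.trans_le (iInf_le _ k)
  rw [← EReal.coe_toReal (hα k) hp, ← EReal.coe_toReal hq (hβ k), ← EReal.coe_sub,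
    EReal.coe_lt_coe_iff] at h
  exact h

lemma ae_eq_X_ofEReal [Countable I] :
    (⋃ i, {x : ℝ | α i < (x : EReal) ∧ (x : EReal) < β i}) =ᵐ[volume]
      (ofEReal α β hα hβ hd).X := by
  rw [eventuallyEq_set]
  have hae : ∀ᵐ x ∂(volume : Measure ℝ), ∀ i, x ≠ (α i).toReal :=
    ae_all_iff.2 fun i => Measure.ae_ne volume _
  filter_upwards [hae] with x hx
  simp only [X, mem_iUnion, mem_J_ofEReal]
  refine exists_congr fun k => and_congr_left fun _ => ⟨le_of_lt, fun h => lt_of_le_of_ne h ?_⟩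
  intro h'
  exact hx k (by rw [h', EReal.toReal_coe])

end IntervalFamily

lemma EllTwo.map_single_one_eq {K L : Type*} [DecidableEq L] {W : EllTwo L ≃ₗᵢ[ℂ] EllTwo K}
    {B : L → K → ℂ} (hB : ∀ x k, W x k = ∑' i, x i * B i k) (i : L) (k : K) :
    W (lp.single 2 i 1) k = B i k := by
  rw [hB, tsum_eq_single i]
  · simp
  · intro j hj
    simp [hj]

end

/-- Conversely, given a unitary boundary matrix `B` indexed by the finite left
endpoints and the finite right endpoints of a countable union of disjoint intervals with
lengths bounded below by `l > 0`, there exists a strongly continuous unitary group with the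
integrability property whose transitions at the endpoints are governed by `B`. -/
theorem statement6 (I : Type) [Countable I] (α β : I → EReal)
    (hαtop : ∀ i, α i ≠ ⊤) (hβbot : ∀ i, β i ≠ ⊥)
    (hdisj : Pairwise fun i j => Disjoint
      {x : ℝ | α i < (x : EReal) ∧ (x : EReal) < β i}
      {x : ℝ | α j < (x : EReal) ∧ (x : EReal) < β j})
    (Ω : Set ℝ) (hΩ : Ω = ⋃ i, {x : ℝ | α i < (x : EReal) ∧ (x : EReal) < β i})
    (hl : 0 < ⨅ i, (β i - α i))
    (B : {i : I // α i ≠ ⊥} → {k : I // β k ≠ ⊤} → ℂ)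
    (hB : ∃ W : lp (fun _ : {i : I // α i ≠ ⊥} => ℂ) 2 ≃ₗᵢ[ℂ]
        lp (fun _ : {k : I // β k ≠ ⊤} => ℂ) 2,
      ∀ x k, W x k = ∑' i : {i : I // α i ≠ ⊥}, x i * B i k) :
    ∃ U : ℝ → (Lp ℂ 2 (volume.restrict Ω) ≃ₗᵢ[ℂ] Lp ℂ 2 (volume.restrict Ω)),
      U 0 = LinearIsometryEquiv.refl ℂ (Lp ℂ 2 (volume.restrict Ω)) ∧
      (∀ s t f, U (s + t) f = U s (U t f)) ∧
      (∀ f, Continuous fun t => U t f) ∧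
      -- the integrability property
      (∀ V : Set ℝ, IsOpen V → V ⊆ Ω → ∀ δ : ℝ, 0 < δ →
        (∀ s : ℝ, |s| < δ → (fun x => x + s) '' V ⊆ Ω) →
        ∀ s : ℝ, |s| < δ → ∀ f, ∀ᵐ x ∂(volume.restrict V),
          (U s f : ℝ → ℂ) x = (f : ℝ → ℂ) (x + s)) ∧
      ∀ ε : ℝ, 0 < ε → (ε : EReal) < ⨅ i, (β i - α i) →
        -- transition at a finite left endpoint `α_i`
        (∀ (i : {i : I // α i ≠ ⊥}) (f : Lp ℂ 2 (volume.restrict Ω)),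
          (∀ᵐ x ∂(volume.restrict Ω),
            x ∉ Set.Icc ((α i.1).toReal) ((α i.1).toReal + ε) → (f : ℝ → ℂ) x = 0) →
          ∃ g : {k : I // β k ≠ ⊤} → Lp ℂ 2 (volume.restrict Ω),
            (∀ k, (g k : ℝ → ℂ) =ᵐ[volume.restrict Ω]
              {x : ℝ | x + ((α i.1).toReal + ε - (β k.1).toReal) ∈ Ω}.indicator
                (fun x => (f : ℝ → ℂ) (x + ((α i.1).toReal + ε - (β k.1).toReal)))) ∧
            HasSum (fun k => B i k • g k) (U ε f)) ∧
        -- transition at a finite right endpoint `β_k`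
        (∀ (k : {k : I // β k ≠ ⊤}) (f : Lp ℂ 2 (volume.restrict Ω)),
          (∀ᵐ x ∂(volume.restrict Ω),
            x ∉ Set.Icc ((β k.1).toReal - ε) ((β k.1).toReal) → (f : ℝ → ℂ) x = 0) →
          ∃ g : {i : I // α i ≠ ⊥} → Lp ℂ 2 (volume.restrict Ω),
            (∀ j, (g j : ℝ → ℂ) =ᵐ[volume.restrict Ω]
              {x : ℝ | x + ((β k.1).toReal - (α j.1).toReal - ε) ∈ Ω}.indicator
                (fun x => (f : ℝ → ℂ) (x + ((β k.1).toReal - (α j.1).toReal - ε)))) ∧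
            HasSum (fun j => (starRingEnd ℂ) (B j k) • g j) (U (-ε) f)) := by
  classical
  obtain ⟨W, hW⟩ := hB
  let F := IntervalFamily.ofEReal α β hαtop hβbot hdisj
  have hΩF : Ω =ᵐ[volume] F.X := hΩ ▸ IntervalFamily.ae_eq_X_ofEReal α β hαtop hβbot hdisj
  obtain ⟨h, hh, hshort⟩ : ∃ h : ℝ, 0 < h ∧ F.Short (2 * h) := by
    obtain ⟨r, hr0, hr⟩ := EReal.lt_iff_exists_real_btwn.1 hl
    have hr0' : 0 < r := by exact_mod_cast hr0
    refine ⟨r / 2, half_pos hr0', ?_⟩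
    rw [mul_div_cancel₀ _ two_ne_zero]
    exact IntervalFamily.short_ofEReal α β hαtop hβbot hdisj hr0'.le hr
  rw [Measure.restrict_congr_set hΩF]
  obtain ⟨U, hU, hUW⟩ := IntervalFamily.exists_group (F := F) W hh hshort
  have h2h : 0 < 2 * h := by positivity
  refine ⟨U, IntervalFamily.group_zero hU, fun s t f => by rw [hU]; rfl,
    IntervalFamily.continuous_group W hU hUW h2h hshort, ?_, ?_⟩
  · intro V hVo hVΩ δ hδ hVδ s hs f
    rw [ae_restrict_iff' hVo.measurableSet]
    filter_upwards [ae_all_iff.2 (IntervalFamily.group_ae_eq_translate W hU hUW h2h hshort s f)]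
      with x hx hxV
    obtain ⟨k, hk⟩ := Set.mem_iUnion.1 (hΩ ▸ hVΩ hxV)
    have hseg : Set.uIcc x (x + s) ⊆ {x : ℝ | α k < (x : EReal) ∧ (x : EReal) < β k} := by
      refine isPreconnected_uIcc.subset_of_pairwise_disjoint
        (O := fun k => {x : ℝ | α k < (x : EReal) ∧ (x : EReal) < β k})
        (fun i => isOpen_setOf_lt_coe_lt _ _) hdisj ?_ Set.left_mem_uIcc hk
      intro y hy
      rw [← hΩ]
      refine hVδ (y - x) (lt_of_le_of_lt ?_ hs) ⟨x, hxV, by simp⟩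
      simpa using Set.abs_sub_left_of_mem_uIcc hy
    have hks := hseg Set.right_mem_uIcc
    refine hx k ?_ ?_
    · exact (IntervalFamily.mem_J_ofEReal α β hαtop hβbot hdisj).2 ⟨hk.1.le, hk.2⟩
    · exact (IntervalFamily.mem_J_ofEReal α β hαtop hβbot hdisj).2 ⟨hks.1.le, hks.2⟩
  · intro ε hε hεl
    have hs : F.Short ε := IntervalFamily.short_ofEReal α β hαtop hβbot hdisj hε.le hεl
    refine ⟨fun i f hf => ?_, fun k f hf => ?_⟩
    · obtain ⟨g, hg, hsum⟩ := IntervalFamily.hasSum_group W hUW hΩF hs i f hf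
      refine ⟨g, hg, ?_⟩
      simpa only [EllTwo.map_single_one_eq hW] using hsum
    · obtain ⟨g, hg, hsum⟩ := IntervalFamily.hasSum_group_neg W hU hUW hΩF hs k f hf
      refine ⟨g, hg, ?_⟩
      simpa only [EllTwo.map_single_one_eq hW] using hsum
end

section
/- Let Ω = ∪_{i=1}^{N}(α_i, β_i) ⊆ ℝ be a finite union of pairwise disjoint open intervals, exactly one of which is unbounded (exactly one endpoint among α_1, β_1, …, α_N, β_N is infinite). Then there exists no strongly continuous unitary group (U(t))_{t∈ℝ} on L²(Ω) with the integrability property. -/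
open MeasureTheory

/-- The double integral of the squared oscillation of a square integrable function. -/
lemma lintegral_lintegral_enorm_sub_sq {X : Type*} [MeasurableSpace X] (μ : Measure X)
    [IsFiniteMeasure μ] {f : X → ℂ} (hf : MemLp f 2 μ) :
    ∫⁻ x, ∫⁻ y, ‖f y - f x‖ₑ ^ 2 ∂μ ∂μ =
      ENNReal.ofReal (2 * (μ.real Set.univ * ∫ x, ‖f x‖ ^ 2 ∂μ - ‖∫ x, f x ∂μ‖ ^ 2)) := by
  have hf1 : Integrable f μ := hf.integrable (by norm_num)
  have hf2 : Integrable (fun x => ‖f x‖ ^ 2) μ := hf.integrable_norm_pow (by norm_num)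
  have hE (x y : X) : ‖f y - f x‖ ^ 2 = ‖f y‖ ^ 2 - 2 * inner ℝ (f x) (f y) + ‖f x‖ ^ 2 := by
    rw [norm_sub_sq_real, real_inner_comm]
  have hsub (x : X) : Integrable (fun y => ‖f y‖ ^ 2 - 2 * inner ℝ (f x) (f y)) μ :=
    hf2.sub ((hf1.const_inner (f x)).const_mul 2)
  have hval (x : X) : ∫ y, ‖f y - f x‖ ^ 2 ∂μ =
      (∫ y, ‖f y‖ ^ 2 ∂μ) - 2 * inner ℝ (f x) (∫ y, f y ∂μ) + μ.real Set.univ * ‖f x‖ ^ 2 := by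
    simp_rw [hE]
    rw [integral_add (hsub x) (integrable_const _),
      integral_sub hf2 ((hf1.const_inner (f x)).const_mul 2), integral_const_mul,
      integral_inner hf1, integral_const, smul_eq_mul]
  have hin (x : X) : ∫⁻ y, ‖f y - f x‖ₑ ^ 2 ∂μ = ENNReal.ofReal
      ((∫ y, ‖f y‖ ^ 2 ∂μ) - 2 * inner ℝ (f x) (∫ y, f y ∂μ) + μ.real Set.univ * ‖f x‖ ^ 2) := by
    have hI : Integrable (fun y => ‖f y - f x‖ ^ 2) μ := by
      simp_rw [hE]
      exact (hsub x).add (integrable_const _)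
    rw [← hval, ofReal_integral_eq_lintegral_ofReal hI (.of_forall fun y => by positivity)]
    refine lintegral_congr fun y => ?_
    rw [ENNReal.ofReal_pow (norm_nonneg _), ofReal_norm]
  have hi : Integrable (fun x => 2 * inner ℝ (f x) (∫ y, f y ∂μ)) μ :=
    (hf1.inner_const (∫ y, f y ∂μ)).const_mul 2
  have hsub' : Integrable
      (fun x => (∫ y, ‖f y‖ ^ 2 ∂μ) - 2 * inner ℝ (f x) (∫ y, f y ∂μ)) μ :=
    (integrable_const _).sub hi
  have hadd : Integrable (fun x =>
      (∫ y, ‖f y‖ ^ 2 ∂μ) - 2 * inner ℝ (f x) (∫ y, f y ∂μ) + μ.real Set.univ * ‖f x‖ ^ 2) μ :=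
    hsub'.add (hf2.const_mul _)
  have hself : ∫ x, inner ℝ (f x) (∫ y, f y ∂μ) ∂μ = ‖∫ y, f y ∂μ‖ ^ 2 := by
    simp_rw [real_inner_comm (∫ y, f y ∂μ)]
    rw [integral_inner hf1, real_inner_self_eq_norm_sq]
  simp_rw [hin]
  rw [← ofReal_integral_eq_lintegral_ofReal hadd
      (.of_forall fun x => (integral_nonneg fun y => by positivity).trans_eq (hval x)),
    integral_add hsub' (hf2.const_mul _), integral_sub (integrable_const _) hi,
    integral_const_mul, integral_const_mul, integral_const, smul_eq_mul, hself]
  congr 1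
  ring

/-- A one-parameter unitary group on `L²(Ω)` acting by translation wherever translates of open
sets stay inside `Ω`. -/
structure IsLocalTranslationGroup (Ω : Set ℝ)
    (U : ℝ → (Lp ℂ 2 (volume.restrict Ω) ≃ₗᵢ[ℂ] Lp ℂ 2 (volume.restrict Ω))) : Prop where
  zero : U 0 = LinearIsometryEquiv.refl ℂ (Lp ℂ 2 (volume.restrict Ω))
  add : ∀ s t f, U (s + t) f = U s (U t f)
  translate : ∀ V : Set ℝ, IsOpen V → V ⊆ Ω → ∀ δ : ℝ, 0 < δ →
    (∀ s : ℝ, |s| < δ → (fun x => x + s) '' V ⊆ Ω) →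
    ∀ s : ℝ, |s| < δ → ∀ f, ∀ᵐ x ∂(volume.restrict V),
      (U s f : ℝ → ℂ) x = (f : ℝ → ℂ) (x + s)

namespace IsLocalTranslationGroup

variable {Ω : Set ℝ} {U : ℝ → (Lp ℂ 2 (volume.restrict Ω) ≃ₗᵢ[ℂ] Lp ℂ 2 (volume.restrict Ω))}

lemma ae_eq_translate_nat_mul (hU : IsLocalTranslationGroup Ω U) {J : Set ℝ} (hJo : IsOpen J)
    (hJc : J.OrdConnected) {ρ : ℝ} (hJ : ∀ x ∈ J, ∀ r : ℝ, |r| < ρ → x + r ∈ Ω) {r : ℝ}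
    (hr : |r| < ρ) (m : ℕ) (f : Lp ℂ 2 (volume.restrict Ω)) :
    ∀ᵐ x, x ∈ J → x + m * r ∈ J → (U (m * r) f : ℝ → ℂ) x = (f : ℝ → ℂ) (x + m * r) := by
  have hρ : 0 < ρ := (abs_nonneg r).trans_lt hr
  induction m with
  | zero => simp [hU.zero]
  | succ m ih =>
    have h1 := hU.translate J hJo (fun x hx => by simpa using hJ x hx 0 (by simpa using hρ)) ρ hρ
      (by rintro s hs _ ⟨x, hx, rfl⟩; exact hJ x hx s hs) r hr (U (m * r) f)
    rw [ae_restrict_iff' hJo.measurableSet] at h1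
    have h2 := (quasiMeasurePreserving_add_right (volume : Measure ℝ) r).ae ih
    filter_upwards [h1, h2] with x hx1 hx2 hxJ hxm
    push_cast at hxm ⊢
    have hxr : x + r ∈ J := by
      have hm : (0 : ℝ) ≤ m := m.cast_nonneg
      rcases le_total 0 r with h | h
      · exact hJc.out hxJ hxm ⟨by linarith, by nlinarith [mul_nonneg hm h]⟩
      · exact hJc.out hxm hxJ ⟨by nlinarith [mul_nonneg hm (neg_nonneg.2 h)], by linarith⟩
    have e : x + r + m * r = x + (m + 1) * r := by ring
    rw [show ((m : ℝ) + 1) * r = r + m * r by ring, hU.add, hx1 hxJ, hx2 hxr (by rwa [e])]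
    congr 1
    ring

lemma ae_eq_translate (hU : IsLocalTranslationGroup Ω U) {J : Set ℝ} (hJo : IsOpen J)
    (hJc : J.OrdConnected) (hJ : J ⊆ Ω) (t : ℝ) (f : Lp ℂ 2 (volume.restrict Ω)) :
    ∀ᵐ x, x ∈ J → x + t ∈ J → (U t f : ℝ → ℂ) x = (f : ℝ → ℂ) (x + t) := by
  let K (ρ : ℝ) : Set ℝ := {x | x - ρ ∈ J ∧ x + ρ ∈ J}
  have hK (n : ℕ) : ∀ᵐ x, x ∈ K (1 / (n + 1)) → x + t ∈ K (1 / (n + 1)) →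
      (U t f : ℝ → ℂ) x = (f : ℝ → ℂ) (x + t) := by
    set ρ : ℝ := 1 / (n + 1) with hρdef
    have hρ : 0 < ρ := by positivity
    obtain ⟨k, hk⟩ := exists_nat_gt (|t| / ρ)
    have hk0 : (0 : ℝ) < k := (by positivity : 0 ≤ |t| / ρ).trans_lt hk
    have hKo : IsOpen (K ρ) :=
      (hJo.preimage (continuous_id.sub continuous_const)).inter
        (hJo.preimage (continuous_id.add continuous_const))
    have hKc : (K ρ).OrdConnected := by
      refine ⟨fun x hx y hy z hz => ⟨?_, ?_⟩⟩
      · exact hJc.out hx.1 hy.1 ⟨by linarith [hz.1], by linarith [hz.2]⟩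
      · exact hJc.out hx.2 hy.2 ⟨by linarith [hz.1], by linarith [hz.2]⟩
    have hKΩ : ∀ x ∈ K ρ, ∀ r : ℝ, |r| < ρ → x + r ∈ Ω := fun x hx r hr =>
      hJ (hJc.out hx.1 hx.2 ⟨by linarith [(abs_lt.1 hr).1], by linarith [(abs_lt.1 hr).2]⟩)
    have := hU.ae_eq_translate_nat_mul hKo hKc hKΩ (r := t / k) (by
      rw [abs_div, abs_of_pos hk0, div_lt_iff₀ hk0]
      rwa [div_lt_iff₀ hρ, mul_comm] at hk) k f
    rwa [mul_div_cancel₀ t hk0.ne'] at this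
  have hev (x : ℝ) (hx : x ∈ J) : ∀ᶠ n : ℕ in Filter.atTop, x ∈ K (1 / (n + 1)) := by
    have h := tendsto_one_div_add_atTop_nhds_zero_nat (𝕜 := ℝ)
    have h1 := (tendsto_const_nhds (x := x)).sub h
    have h2 := (tendsto_const_nhds (x := x)).add h
    rw [sub_zero] at h1
    rw [add_zero] at h2
    exact (h1.eventually (hJo.mem_nhds hx)).and (h2.eventually (hJo.mem_nhds hx))
  filter_upwards [ae_all_iff.2 hK] with x hx hxJ hxt
  obtain ⟨n, hn1, hn2⟩ := ((hev x hxJ).and (hev _ hxt)).exists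
  exact hx n hn1 hn2

lemma norm_sub_neg (hU : IsLocalTranslationGroup Ω U) (s : ℝ) (f : Lp ℂ 2 (volume.restrict Ω)) :
    ‖U (-s) f - f‖ = ‖U s f - f‖ := by
  have h : U s (U (-s) f) = f := by rw [← hU.add]; simp [hU.zero]
  rw [← (U s).norm_map, map_sub, h, norm_sub_rev]

lemma norm_orbit_sub (hU : IsLocalTranslationGroup Ω U) (s τ : ℝ)
    (f : Lp ℂ 2 (volume.restrict Ω)) : ‖U s (U τ f) - U τ f‖ = ‖U s f - f‖ := by
  rw [← hU.add, add_comm, hU.add, ← map_sub, LinearIsometryEquiv.norm_map]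

/-- Functions that are almost invariant under the group are almost constant on every bounded
interval inside `Ω`. -/
lemma setIntegral_norm_sq_le (hU : IsLocalTranslationGroup Ω U) {a b : ℝ} (hab : a < b)
    (hΩ : Set.Ioo a b ⊆ Ω) (h : Lp ℂ 2 (volume.restrict Ω)) {D : ℝ}
    (hD : ∀ s : ℝ, |s| ≤ b - a → ‖U s h - h‖ ^ 2 ≤ D) :
    ∫ x in Set.Ioo a b, ‖(h : ℝ → ℂ) x‖ ^ 2 ≤
      ‖∫ x in Set.Ioo a b, (h : ℝ → ℂ) x‖ ^ 2 / (b - a) + D := by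
  have hℓ : 0 < b - a := sub_pos.2 hab
  have hD0 : 0 ≤ D := (sq_nonneg _).trans (hD 0 (by simpa using hℓ.le))
  have hm : Measurable (h : ℝ → ℂ) := (Lp.stronglyMeasurable h).measurable
  have hmem : MemLp (h : ℝ → ℂ) 2 (volume.restrict (Set.Ioo a b)) :=
    (Lp.memLp h).mono_measure (Measure.restrict_mono hΩ le_rfl)
  have key := lintegral_lintegral_enorm_sub_sq (volume.restrict (Set.Ioo a b)) hmem
  let I := Set.Ioo a b
  have hI : MeasurableSet I := measurableSet_Ioo
  let F : ℝ → ℝ → ENNReal := fun x s =>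
    I.indicator 1 x * I.indicator 1 (x + s) * ‖(h : ℝ → ℂ) (x + s) - (h : ℝ → ℂ) x‖ₑ ^ 2
  have hF : Measurable (Function.uncurry F) := by
    have h1 : Measurable (I.indicator (1 : ℝ → ENNReal)) := measurable_one.indicator hI
    exact ((h1.comp measurable_fst).mul (h1.comp (measurable_fst.add measurable_snd))).mul
      (((hm.comp (measurable_fst.add measurable_snd)).sub
        (hm.comp measurable_fst)).enorm.pow_const 2)
  have hTF : ∫⁻ x in I, ∫⁻ y in I, ‖(h : ℝ → ℂ) y - (h : ℝ → ℂ) x‖ₑ ^ 2 =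
      ∫⁻ s, ∫⁻ x, F x s := by
    rw [← lintegral_lintegral_swap hF.aemeasurable, ← lintegral_indicator hI]
    refine lintegral_congr fun x => ?_
    by_cases hx : x ∈ I
    · rw [Set.indicator_of_mem hx, ← lintegral_indicator hI,
        ← lintegral_add_left_eq_self _ x]
      refine lintegral_congr fun s => ?_
      by_cases hs : x + s ∈ I <;> simp [F, hx, hs]
    · simp [F, hx]
  have hFs (s : ℝ) : ∫⁻ x, F x s ≤ (Set.Icc (-(b - a)) (b - a)).indicator
      (fun _ => ENNReal.ofReal D) s := by
    by_cases hs : s ∈ Set.Icc (-(b - a)) (b - a)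
    · rw [Set.indicator_of_mem hs]
      have hlt := hU.ae_eq_translate isOpen_Ioo Set.ordConnected_Ioo hΩ s h
      have hsub := Lp.coeFn_sub (U s h) h
      calc ∫⁻ x, F x s ≤ ∫⁻ x in I, ‖((U s h - h : Lp ℂ 2 (volume.restrict Ω)) : ℝ → ℂ) x‖ₑ ^ 2 := by
            rw [← lintegral_indicator hI]
            have hsub' := (ae_restrict_iff' hI).1 (ae_restrict_of_ae_restrict_of_subset hΩ hsub)
            refine lintegral_mono_ae ?_
            filter_upwards [hlt, hsub'] with x hx hx'
            by_cases h1 : x ∈ I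
            · by_cases h2 : x + s ∈ I
              · rw [Set.indicator_of_mem h1, hx' h1, Pi.sub_apply, hx h1 h2]
                simp [F, h1, h2]
              · simp [F, h2]
            · simp [F, h1]
        _ ≤ ∫⁻ x in Ω, ‖((U s h - h : Lp ℂ 2 (volume.restrict Ω)) : ℝ → ℂ) x‖ₑ ^ 2 :=
            lintegral_mono_set hΩ
        _ = ENNReal.ofReal (‖U s h - h‖ ^ 2) := by
            rw [ENNReal.ofReal_pow (norm_nonneg _), ofReal_norm, Lp.enorm_def]
            have := eLpNorm_nnreal_pow_eq_lintegral (μ := volume.restrict Ω) (p := 2)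
              (f := ((U s h - h : Lp ℂ 2 (volume.restrict Ω)) : ℝ → ℂ)) two_ne_zero
            simpa using this.symm
        _ ≤ ENNReal.ofReal D := ENNReal.ofReal_le_ofReal (hD s (abs_le.2 hs))
    · rw [Set.indicator_of_notMem hs]
      refine le_of_eq (lintegral_eq_zero_of_ae_eq_zero (.of_forall fun x => ?_))
      by_cases h1 : x ∈ I
      · have h2 : x + s ∉ I := fun h2 => hs
          ⟨by linarith [h1.1, h1.2, h2.1, h2.2], by linarith [h1.1, h1.2, h2.1, h2.2]⟩
        simp [F, h2]
      · simp [F, h1]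
  have hle : ENNReal.ofReal (2 * ((b - a) * (∫ x in I, ‖(h : ℝ → ℂ) x‖ ^ 2) -
      ‖∫ x in I, (h : ℝ → ℂ) x‖ ^ 2)) ≤ ENNReal.ofReal (2 * (b - a) * D) := by
    calc _ = ∫⁻ s, ∫⁻ x, F x s := by
          rw [← hTF, key]
          simp [I, Real.volume_real_Ioo_of_le hab.le]
      _ ≤ ∫⁻ s, (Set.Icc (-(b - a)) (b - a)).indicator (fun _ => ENNReal.ofReal D) s :=
          lintegral_mono hFs
      _ = _ := by
          rw [lintegral_indicator_const measurableSet_Icc, Real.volume_Icc,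
            ← ENNReal.ofReal_mul hD0]
          congr 1
          ring
  rw [ENNReal.ofReal_le_ofReal_iff (by positivity)] at hle
  rw [← sub_le_iff_le_add, le_div_iff₀ hℓ]
  linarith

/-- The indicator function of the interval `(p, q)` as an element of `L²(Ω)`. -/
noncomputable def bump (Ω : Set ℝ) (p q : ℝ) : Lp ℂ 2 (volume.restrict Ω) :=
  indicatorConstLp 2 (measurableSet_Ioo (a := p) (b := q))
    ((Measure.restrict_apply_le Ω _).trans_lt measure_Ioo_lt_top).ne 1

section HalfLine

variable {H : Set ℝ} {σ p q : ℝ}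

lemma bump_translate (hU : IsLocalTranslationGroup Ω U) (hHo : IsOpen H) (hHc : H.OrdConnected)
    (hHΩ : H ⊆ Ω) (hH : ∀ x ∈ H, ∀ t, 0 ≤ σ * t → x + t ∈ H) {t : ℝ} (ht : 0 ≤ σ * t) :
    ∀ᵐ x, x ∈ H → (U t (bump Ω p q) : ℝ → ℂ) x = (Set.Ioo (p - t) (q - t)).indicator 1 x := by
  have hg : ∀ᵐ x ∂volume.restrict H,
      (bump Ω p q : ℝ → ℂ) x = (Set.Ioo p q).indicator (fun _ => 1) x :=
    ae_restrict_of_ae_restrict_of_subset hHΩ indicatorConstLp_coeFn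
  rw [ae_restrict_iff' hHo.measurableSet] at hg
  filter_upwards [hU.ae_eq_translate hHo hHc hHΩ t (bump Ω p q),
    (quasiMeasurePreserving_add_right (volume : Measure ℝ) t).ae hg] with x hx hx' hxH
  have hxt := hH x hxH t ht
  rw [hx hxH hxt, hx' hxt]
  simp only [Set.indicator_apply, Set.mem_Ioo, sub_lt_iff_lt_add, lt_sub_iff_add_lt, Pi.one_apply]

lemma inner_bump (hU : IsLocalTranslationGroup Ω U) (hHo : IsOpen H) (hHc : H.OrdConnected)
    (hHΩ : H ⊆ Ω) (hH : ∀ x ∈ H, ∀ t, 0 ≤ σ * t → x + t ∈ H) (hJ : Set.Ioo p q ⊆ H)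
    {t : ℝ} (ht : 0 ≤ σ * t) :
    inner ℂ (bump Ω p q) (U t (bump Ω p q)) = ((max (q - p - |t|) 0 : ℝ) : ℂ) := by
  rw [bump, L2.inner_indicatorConstLp_one, ← bump, Measure.restrict_restrict measurableSet_Ioo,
    Set.inter_eq_left.2 (hJ.trans hHΩ)]
  have h : ∀ᵐ x, x ∈ Set.Ioo p q →
      (U t (bump Ω p q) : ℝ → ℂ) x = (Set.Ioo (p - t) (q - t)).indicator 1 x := by
    filter_upwards [hU.bump_translate hHo hHc hHΩ hH ht] with x hx hxJ using hx (hJ hxJ)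
  rw [setIntegral_congr_ae measurableSet_Ioo h, setIntegral_indicator measurableSet_Ioo,
    Set.Ioo_inter_Ioo]
  simp only [Pi.one_apply, integral_const, MeasurableSet.univ, measureReal_restrict_apply,
    Set.univ_inter, Complex.real_smul, mul_one, Real.volume_real_Ioo]
  congr 2
  rcases le_total 0 t with h0 | h0
  · rw [abs_of_nonneg h0, max_eq_left (by linarith), min_eq_right (by linarith)]
    ring
  · rw [abs_of_nonpos h0, max_eq_right (by linarith), min_eq_left (by linarith)]
    ring

lemma norm_bump_sq (hU : IsLocalTranslationGroup Ω U) (hHo : IsOpen H) (hHc : H.OrdConnected)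
    (hHΩ : H ⊆ Ω) (hH : ∀ x ∈ H, ∀ t, 0 ≤ σ * t → x + t ∈ H) (hpq : p < q)
    (hJ : Set.Ioo p q ⊆ H) : ‖bump Ω p q‖ ^ 2 = q - p := by
  have h := hU.inner_bump hHo hHc hHΩ hH hJ (t := 0) (by simp)
  rw [hU.zero, LinearIsometryEquiv.coe_refl, id, abs_zero, sub_zero,
    max_eq_left (sub_pos.2 hpq).le] at h
  rw [← inner_self_eq_norm_sq (𝕜 := ℂ), h]
  exact Complex.ofReal_re _

lemma norm_translate_bump_sub_sq_le (hU : IsLocalTranslationGroup Ω U) (hHo : IsOpen H)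
    (hHc : H.OrdConnected) (hHΩ : H ⊆ Ω) (hH : ∀ x ∈ H, ∀ t, 0 ≤ σ * t → x + t ∈ H)
    (hpq : p < q) (hJ : Set.Ioo p q ⊆ H) (t : ℝ) :
    ‖U t (bump Ω p q) - bump Ω p q‖ ^ 2 ≤ 2 * |t| := by
  wlog ht : 0 ≤ σ * t generalizing t
  · have := this (-t) (by linarith)
    rwa [hU.norm_sub_neg, abs_neg] at this
  have h := hU.inner_bump hHo hHc hHΩ hH hJ ht
  have hn := hU.norm_bump_sq hHo hHc hHΩ hH hpq hJ
  rw [norm_sub_rev, @norm_sub_sq ℂ, h, LinearIsometryEquiv.norm_map, hn]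
  have : RCLike.re (((max (q - p - |t|) 0 : ℝ) : ℂ)) = max (q - p - |t|) 0 := Complex.ofReal_re _
  rw [this]
  linarith [le_max_left (q - p - |t|) 0]

lemma pairwise_inner_eq_zero (hU : IsLocalTranslationGroup Ω U) (hHo : IsOpen H)
    (hHc : H.OrdConnected) (hHΩ : H ⊆ Ω) (hσ : σ * σ = 1)
    (hH : ∀ x ∈ H, ∀ t, 0 ≤ σ * t → x + t ∈ H) (hpq : p < q) (hJ : Set.Ioo p q ⊆ H) :
    Pairwise fun m n : ℕ => inner ℂ (U (σ * ((m + 1) * (q - p))) (bump Ω p q))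
      (U (σ * ((n + 1) * (q - p))) (bump Ω p q)) = 0 := by
  intro m n hmn
  wlog hlt : m < n generalizing m n
  · exact inner_eq_zero_symm.1 (this hmn.symm (by omega))
  have hle : (m : ℝ) + 1 ≤ n := by exact_mod_cast hlt
  have e : σ * ((n + 1) * (q - p)) = σ * ((m + 1) * (q - p)) + σ * ((n - m) * (q - p)) := by ring
  have e' : σ * (σ * ((n - m) * (q - p))) = (n - m) * (q - p) := by rw [← mul_assoc, hσ, one_mul]
  have hσ' : |σ| = 1 := by
    rcases mul_self_eq_one_iff.1 hσ with h | h <;> simp [h]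
  have hnn : 0 ≤ (n - m) * (q - p) := mul_nonneg (by linarith) (by linarith)
  rw [e, hU.add, LinearIsometryEquiv.inner_map_map,
    hU.inner_bump hHo hHc hHΩ hH hJ (e'.symm ▸ hnn), abs_mul, hσ', one_mul, abs_of_nonneg hnn,
    max_eq_right (by nlinarith)]
  simp

lemma tendsto_setIntegral_zero (hU : IsLocalTranslationGroup Ω U) (hHo : IsOpen H)
    (hHc : H.OrdConnected) (hHΩ : H ⊆ Ω) (hσ : σ * σ = 1)
    (hH : ∀ x ∈ H, ∀ t, 0 ≤ σ * t → x + t ∈ H) (hpq : p < q) (hJ : Set.Ioo p q ⊆ H)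
    {a b : ℝ} (hab : Set.Ioo a b ⊆ Ω) :
    Filter.Tendsto (fun n : ℕ => ‖∫ x in Set.Ioo a b,
      (U (σ * ((n + 1) * (q - p))) (bump Ω p q) : ℝ → ℂ) x‖ ^ 2) Filter.atTop (nhds 0) := by
  have hn := hU.norm_bump_sq hHo hHc hHΩ hH hpq hJ
  have hg : ‖bump Ω p q‖ ≠ 0 := fun h => by
    rw [h] at hn
    linarith
  set r : ℂ := ((‖bump Ω p q‖⁻¹ : ℝ) : ℂ) with hr
  have hr0 : ‖r‖ ^ 2 ≠ 0 := by simpa [hr] using hg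
  have ho : Orthonormal ℂ
      fun n : ℕ => r • U (σ * ((n + 1) * (q - p))) (bump Ω p q) := by
    refine ⟨fun n => ?_, fun m n hmn => ?_⟩
    · rw [norm_smul, LinearIsometryEquiv.norm_map, hr, Complex.norm_real, norm_inv, norm_norm,
        inv_mul_cancel₀ hg]
    · beta_reduce
      rw [inner_smul_left, inner_smul_right,
        hU.pairwise_inner_eq_zero hHo hHc hHΩ hσ hH hpq hJ hmn, mul_zero, mul_zero]
  have ht := ((ho.inner_products_summable (bump Ω a b)).tendsto_atTop_zero).const_mul (‖r‖ ^ 2)⁻¹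
  rw [mul_zero] at ht
  refine ht.congr fun n => ?_
  rw [norm_inner_symm, inner_smul_right, norm_mul, mul_pow, inv_mul_cancel_left₀ hr0, bump,
    L2.inner_indicatorConstLp_one, Measure.restrict_restrict measurableSet_Ioo,
    Set.inter_eq_left.2 hab]

lemma norm_sq_le_sum {ι : Type*} [Fintype ι] {a b : ι → ℝ}
    (hab : ∀ i, Set.Ioo (a i) (b i) ⊆ Ω) (hcover : Ω ⊆ H ∪ ⋃ i, Set.Ioo (a i) (b i))
    (hΩ : MeasurableSet Ω) (h : Lp ℂ 2 (volume.restrict Ω))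
    (hh : ∀ᵐ x, x ∈ H → (h : ℝ → ℂ) x = 0) :
    ‖h‖ ^ 2 ≤ ∑ i, ∫ x in Set.Ioo (a i) (b i), ‖(h : ℝ → ℂ) x‖ ^ 2 := by
  have hint : Integrable (fun x => ‖(h : ℝ → ℂ) x‖ ^ 2) (volume.restrict Ω) :=
    (Lp.memLp h).integrable_norm_pow (by norm_num)
  have e : ‖h‖ ^ 2 = ∫ x in Ω, ‖(h : ℝ → ℂ) x‖ ^ 2 := by
    have : ((‖h‖ ^ 2 : ℝ) : ℂ) = ((∫ x in Ω, ‖(h : ℝ → ℂ) x‖ ^ 2 : ℝ) : ℂ) := by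
      rw [← integral_complex_ofReal]
      have := inner_self_eq_norm_sq_to_K (𝕜 := ℂ) h
      rw [L2.inner_def] at this
      simp only [inner_self_eq_norm_sq_to_K] at this
      push_cast
      exact this.symm
    exact_mod_cast this
  have e2 (i : ι) : ∫ x in Set.Ioo (a i) (b i), ‖(h : ℝ → ℂ) x‖ ^ 2 =
      ∫ x in Ω, (Set.Ioo (a i) (b i)).indicator (fun x => ‖(h : ℝ → ℂ) x‖ ^ 2) x := by
    rw [setIntegral_indicator measurableSet_Ioo, Set.inter_eq_right.2 (hab i)]
  simp_rw [e, e2]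
  rw [← integral_finsetSum _ fun i _ => hint.indicator measurableSet_Ioo]
  refine integral_mono_ae hint
    (integrable_finsetSum _ fun i _ => hint.indicator measurableSet_Ioo) ?_
  refine (ae_restrict_iff' hΩ).2 ?_
  filter_upwards [hh] with x hx hxΩ
  have hnn (i : ι) : 0 ≤ (Set.Ioo (a i) (b i)).indicator (fun x => ‖(h : ℝ → ℂ) x‖ ^ 2) x :=
    Set.indicator_nonneg (fun _ _ => by positivity) x
  rcases hcover hxΩ with hxH | hxI
  · simpa [hx hxH] using Finset.sum_nonneg fun i _ => hnn i
  · obtain ⟨i, hi⟩ := Set.mem_iUnion.1 hxI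
    refine le_trans ?_ (Finset.single_le_sum (fun i _ => hnn i) (Finset.mem_univ i))
    rw [Set.indicator_of_mem hi]

/-- The set `Ω` cannot consist of a half-line `H`, mapped into itself by translations in the
direction `σ`, and finitely many bounded intervals. -/
theorem false_of_halfLine (hU : IsLocalTranslationGroup Ω U) (hHo : IsOpen H)
    (hHc : H.OrdConnected) (hHΩ : H ⊆ Ω) (hσ : σ * σ = 1)
    (hH : ∀ x ∈ H, ∀ t, 0 ≤ σ * t → x + t ∈ H)
    (hfar : ∀ d : ℝ, 0 < d → ∃ p, Set.Ioo p (p + d) ⊆ H ∧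
      ∀ x ∈ H, ∀ t, d ≤ σ * t → x + t ∉ Set.Ioo p (p + d))
    {ι : Type*} [Fintype ι] {a b : ι → ℝ} (hlt : ∀ i, a i < b i)
    (hab : ∀ i, Set.Ioo (a i) (b i) ⊆ Ω) (hcover : Ω ⊆ H ∪ ⋃ i, Set.Ioo (a i) (b i)) : False := by
  have hΩ : IsOpen Ω := by
    rw [hcover.antisymm (Set.union_subset hHΩ (Set.iUnion_subset hab))]
    exact hHo.union (isOpen_iUnion fun i => isOpen_Ioo)
  set S : ℝ := ∑ i, 2 * (b i - a i) with hS
  have hS0 : 0 ≤ S := Finset.sum_nonneg fun i _ => by linarith [hlt i]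
  obtain ⟨p, hJ, hp⟩ := hfar (S + 1) (by linarith)
  obtain ⟨q, hq⟩ : ∃ q, q = p + (S + 1) := ⟨_, rfl⟩
  have hqp : q - p = S + 1 := by linarith
  rw [← hq] at hJ hp
  have hpq : p < q := by linarith
  set h : ℕ → Lp ℂ 2 (volume.restrict Ω) :=
    fun n => U (σ * ((n + 1) * (q - p))) (bump Ω p q) with hdef
  have hvanish (n : ℕ) : ∀ᵐ x, x ∈ H → (h n : ℝ → ℂ) x = 0 := by
    have e : σ * (σ * ((n + 1) * (q - p))) = (n + 1) * (q - p) := by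
      rw [← mul_assoc, hσ, one_mul]
    have hn0 : (0 : ℝ) ≤ n := n.cast_nonneg
    filter_upwards [hU.bump_translate (p := p) (q := q) hHo hHc hHΩ hH
      (t := σ * ((n + 1) * (q - p))) (e.symm ▸ by nlinarith)] with x hx hxH
    rw [hdef, hx hxH, Set.indicator_of_notMem]
    intro hmem
    refine hp x hxH (σ * ((n + 1) * (q - p))) (by rw [e]; nlinarith) ⟨?_, ?_⟩
    · linarith [hmem.1]
    · linarith [hmem.2]
  have hbound (n : ℕ) : q - p ≤
      ∑ i, (‖∫ x in Set.Ioo (a i) (b i), (h n : ℝ → ℂ) x‖ ^ 2 / (b i - a i)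
        + 2 * (b i - a i)) := by
    rw [← hU.norm_bump_sq hHo hHc hHΩ hH hpq hJ,
      ← (U (σ * ((n + 1) * (q - p)))).norm_map (bump Ω p q)]
    refine (norm_sq_le_sum hab hcover hΩ.measurableSet _ (hvanish n)).trans
      (Finset.sum_le_sum fun i _ => hU.setIntegral_norm_sq_le (hlt i) (hab i) _ fun s hs => ?_)
    rw [hU.norm_orbit_sub]
    exact (hU.norm_translate_bump_sub_sq_le hHo hHc hHΩ hH hpq hJ s).trans (by linarith)
  have hlim : Filter.Tendsto (fun n : ℕ =>
      ∑ i, (‖∫ x in Set.Ioo (a i) (b i), (h n : ℝ → ℂ) x‖ ^ 2 / (b i - a i)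
        + 2 * (b i - a i))) Filter.atTop (nhds (∑ i, (0 / (b i - a i) + 2 * (b i - a i)))) :=
    tendsto_finsetSum _ fun i _ => ((hU.tendsto_setIntegral_zero hHo hHc hHΩ hσ hH hpq hJ
      (hab i)).div_const _).add_const _
  have := ge_of_tendsto' hlim hbound
  simp only [zero_div, zero_add] at this
  linarith

end HalfLine

end IsLocalTranslationGroup

lemma setOf_coe_mem_Ioo {u v : EReal} (hu : u ≠ ⊤) (hu' : u ≠ ⊥) (hv : v ≠ ⊤) (hv' : v ≠ ⊥) :
    {x : ℝ | u < (x : EReal) ∧ (x : EReal) < v} = Set.Ioo u.toReal v.toReal := by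
  lift u to ℝ using ⟨hu, hu'⟩
  lift v to ℝ using ⟨hv, hv'⟩
  ext x
  simp

/-- If `Ω ⊆ ℝ` is a finite union of pairwise disjoint open intervals, exactly
one of which is unbounded (exactly one infinite endpoint among all endpoints), then there is
no strongly continuous unitary group on `L²(Ω)` with the integrability property. -/
theorem statement8 (N : ℕ) (α β : Fin N → EReal)
    (hαtop : ∀ i, α i ≠ ⊤) (hβbot : ∀ i, β i ≠ ⊥)
    (hlt : ∀ i, α i < β i)
    (hdisj : Pairwise fun i j => Disjoint
      {x : ℝ | α i < (x : EReal) ∧ (x : EReal) < β i}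
      {x : ℝ | α j < (x : EReal) ∧ (x : EReal) < β j})
    (Ω : Set ℝ) (hΩ : Ω = ⋃ i, {x : ℝ | α i < (x : EReal) ∧ (x : EReal) < β i})
    (hone : Nat.card {i : Fin N // α i = ⊥} + Nat.card {i : Fin N // β i = ⊤} = 1) :
    ¬ ∃ U : ℝ → (Lp ℂ 2 (volume.restrict Ω) ≃ₗᵢ[ℂ] Lp ℂ 2 (volume.restrict Ω)),
      U 0 = LinearIsometryEquiv.refl ℂ (Lp ℂ 2 (volume.restrict Ω)) ∧
      (∀ s t f, U (s + t) f = U s (U t f)) ∧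
      (∀ f, Continuous fun t => U t f) ∧
      (∀ V : Set ℝ, IsOpen V → V ⊆ Ω → ∀ δ : ℝ, 0 < δ →
        (∀ s : ℝ, |s| < δ → (fun x => x + s) '' V ⊆ Ω) →
        ∀ s : ℝ, |s| < δ → ∀ f, ∀ᵐ x ∂(volume.restrict V),
          (U s f : ℝ → ℂ) x = (f : ℝ → ℂ) (x + s)) := by
  rintro ⟨U, h0, hadd, -, htr⟩
  have hU : IsLocalTranslationGroup Ω U := ⟨h0, hadd, htr⟩
  have hsub (i : Fin N) : {x : ℝ | α i < (x : EReal) ∧ (x : EReal) < β i} ⊆ Ω :=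
    hΩ ▸ Set.subset_iUnion (fun i => {x : ℝ | α i < (x : EReal) ∧ (x : EReal) < β i}) i
  obtain ⟨j, hα, hβ, hj⟩ : ∃ j, (∀ i, i ≠ j → α i ≠ ⊥) ∧ (∀ i, i ≠ j → β i ≠ ⊤) ∧
      ((α j = ⊥ ∧ β j ≠ ⊤) ∨ (α j ≠ ⊥ ∧ β j = ⊤)) := by
    rcases Nat.add_eq_one_iff.1 hone with ⟨h1, h2⟩ | ⟨h1, h2⟩
    · have := Finite.card_eq_zero_iff.1 h1
      obtain ⟨hs, ⟨j, hj⟩⟩ := Nat.card_eq_one_iff_unique.1 h2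
      have hA (i) : α i ≠ ⊥ := fun h => this.elim ⟨i, h⟩
      exact ⟨j, fun i _ => hA i,
        fun i hi h => hi (congrArg Subtype.val (hs.elim ⟨i, h⟩ ⟨j, hj⟩)), .inr ⟨hA j, hj⟩⟩
    · have := Finite.card_eq_zero_iff.1 h2
      obtain ⟨hs, ⟨j, hj⟩⟩ := Nat.card_eq_one_iff_unique.1 h1
      have hB (i) : β i ≠ ⊤ := fun h => this.elim ⟨i, h⟩
      exact ⟨j, fun i hi h => hi (congrArg Subtype.val (hs.elim ⟨i, h⟩ ⟨j, hj⟩)),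
        fun i _ => hB i, .inl ⟨hj, hB j⟩⟩
  have hI (i : {i // i ≠ j}) : {x : ℝ | α i < (x : EReal) ∧ (x : EReal) < β i} =
      Set.Ioo (α i).toReal (β i).toReal :=
    setOf_coe_mem_Ioo (hαtop i) (hα i i.2) (hβ i i.2) (hβbot i)
  have hIlt (i : {i // i ≠ j}) : (α i).toReal < (β i).toReal := by
    rw [← EReal.coe_lt_coe_iff, EReal.coe_toReal (hαtop i) (hα i i.2),
      EReal.coe_toReal (hβ i i.2) (hβbot i)]
    exact hlt i
  have hIΩ (i : {i // i ≠ j}) : Set.Ioo (α i).toReal (β i).toReal ⊆ Ω := hI i ▸ hsub i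
  have hcover : Ω ⊆ {x : ℝ | α j < (x : EReal) ∧ (x : EReal) < β j} ∪
      ⋃ i : {i // i ≠ j}, Set.Ioo (α i).toReal (β i).toReal := by
    intro x hx
    rw [hΩ] at hx
    obtain ⟨i, hi⟩ := Set.mem_iUnion.1 hx
    by_cases hij : i = j
    · exact .inl (hij ▸ hi)
    · exact .inr (Set.mem_iUnion.2 ⟨⟨i, hij⟩, hI ⟨i, hij⟩ ▸ hi⟩)
  rcases hj with ⟨hj1, hj2⟩ | ⟨hj1, hj2⟩
  · have hH : {x : ℝ | α j < (x : EReal) ∧ (x : EReal) < β j} = Set.Iio (β j).toReal := by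
      ext x
      conv_lhs => rw [← EReal.coe_toReal hj2 (hβbot j)]
      simp [hj1]
    rw [hH] at hcover
    refine hU.false_of_halfLine (σ := -1) isOpen_Iio Set.ordConnected_Iio (hH ▸ hsub j)
      (by norm_num) (fun x hx t ht => ?_) (fun d hd => ⟨(β j).toReal - d, ?_, ?_⟩) hIlt hIΩ hcover
    · rw [Set.mem_Iio] at hx ⊢
      linarith
    · rintro x ⟨-, hx⟩
      rw [Set.mem_Iio]
      linarith
    · rintro x hx t ht ⟨h1, -⟩
      rw [Set.mem_Iio] at hx
      linarith
  · have hH : {x : ℝ | α j < (x : EReal) ∧ (x : EReal) < β j} = Set.Ioi (α j).toReal := by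
      ext x
      conv_lhs => rw [← EReal.coe_toReal (hαtop j) hj1]
      simp [hj2]
    rw [hH] at hcover
    refine hU.false_of_halfLine (σ := 1) isOpen_Ioi Set.ordConnected_Ioi (hH ▸ hsub j)
      (by norm_num) (fun x hx t ht => ?_) (fun d hd => ⟨(α j).toReal, ?_, ?_⟩) hIlt hIΩ hcover
    · rw [Set.mem_Ioi] at hx ⊢
      linarith
    · exact fun x hx => hx.1
    · rintro x hx t ht ⟨-, h2⟩
      rw [Set.mem_Ioi] at hx
      linarith
end
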